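/- Let d ≥ 3 and n ≥ 2 be integers and let ν satisfy 0 < ν ≤ d/2 − 1. Let q : (0,1) → (0,∞) satisfy (1 − nλ/(n+1))^{d/2−ν−1} ≤ q(λ) ≤ (1 − (n−1)λ/n)^{d/2−ν−1} for all λ ∈ (0,1), and let π_GM be the Gaussian-mixture prior built from q with shape parameter ν. Then the Bayesian predictive density p̂_{π_GM} dominates the best equivariant predictive density under Kullback–Leibler risk: for every μ ∈ ℝ^d and σ² > 0, R_KL((μ,σ²), p̂_{π_GM}) ≤ R_KL((μ,σ²), p̂_R). -/

import Mathlib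

/-!
Write `ρ(z, v; l) = v · m(z, v; l)`, where `m` is the marginal density of a sample of size `l` with
mean `z` and residual sum of squares `v`. The Bayesian predictive density is the best equivariant
one times `ρ(x̄ₙ₊₁, sₙ₊₁; n+1) / ρ(x̄ₙ, sₙ; n)` (`bayesPred_eq`), with `x̄ₙ₊₁`, `sₙ₊₁` the statistics
of the sample enlarged by `y`. Hence the Bayesian risk minus the best equivariant
risk is `E log ρ(x̄ₙ, sₙ; n) - E log ρ(x̄ₙ₊₁, sₙ₊₁; n+1)`, and the claim is that the first expectation
is at most the second.

After the substitution `λ = l t / (1 + (l - 1) t)` the sandwich condition on `q` says that the mixing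
weight is at most `1` for `l = n` and at least `1` for `l = n + 1` (`mixWeight_bounds`). Both
densities are therefore compared with one explicit function `rhoRef`, an incomplete beta integral
(`rhoDens_bounds`). For `rhoRef` there are two steps.

* Given `(x̄ₙ₊₁, sₙ)`, the mean `x̄ₙ` is Gaussian around `x̄ₙ₊₁`. Jensen's inequality and
  `lintegral_gauss_betaInc_le`, a superharmonicity property valid for `ν ≤ d/2 - 1`, allow `x̄ₙ` to be
  replaced by `x̄ₙ₊₁`.
* The factor `b = sₙ₊₁ / sₙ` is independent of `sₙ₊₁`, with
  `E log b = ψ(nd/2) - ψ((n-1)d/2)`, where `ψ` is the digamma function. Since `log rhoRef` is concave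
  in `log v`, Jensen's inequality leaves a deterministic inequality between two beta-prime
  distribution functions. Their densities cross at most once (`crossing`), and their order near the
  origin is the gamma function inequality `gamma_ratio_le`.

All logarithms are dominated by the integrable function `dom`. No measurability of `q` is assumed:
if `q` is not a.e. measurable, the prior is `0` by the convention for integrals, the left-hand risk
is `0`, and the right-hand one is nonnegative by the Gibbs inequality (`klRisk_bestEquiv_nonneg`).
Otherwise `q` is replaced by a measurable version satisfying the same bounds.
-/

open MeasureTheory Set

noncomputable section

abbrev Euc (d : ℕ) := EuclideanSpace ℝ (Fin d)

/-- Isotropic `d`-variate Gaussian density with mean `θ` and covariance `τ I_d`. -/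
def gaussPdf (d : ℕ) (z θ : Euc d) (τ : ℝ) : ℝ :=
  (2 * Real.pi * τ) ^ (-(d : ℝ) / 2) * Real.exp (-‖z - θ‖ ^ 2 / (2 * τ))

/-- Chi-square density with `k` degrees of freedom. -/
def chiSqPdf (k t : ℝ) : ℝ :=
  t ^ (k / 2 - 1) * Real.exp (-t / 2) / ((2 : ℝ) ^ (k / 2) * Real.Gamma (k / 2))

/-- Numerator of the Bayesian predictive density. -/
def bayesPredNum (d n : ℕ) (pr : Euc d → ℝ → ℝ) (y xbar : Euc d) (s : ℝ) : ℝ :=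
  ∫ η in Ioi (0 : ℝ), ∫ μ, gaussPdf d y μ η⁻¹ * gaussPdf d xbar μ (((n : ℝ) * η)⁻¹) * η *
    chiSqPdf (((n : ℝ) - 1) * d) (η * s) * pr μ η

/-- Denominator of the Bayesian predictive density. -/
def bayesPredDen (d n : ℕ) (pr : Euc d → ℝ → ℝ) (xbar : Euc d) (s : ℝ) : ℝ :=
  ∫ η in Ioi (0 : ℝ), ∫ μ, gaussPdf d xbar μ (((n : ℝ) * η)⁻¹) * η *
    chiSqPdf (((n : ℝ) - 1) * d) (η * s) * pr μ η

/-- Bayesian predictive density with respect to the prior `pr`. -/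
def bayesPred (d n : ℕ) (pr : Euc d → ℝ → ℝ) (y xbar : Euc d) (s : ℝ) : ℝ :=
  bayesPredNum d n pr y xbar s / bayesPredDen d n pr xbar s

/-- Best equivariant predictive density. -/
def bestEquiv (d n : ℕ) (y xbar : Euc d) (s : ℝ) : ℝ :=
  (Real.Gamma ((n : ℝ) * d / 2) / Real.Gamma (((n : ℝ) - 1) * d / 2)) *
    ((n : ℝ) / (((n : ℝ) + 1) * Real.pi * s)) ^ ((d : ℝ) / 2) *
    (1 + ((n : ℝ) / (((n : ℝ) + 1) * s)) * ‖y - xbar‖ ^ 2) ^ (-((n : ℝ) * d) / 2)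

/-- Marginal density `m_π(z, v; l)`. -/
def marginalDens (d : ℕ) (pr : Euc d → ℝ → ℝ) (l : ℕ) (z : Euc d) (v : ℝ) : ℝ :=
  ∫ η in Ioi (0 : ℝ), ∫ μ, gaussPdf d z μ (((l : ℝ) * η)⁻¹) * η *
    chiSqPdf (((l : ℝ) - 1) * d) (η * v) * pr μ η

/-- `ρ_π(z, v; l) = v · m_π(z, v; l)`. -/
def rhoDens (d : ℕ) (pr : Euc d → ℝ → ℝ) (l : ℕ) (z : Euc d) (v : ℝ) : ℝ :=
  v * marginalDens d pr l z v

/-- Kullback–Leibler risk of a predictive density `p`. -/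
def klRisk (d n : ℕ) (μ0 : Euc d) (σ2 : ℝ) (p : Euc d → Euc d → ℝ → ℝ) : ℝ :=
  ∫ s in Ioi (0 : ℝ), ∫ xbar, gaussPdf d xbar μ0 (σ2 / n) *
    (chiSqPdf (((n : ℝ) - 1) * d) (s / σ2) / σ2) *
    ∫ y, gaussPdf d y μ0 σ2 * Real.log (gaussPdf d y μ0 σ2 / p y xbar s)

/-- Gaussian-mixture prior `π_GM` built from `q` with shape parameter `ν` (`a = ν - d/2 - 1`). -/
def gmPrior (d : ℕ) (ν : ℝ) (q : ℝ → ℝ) (μ : Euc d) (η : ℝ) : ℝ :=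
  ∫ l in Ioo (0 : ℝ) 1, gaussPdf d μ 0 (η⁻¹ * l⁻¹ * (1 - l)) *
    η ^ (ν - (d : ℝ) / 2 - 1) * l ^ (ν - (d : ℝ) / 2 - 1) * q l

/-- The Beta function. -/
def betaFun (a b : ℝ) : ℝ := Real.Gamma a * Real.Gamma b / Real.Gamma (a + b)

/-- Digamma function. -/
def digamma (x : ℝ) : ℝ := deriv (fun y => Real.log (Real.Gamma y)) x

/-- The function `g(n, d, ν)`. -/
def gFun (n d : ℕ) (ν : ℝ) : ℝ :=
  if d ≤ n then
    (1 / ν) * Real.log (betaFun ν ((n : ℝ) * d / 2 - ((d : ℝ) - ν) / n) / betaFun ν ((n : ℝ) * d / 2))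
  else
    (1 / ((n : ℝ) * ν)) * (((d : ℝ) - ν) / ((n : ℝ) * d / 2 - 1)) * Real.log (1 + ν)

/-- The function `h(n, d)`. -/
def hFun (n d : ℕ) : ℝ :=
  ((1 + ((n : ℝ) + 1) * d / 2) / ((n : ℝ) * d / 2)) *
    (digamma (1 + ((n : ℝ) + 1) * d / 2) - digamma (1 + (n : ℝ) * d / 2))

/-- The particular function `q` of equation (5) of the paper. -/
def qLow (d n : ℕ) (ν : ℝ) (l : ℝ) : ℝ :=
  (1 - l) ^ (((n : ℝ) - 1) * d / 2 - 1) *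
    (1 - ((n : ℝ) - 1) * l / n) ^ (-(((n : ℝ) - 2) * d / 2) - ν)

/-- The quantity `J_l`. -/
def Jquant (d : ℕ) (ν : ℝ) (q : ℝ → ℝ) (l w : ℝ) : ℝ :=
  ∫ t in Ioo (0 : ℝ) 1, t ^ (ν - 1) * (1 + (l - 1) * t) ^ ((d : ℝ) / 2 - ν - 1) *
    (1 + w * t) ^ (-((l - 1) * (d : ℝ) / 2) - ν) * q (l * t / (1 + (l - 1) * t))

/-- The statistic `x̄_{n+1} = (n x̄_n + y)/(n+1)`. -/
def newMean {d : ℕ} (n : ℕ) (xbar y : Euc d) : Euc d :=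
  (((n : ℝ) + 1)⁻¹) • ((n : ℝ) • xbar + y)

/-- The statistic `s_{n+1} = s_n + n ‖y - x̄_n‖² / (n+1)`. -/
def newS {d : ℕ} (n : ℕ) (xbar y : Euc d) (s : ℝ) : ℝ :=
  s + (n : ℝ) * ‖y - xbar‖ ^ 2 / ((n : ℝ) + 1)

/-- `w_l = l ‖x̄_l‖² / s_l`. -/
def wStat {d : ℕ} (l : ℝ) (z : Euc d) (v : ℝ) : ℝ := l * ‖z‖ ^ 2 / v

/-- `u_l = w_l / (1 + w_l)`. -/
def uStat {d : ℕ} (l : ℝ) (z : Euc d) (v : ℝ) : ℝ :=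
  wStat l z v / (1 + wStat l z v)

/-- Expectation with respect to the joint density of `(x̄_n, s_n, y)`. -/
def expVal (d n : ℕ) (μ0 : Euc d) (σ2 : ℝ) (f : Euc d → ℝ → Euc d → ℝ) : ℝ :=
  ∫ s in Ioi (0 : ℝ), ∫ xbar, ∫ y,
    gaussPdf d xbar μ0 (σ2 / n) * (chiSqPdf (((n : ℝ) - 1) * d) (s / σ2) / σ2) *
      gaussPdf d y μ0 σ2 * f xbar s y

/-- Expectation with respect to the joint density of `(x̄_n, s_n)`. -/
def expVal2 (d n : ℕ) (μ0 : Euc d) (σ2 : ℝ) (f : Euc d → ℝ → ℝ) : ℝ :=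
  ∫ s in Ioi (0 : ℝ), ∫ xbar, gaussPdf d xbar μ0 (σ2 / n) *
    (chiSqPdf (((n : ℝ) - 1) * d) (s / σ2) / σ2) * f xbar s

/-! ### Gaussian densities -/

lemma gaussPdf_pos {d : ℕ} (z θ : Euc d) {τ : ℝ} (hτ : 0 < τ) : 0 < gaussPdf d z θ τ := by
  unfold gaussPdf; positivity

lemma gaussPdf_comm {d : ℕ} (z θ : Euc d) (τ : ℝ) : gaussPdf d z θ τ = gaussPdf d θ z τ := by
  unfold gaussPdf; rw [norm_sub_rev]

lemma integral_gaussPdf {d : ℕ} (θ : Euc d) {τ : ℝ} (hτ : 0 < τ) :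
    ∫ z, gaussPdf d z θ τ = 1 := by
  have h := integral_sub_right_eq_self (μ := (volume : Measure (Euc d)))
    (fun z => gaussPdf d z 0 τ) θ
  have h2 : (fun z : Euc d => gaussPdf d z θ τ) = fun z => gaussPdf d (z - θ) 0 τ := by
    ext z; simp [gaussPdf]
  rw [h2, h]
  unfold gaussPdf
  rw [integral_const_mul]
  have h3 := GaussianFourier.integral_rexp_neg_mul_sq_norm (V := Euc d) (b := 1 / (2 * τ))
    (by positivity)
  have h4 : (fun z : Euc d => Real.exp (-‖z - 0‖ ^ 2 / (2 * τ))) =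
      fun z => Real.exp (-(1 / (2 * τ)) * ‖z‖ ^ 2) := by
    ext z; congr 1; rw [sub_zero]; ring
  rw [h4, h3, finrank_euclideanSpace, Fintype.card_fin]
  have : Real.pi / (1 / (2 * τ)) = 2 * Real.pi * τ := by field_simp
  rw [this, ← Real.rpow_add (by positivity)]
  have : -(d : ℝ) / 2 + (d : ℝ) / 2 = 0 := by ring
  rw [this, Real.rpow_zero]

lemma integrable_gaussPdf {d : ℕ} (θ : Euc d) {τ : ℝ} (hτ : 0 < τ) :
    Integrable (fun z => gaussPdf d z θ τ) := by
  by_contra h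
  have := integral_gaussPdf θ hτ
  rw [integral_undef h] at this
  exact zero_ne_one this

lemma continuous_gaussPdf {d : ℕ} (θ : Euc d) (τ : ℝ) :
    Continuous (fun z => gaussPdf d z θ τ) := by
  unfold gaussPdf; fun_prop

lemma measurable_gaussPdf {d : ℕ} {α : Type*} [MeasurableSpace α] {f g : α → Euc d} {h : α → ℝ}
    (hf : Measurable f) (hg : Measurable g) (hh : Measurable h) :
    Measurable (fun a => gaussPdf d (f a) (g a) (h a)) := by
  unfold gaussPdf
  have h1 : Measurable fun a => ‖f a - g a‖ := (hf.sub hg).norm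
  fun_prop

/-- Product of two Gaussian densities as a density in `μ`, completing the square. -/
lemma gaussPdf_mul {d : ℕ} (z μ θ : Euc d) {τ₁ τ₂ : ℝ} (h₁ : 0 < τ₁) (h₂ : 0 < τ₂) :
    gaussPdf d z μ τ₁ * gaussPdf d μ θ τ₂ =
      gaussPdf d z θ (τ₁ + τ₂) *
        gaussPdf d μ ((τ₁ + τ₂)⁻¹ • (τ₂ • z + τ₁ • θ)) (τ₁ * τ₂ / (τ₁ + τ₂)) := by
  have key : -‖z - μ‖ ^ 2 / (2 * τ₁) + -‖μ - θ‖ ^ 2 / (2 * τ₂) =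
      -‖z - θ‖ ^ 2 / (2 * (τ₁ + τ₂)) +
      -‖μ - (τ₁ + τ₂)⁻¹ • (τ₂ • z + τ₁ • θ)‖ ^ 2 / (2 * (τ₁ * τ₂ / (τ₁ + τ₂))) := by
    simp only [← real_inner_self_eq_norm_sq, inner_sub_left, inner_sub_right, inner_add_left,
      inner_add_right, real_inner_smul_left, real_inner_smul_right]
    rw [real_inner_comm z μ, real_inner_comm z θ, real_inner_comm μ θ]
    have : τ₁ + τ₂ ≠ 0 := by positivity
    field_simp
    ring
  unfold gaussPdf
  rw [mul_mul_mul_comm, ← Real.exp_add, key]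
  conv_rhs => rw [mul_mul_mul_comm, ← Real.exp_add]
  rw [← Real.mul_rpow (by positivity) (by positivity),
    ← Real.mul_rpow (by positivity) (by positivity)]
  congr 2
  field_simp

lemma integral_gaussPdf_mul {d : ℕ} (z θ : Euc d) {τ₁ τ₂ : ℝ} (h₁ : 0 < τ₁) (h₂ : 0 < τ₂) :
    ∫ μ, gaussPdf d z μ τ₁ * gaussPdf d μ θ τ₂ = gaussPdf d z θ (τ₁ + τ₂) := by
  simp_rw [fun μ => gaussPdf_mul z μ θ h₁ h₂]
  rw [integral_const_mul, integral_gaussPdf _ (by positivity), mul_one]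

lemma integrable_gaussPdf_mul {d : ℕ} (z θ : Euc d) {τ₁ τ₂ : ℝ} (h₁ : 0 < τ₁) (h₂ : 0 < τ₂) :
    Integrable (fun μ => gaussPdf d z μ τ₁ * gaussPdf d μ θ τ₂) := by
  simp_rw [fun μ => gaussPdf_mul z μ θ h₁ h₂]
  exact (integrable_gaussPdf _ (by positivity)).const_mul _

/-- The joint density of `(x̄ₙ, y)` factorises through `(x̄ₙ₊₁, y - x̄ₙ)`. -/
lemma gaussPdf_pair {d n : ℕ} (hn : 0 < n) (x y μ : Euc d) {τ : ℝ} (hτ : 0 < τ) :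
    gaussPdf d x μ (τ / n) * gaussPdf d y μ τ =
      gaussPdf d (newMean n x y) μ (τ / ((n : ℝ) + 1)) *
        gaussPdf d (y - x) 0 (τ * ((n : ℝ) + 1) / n) := by
  have hn' : (0 : ℝ) < n := by exact_mod_cast hn
  have key : -‖x - μ‖ ^ 2 / (2 * (τ / n)) + -‖y - μ‖ ^ 2 / (2 * τ) =
      -‖newMean n x y - μ‖ ^ 2 / (2 * (τ / ((n : ℝ) + 1))) +
      -‖y - x - 0‖ ^ 2 / (2 * (τ * ((n : ℝ) + 1) / n)) := by
    unfold newMean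
    simp only [← real_inner_self_eq_norm_sq, inner_sub_left, inner_sub_right, inner_add_left,
      inner_add_right, real_inner_smul_left, real_inner_smul_right, sub_zero]
    rw [real_inner_comm x μ, real_inner_comm y μ, real_inner_comm x y]
    field_simp
    ring
  unfold gaussPdf
  rw [mul_mul_mul_comm, ← Real.exp_add, key]
  conv_rhs => rw [mul_mul_mul_comm, ← Real.exp_add]
  rw [← Real.mul_rpow (by positivity) (by positivity),
    ← Real.mul_rpow (by positivity) (by positivity)]
  congr 2
  field_simp

/-! ### Gamma integrals -/

lemma integrableOn_rpow_exp {a r : ℝ} (ha : 0 < a) (hr : 0 < r) :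
    IntegrableOn (fun t : ℝ => t ^ (a - 1) * Real.exp (-(r * t))) (Ioi 0) := by
  by_contra h
  have h1 := Real.integral_rpow_mul_exp_neg_mul_Ioi ha hr
  rw [integral_undef h] at h1
  have : 0 < (1 / r) ^ a * Real.Gamma a := mul_pos (by positivity) (Real.Gamma_pos_of_pos ha)
  linarith

lemma lintegral_rpow_exp {a r : ℝ} (ha : 0 < a) (hr : 0 < r) :
    ∫⁻ t in Ioi (0 : ℝ), ENNReal.ofReal (t ^ (a - 1) * Real.exp (-(r * t))) =
      ENNReal.ofReal (r ^ (-a) * Real.Gamma a) := by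
  rw [← ofReal_integral_eq_lintegral_ofReal (integrableOn_rpow_exp ha hr),
    Real.integral_rpow_mul_exp_neg_mul_Ioi ha hr, one_div, Real.inv_rpow hr.le, Real.rpow_neg hr.le]
  refine (ae_restrict_mem measurableSet_Ioi).mono fun t ht => ?_
  have : (0 : ℝ) < t := ht
  positivity

/-- Normalisation of the beta-prime density. -/
lemma lintegral_betaPrime {ν k : ℝ} (hν : 0 < ν) (hk : 0 < k) :
    ∫⁻ r in Ioi (0 : ℝ), ENNReal.ofReal (r ^ (ν - 1) * (1 + r) ^ (-(k + ν))) =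
      ENNReal.ofReal (Real.Gamma k * Real.Gamma ν / Real.Gamma (k + ν)) := by
  have hG := Real.Gamma_pos_of_pos (add_pos hk hν)
  have hGk := Real.Gamma_pos_of_pos hk
  have hGν := Real.Gamma_pos_of_pos hν
  -- write `Γ(k+ν) (1+r)^(-(k+ν))` as a gamma integral in `t`, then integrate `r` first
  have h1 : ∀ r ∈ Ioi (0 : ℝ), ENNReal.ofReal (r ^ (ν - 1) * (1 + r) ^ (-(k + ν))) =
      ENNReal.ofReal ((Real.Gamma (k + ν))⁻¹) * ∫⁻ t in Ioi (0 : ℝ), ENNReal.ofReal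
        (r ^ (ν - 1) * (t ^ (k + ν - 1) * Real.exp (-((1 + r) * t)))) := by
    intro r hr
    have hr : (0 : ℝ) < r := hr
    simp_rw [fun x => ENNReal.ofReal_mul (q := x) (show 0 ≤ r ^ (ν - 1) by positivity)]
    rw [lintegral_const_mul _ (by fun_prop), lintegral_rpow_exp (by positivity) (by positivity),
      ← ENNReal.ofReal_mul (by positivity), ← ENNReal.ofReal_mul (by positivity),
      ← ENNReal.ofReal_mul (by positivity)]
    congr 1
    field_simp
  rw [setLIntegral_congr_fun measurableSet_Ioi h1, lintegral_const_mul' _ _ (by simp),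
    lintegral_lintegral_swap (by fun_prop)]
  have h2 : ∀ t ∈ Ioi (0 : ℝ), ∫⁻ r in Ioi (0 : ℝ), ENNReal.ofReal
        (r ^ (ν - 1) * (t ^ (k + ν - 1) * Real.exp (-((1 + r) * t)))) =
      ENNReal.ofReal (Real.Gamma ν) * ENNReal.ofReal (t ^ (k - 1) * Real.exp (-(1 * t))) := by
    intro t ht
    have ht : (0 : ℝ) < t := ht
    have : ∀ r : ℝ, r ^ (ν - 1) * (t ^ (k + ν - 1) * Real.exp (-((1 + r) * t))) =
        (t ^ (k + ν - 1) * Real.exp (-t)) * (r ^ (ν - 1) * Real.exp (-(t * r))) := by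
      intro r
      have : -((1 + r) * t) = -t + -(t * r) := by ring
      rw [this, Real.exp_add]; ring
    simp_rw [this, fun x => ENNReal.ofReal_mul (q := x)
      (show 0 ≤ t ^ (k + ν - 1) * Real.exp (-t) by positivity)]
    rw [lintegral_const_mul _ (by fun_prop), lintegral_rpow_exp hν ht,
      ← ENNReal.ofReal_mul (by positivity), ← ENNReal.ofReal_mul (by positivity)]
    congr 1
    have : t ^ (k + ν - 1) = t ^ (k - 1) * t ^ ν := by
      rw [← Real.rpow_add ht]; congr 1; ring
    rw [this, Real.rpow_neg ht.le, one_mul]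
    field_simp
  rw [setLIntegral_congr_fun measurableSet_Ioi h2, lintegral_const_mul' _ _ (by simp),
    lintegral_rpow_exp hk one_pos, ← ENNReal.ofReal_mul (by positivity),
    ← ENNReal.ofReal_mul (by positivity)]
  congr 1
  rw [Real.one_rpow]; field_simp

/-! ### An inequality for the digamma function -/

lemma hasDerivAt_logGamma {x : ℝ} (hx : 0 < x) :
    HasDerivAt (fun y => Real.log (Real.Gamma y)) (digamma x) x := by
  have h1 : DifferentiableAt ℝ Real.Gamma x :=
    Real.differentiableAt_Gamma fun m => by
      have : (0 : ℝ) ≤ m := Nat.cast_nonneg m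
      linarith
  exact (h1.log (Real.Gamma_pos_of_pos hx).ne').hasDerivAt

lemma logGamma_add_one {x : ℝ} (hx : 0 < x) :
    Real.log (Real.Gamma (x + 1)) = Real.log x + Real.log (Real.Gamma x) := by
  rw [Real.Gamma_add_one hx.ne', Real.log_mul hx.ne' (Real.Gamma_pos_of_pos hx).ne']

lemma digamma_add_one {x : ℝ} (hx : 0 < x) : digamma (x + 1) = digamma x + 1 / x := by
  have h1 : HasDerivAt (fun y => Real.log (Real.Gamma (y + 1))) (digamma (x + 1)) x :=
    (hasDerivAt_logGamma (show 0 < x + 1 by linarith)).comp_add_const x 1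
  have h2 : HasDerivAt (fun y => Real.log y + Real.log (Real.Gamma y)) (x⁻¹ + digamma x) x :=
    (Real.hasDerivAt_log hx.ne').add (hasDerivAt_logGamma hx)
  have h3 : (fun y => Real.log (Real.Gamma (y + 1))) =ᶠ[nhds x]
      fun y => Real.log y + Real.log (Real.Gamma y) := by
    filter_upwards [lt_mem_nhds hx] with y hy using logGamma_add_one hy
  rw [h1.unique (h2.congr_of_eventuallyEq h3), one_div, add_comm]

lemma digamma_slope {x ν : ℝ} (hx : 0 < x) (hν : 0 < ν) :
    digamma x ≤ (Real.log (Real.Gamma (x + ν)) - Real.log (Real.Gamma x)) / ν ∧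
      (Real.log (Real.Gamma (x + ν)) - Real.log (Real.Gamma x)) / ν ≤ digamma (x + ν) := by
  have hc : ConvexOn ℝ (Ioi 0) (fun y => Real.log (Real.Gamma y)) := Real.convexOn_log_Gamma
  have hx' : x + ν ∈ Ioi (0 : ℝ) := add_pos hx hν
  have h1 := hc.le_slope_of_hasDerivAt (x := x) (y := x + ν) hx hx' (by linarith)
    (hasDerivAt_logGamma hx)
  have h2 := hc.slope_le_of_hasDerivAt (x := x) (y := x + ν) hx hx' (by linarith)
    (hasDerivAt_logGamma hx')
  rw [slope_def_field] at h1 h2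
  simpa using And.intro h1 h2

/-- Excess of the secant slope of `log Γ` on `[x, x+ν]` over its derivative at `x`. -/
def gammaExcess (ν x : ℝ) : ℝ :=
  (Real.log (Real.Gamma (x + ν)) - Real.log (Real.Gamma x)) / ν - digamma x

lemma gammaExcess_nonneg {x ν : ℝ} (hx : 0 < x) (hν : 0 < ν) : 0 ≤ gammaExcess ν x :=
  sub_nonneg.2 (digamma_slope hx hν).1

lemma digamma_add_nat {x : ℝ} (hx : 0 < x) (M : ℕ) :
    digamma (x + M) ≤ digamma x + M / x := by
  induction M with
  | zero => simp
  | succ M ih =>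
    have : x + ((M + 1 : ℕ) : ℝ) = (x + M) + 1 := by push_cast; ring
    have hM : (0 : ℝ) ≤ M := Nat.cast_nonneg M
    rw [this, digamma_add_one (by linarith)]
    have h2 : 1 / (x + M) ≤ 1 / x := one_div_le_one_div_of_le hx (by linarith)
    push_cast
    rw [add_div]
    linarith

lemma gammaExcess_le {x ν : ℝ} (hx : 0 < x) (hν : 0 < ν) {M : ℕ} (hM : ν < M) :
    gammaExcess ν x ≤ M / x := by
  have h1 := (digamma_slope hx hν).2
  have h2 := digamma_slope (x := x + ν) (ν := M - ν) (by linarith) (by linarith)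
  have h3 := digamma_add_nat hx M
  have h4 : x + ν + ((M : ℝ) - ν) = x + M := by ring
  rw [h4] at h2
  unfold gammaExcess
  linarith [h2.1.trans h2.2]

lemma gammaExcess_sub {x ν : ℝ} (hx : 0 < x) (hν : 0 < ν) :
    gammaExcess ν x - gammaExcess ν (x + 1) = 1 / x - (Real.log (x + ν) - Real.log x) / ν := by
  unfold gammaExcess
  have : x + 1 + ν = (x + ν) + 1 := by ring
  rw [this, logGamma_add_one (by linarith), logGamma_add_one hx, digamma_add_one hx]
  field_simp
  ring

/-- The drop of `gammaExcess` over a unit step, minus its leading term `ν / (2 x²)`, is increasing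
in `x`; this bounds differences of drops started at different points. -/
lemma theta_mono {ν x y : ℝ} (hν : 0 < ν) (hx : 0 < x) (hxy : x ≤ y) :
    1 / x - (Real.log (x + ν) - Real.log x) / ν - ν / 2 * (1 / x ^ 2) ≤
      1 / y - (Real.log (y + ν) - Real.log y) / ν - ν / 2 * (1 / y ^ 2) := by
  have hd : ∀ t : ℝ, 0 < t → HasDerivAt
      (fun t => 1 / t - (Real.log (t + ν) - Real.log t) / ν - ν / 2 * (1 / t ^ 2))
      (-1 / t ^ 2 - (1 / (t + ν) - 1 / t) / ν - ν / 2 * (-(2 * t) / (t ^ 2) ^ 2)) t := by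
    intro t ht
    have h1 : HasDerivAt (fun t : ℝ => 1 / t) (-1 / t ^ 2) t := by
      simpa using (hasDerivAt_id' t).fun_inv ht.ne'
    have h2 : HasDerivAt (fun t : ℝ => Real.log (t + ν)) (1 / (t + ν)) t :=
      ((hasDerivAt_id t).add_const ν).log (by simp; linarith)
    have h3 : HasDerivAt (fun t : ℝ => Real.log t) (1 / t) t := by
      simpa using Real.hasDerivAt_log ht.ne'
    have h4 : HasDerivAt (fun t : ℝ => 1 / t ^ 2) (-(2 * t) / (t ^ 2) ^ 2) t := by
      simpa using (hasDerivAt_pow 2 t).fun_inv (by positivity)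
    exact (h1.sub ((h2.sub h3).div_const ν)).sub (h4.const_mul _)
  have hm : MonotoneOn
      (fun t => 1 / t - (Real.log (t + ν) - Real.log t) / ν - ν / 2 * (1 / t ^ 2)) (Ioi 0) := by
    refine monotoneOn_of_deriv_nonneg (convex_Ioi 0)
      (fun t ht => (hd t ht).continuousAt.continuousWithinAt)
      (fun t ht => ?_) (fun t ht => ?_)
    · rw [interior_Ioi] at ht
      exact (hd t ht).differentiableAt.differentiableWithinAt
    · rw [interior_Ioi] at ht
      have ht : (0 : ℝ) < t := ht
      rw [(hd t ht).deriv]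
      have : -1 / t ^ 2 - (1 / (t + ν) - 1 / t) / ν - ν / 2 * (-(2 * t) / (t ^ 2) ^ 2) =
          ν ^ 2 / (t ^ 3 * (t + ν)) := by
        field_simp
        ring
      rw [this]
      positivity
  exact hm hx (hx.trans_le hxy) hxy

/-- Telescoping bound: the excess over a shift by `m` is at most the corresponding difference of
`ν / (2 (x - 1/2))`. -/
lemma gammaExcess_sub_le {x ν m : ℝ} (hx : 1 / 2 < x) (hν : 0 < ν) (hm : 0 ≤ m) :
    gammaExcess ν x - gammaExcess ν (x + m) ≤
      ν / 2 * (1 / (x - 1 / 2) - 1 / (x + m - 1 / 2)) := by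
  have step : ∀ y : ℝ, 1 / 2 < y →
      gammaExcess ν y - gammaExcess ν (y + m) -
        ν / 2 * (1 / (y - 1 / 2) - 1 / (y + m - 1 / 2)) ≤
      gammaExcess ν (y + 1) - gammaExcess ν (y + 1 + m) -
        ν / 2 * (1 / (y + 1 - 1 / 2) - 1 / (y + 1 + m - 1 / 2)) := by
    intro y hy
    have h1 := gammaExcess_sub (x := y) (ν := ν) (by linarith) hν
    have h2 := gammaExcess_sub (x := y + m) (ν := ν) (by linarith) hν
    have h3 := theta_mono (x := y) (y := y + m) hν (by linarith) (by linarith)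
    have e : y + 1 + m = y + m + 1 := by ring
    have aux : ∀ t : ℝ, 1 / 2 < t →
        1 / (t - 1 / 2) - 1 / (t + 1 - 1 / 2) - 1 / t ^ 2 = 1 / (4 * t ^ 2 * (t ^ 2 - 1 / 4)) := by
      intro t ht
      have a1 : t - 1 / 2 ≠ 0 := by linarith
      have a2 : t + 1 - 1 / 2 ≠ 0 := by linarith
      have a3 : t ≠ 0 := by linarith
      have a4 : t ^ 2 - 1 / 4 ≠ 0 := by nlinarith
      rw [div_sub_div _ _ a1 a2, div_sub_div _ _ (mul_ne_zero a1 a2) (pow_ne_zero 2 a3),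
        div_eq_div_iff (by positivity) (by positivity)]
      ring
    have h4 := aux y hy
    have h5 := aux (y + m) (by linarith)
    have h6 : 1 / (4 * (y + m) ^ 2 * ((y + m) ^ 2 - 1 / 4)) ≤ 1 / (4 * y ^ 2 * (y ^ 2 - 1 / 4)) := by
      have hy2 : 0 < y ^ 2 - 1 / 4 := by nlinarith
      have : y ^ 2 ≤ (y + m) ^ 2 := by nlinarith
      apply one_div_le_one_div_of_le (by positivity)
      gcongr
    rw [e]
    have h7 := mul_le_mul_of_nonneg_left h6 (show 0 ≤ ν / 2 by positivity)
    rw [← h4, ← h5] at h7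
    linarith
  have iter : ∀ N : ℕ, gammaExcess ν x - gammaExcess ν (x + m) -
        ν / 2 * (1 / (x - 1 / 2) - 1 / (x + m - 1 / 2)) ≤
      gammaExcess ν (x + N) - gammaExcess ν (x + N + m) -
        ν / 2 * (1 / (x + N - 1 / 2) - 1 / (x + N + m - 1 / 2)) := by
    intro N
    induction N with
    | zero => simp
    | succ N ih =>
      have hN : (0 : ℝ) ≤ N := Nat.cast_nonneg N
      have := step (x + N) (by linarith)
      push_cast
      rw [← add_assoc]
      exact ih.trans this
  obtain ⟨M, hM⟩ := exists_nat_gt ν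
  have bound : ∀ N : ℕ, gammaExcess ν x - gammaExcess ν (x + m) -
        ν / 2 * (1 / (x - 1 / 2) - 1 / (x + m - 1 / 2)) ≤ M / (x + N) := by
    intro N
    have hN : (0 : ℝ) ≤ N := Nat.cast_nonneg N
    refine (iter N).trans ?_
    have h1 := gammaExcess_le (x := x + N) (by linarith) hν hM
    have h2 := gammaExcess_nonneg (x := x + N + m) (by linarith) hν
    have h3 : 1 / (x + N + m - 1 / 2) ≤ 1 / (x + N - 1 / 2) :=
      one_div_le_one_div_of_le (by linarith) (by linarith)
    have h4 := mul_nonneg (show 0 ≤ ν / 2 by positivity) (sub_nonneg.2 h3)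
    linarith
  have lim : Filter.Tendsto (fun N : ℕ => (M : ℝ) / (x + N)) Filter.atTop (nhds 0) :=
    tendsto_const_nhds.div_atTop
      (Filter.tendsto_atTop_add_const_left _ _ tendsto_natCast_atTop_atTop)
  have := ge_of_tendsto' lim bound
  linarith

/-- The constant inequality that makes the comparison of the two beta-prime distribution functions
work near the origin. -/
lemma gamma_ratio_le {n : ℕ} (hn : 2 ≤ n) {m ν : ℝ} (hν : 0 < ν) (hνm : ν ≤ m - 1) :
    ((n : ℝ) * Real.exp (digamma (n * m) - digamma ((n - 1) * m))) ^ ν *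
        (Real.Gamma ((n - 1) * m + ν) / Real.Gamma ((n - 1) * m)) ≤
      ((n : ℝ) + 1) ^ ν * (Real.Gamma (n * m + ν) / Real.Gamma (n * m)) := by
  have hn' : (2 : ℝ) ≤ n := by exact_mod_cast hn
  have hm : 1 < m := by linarith
  have hk : 1 < ((n : ℝ) - 1) * m := by nlinarith
  have hk' : (n : ℝ) * m = (n - 1) * m + m := by ring
  have h1 := gammaExcess_sub_le (x := ((n : ℝ) - 1) * m) (ν := ν) (m := m)
    (by linarith) hν (by linarith)
  rw [← hk'] at h1
  have hK : 1 < (n : ℝ) * m := by linarith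
  have h2 : ν / 2 * (1 / (((n : ℝ) - 1) * m - 1 / 2) - 1 / (n * m - 1 / 2)) ≤ 1 / ((n : ℝ) + 1) := by
    have a1 : 0 < ((n : ℝ) - 1) * m - 1 / 2 := by linarith
    have a2 : 0 < (n : ℝ) * m - 1 / 2 := by linarith
    have : 1 / (((n : ℝ) - 1) * m - 1 / 2) - 1 / (n * m - 1 / 2) =
        m / ((((n : ℝ) - 1) * m - 1 / 2) * (n * m - 1 / 2)) := by
      rw [div_sub_div _ _ a1.ne' a2.ne']; congr 1; ring
    rw [this]
    calc ν / 2 * (m / ((((n : ℝ) - 1) * m - 1 / 2) * (n * m - 1 / 2)))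
        ≤ (m - 1) / 2 * (m / ((((n : ℝ) - 1) * m - 1 / 2) * (n * m - 1 / 2))) := by gcongr
      _ ≤ 1 / (2 * n * (n - 1)) := by
        rw [div_mul_div_comm, div_le_div_iff₀ (by positivity)
          (mul_pos (by positivity) (by linarith))]
        have b : (n : ℝ) - 1 / 2 ≤ n * (n - 1) := by nlinarith
        have b2 := mul_le_mul_of_nonneg_left b (show 0 ≤ m by linarith)
        nlinarith
      _ ≤ 1 / ((n : ℝ) + 1) := by
        apply one_div_le_one_div_of_le (by positivity)
        nlinarith
  have h3 : 1 / ((n : ℝ) + 1) ≤ Real.log ((n : ℝ) + 1) - Real.log n := by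
    have h := Real.log_le_sub_one_of_pos (show 0 < (n : ℝ) / (n + 1) by positivity)
    rw [Real.log_div (by positivity) (by positivity)] at h
    have : (n : ℝ) / (n + 1) - 1 = -(1 / ((n : ℝ) + 1)) := by field_simp; ring
    linarith
  have g1 := Real.Gamma_pos_of_pos (show 0 < ((n : ℝ) - 1) * m by linarith)
  have g2 := Real.Gamma_pos_of_pos (show 0 < ((n : ℝ) - 1) * m + ν by linarith)
  have g3 := Real.Gamma_pos_of_pos (show 0 < (n : ℝ) * m by linarith)
  have g4 := Real.Gamma_pos_of_pos (show 0 < (n : ℝ) * m + ν by linarith)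
  rw [← Real.log_le_log_iff (by positivity) (by positivity), Real.log_mul (by positivity)
    (by positivity), Real.log_mul (by positivity) (by positivity), Real.log_rpow (by positivity),
    Real.log_rpow (by positivity), Real.log_mul (by positivity) (by positivity), Real.log_exp,
    Real.log_div g2.ne' g1.ne', Real.log_div g4.ne' g3.ne']
  unfold gammaExcess at h1
  have h4 := mul_le_mul_of_nonneg_left (h1.trans (h2.trans h3)) hν.le
  have e : ν * ((Real.log (Real.Gamma ((n - 1) * m + ν)) - Real.log (Real.Gamma ((n - 1) * m))) / ν -
      digamma ((n - 1) * m) - ((Real.log (Real.Gamma (n * m + ν)) - Real.log (Real.Gamma (n * m))) / ν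
        - digamma (n * m))) = (Real.log (Real.Gamma ((n - 1) * m + ν)) -
        Real.log (Real.Gamma ((n - 1) * m))) - (Real.log (Real.Gamma (n * m + ν)) -
        Real.log (Real.Gamma (n * m))) + ν * (digamma (n * m) - digamma ((n - 1) * m)) := by
    field_simp
    ring
  rw [e] at h4
  linarith

/-! ### The comparison function and its concavity -/

/-- The integral `∫₀¹ t^(ν-1) (1 + w t)^(-p) dt`. -/
def betaInc (ν p w : ℝ) : ℝ := ∫ t in Ioo (0 : ℝ) 1, t ^ (ν - 1) * (1 + w * t) ^ (-p)

/-- The function `ρ(z, v; l)`, up to a constant not depending on `l`, in the case where the mixing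
density becomes `t^(ν-1)` after the substitution `λ = l t / (1 + (l - 1) t)`; here `R = ‖z‖²` and
`k = (l - 1) d / 2`. -/
def rhoRef (ν l k R v : ℝ) : ℝ :=
  l ^ ν * (Real.Gamma (k + ν) / Real.Gamma k) * v ^ (-ν) * betaInc ν (k + ν) (l * R / v)

lemma continuousOn_one_add_rpow {α : ℝ} (hα : 0 ≤ α) (p : ℝ) :
    ContinuousOn (fun t : ℝ => (1 + α * t) ^ (-p)) (Ici 0) := by
  refine ContinuousOn.rpow_const (by fun_prop) (fun t ht => Or.inl ?_)
  have : 0 ≤ α * t := mul_nonneg hα ht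
  positivity

lemma intervalIntegrable_kernel {ν α p X : ℝ} (hν : 0 < ν) (hα : 0 ≤ α) (hX : 0 ≤ X) :
    IntervalIntegrable (fun t : ℝ => t ^ (ν - 1) * (1 + α * t) ^ (-p)) volume 0 X := by
  refine (intervalIntegral.intervalIntegrable_rpow' (by linarith)).mul_continuousOn ?_
  refine (continuousOn_one_add_rpow hα p).mono ?_
  rw [uIcc_of_le hX]
  exact fun t ht => ht.1

lemma betaInc_eq (ν p w : ℝ) :
    betaInc ν p w = ∫ t in (0 : ℝ)..1, t ^ (ν - 1) * (1 + w * t) ^ (-p) := by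
  rw [betaInc, intervalIntegral.integral_of_le zero_le_one, integral_Ioc_eq_integral_Ioo]

lemma integrableOn_kernel {ν α p : ℝ} (hν : 0 < ν) (hα : 0 ≤ α) :
    IntegrableOn (fun t : ℝ => t ^ (ν - 1) * (1 + α * t) ^ (-p)) (Ioo 0 1) := by
  have := (intervalIntegrable_iff_integrableOn_Ioo_of_le zero_le_one).1
    (intervalIntegrable_kernel (ν := ν) (α := α) (p := p) hν hα zero_le_one)
  exact this

lemma integral_kernel_eq {ν α p X : ℝ} (hX : 0 < X) :
    ∫ t in (0 : ℝ)..X, t ^ (ν - 1) * (1 + α * t) ^ (-p) = X ^ ν * betaInc ν p (α * X) := by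
  rw [betaInc_eq]
  have h := intervalIntegral.integral_comp_mul_left (a := 0) (b := 1)
    (fun t : ℝ => t ^ (ν - 1) * (1 + α * t) ^ (-p)) hX.ne'
  simp only [mul_zero, mul_one, smul_eq_mul] at h
  have h2 : (∫ t in (0 : ℝ)..X, t ^ (ν - 1) * (1 + α * t) ^ (-p)) =
      X * ∫ t in (0 : ℝ)..1, (X * t) ^ (ν - 1) * (1 + α * (X * t)) ^ (-p) := by
    rw [h]; field_simp
  have h3 : (∫ t in (0 : ℝ)..1, (X * t) ^ (ν - 1) * (1 + α * (X * t)) ^ (-p)) =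
      ∫ t in (0 : ℝ)..1, X ^ (ν - 1) * (t ^ (ν - 1) * (1 + α * X * t) ^ (-p)) := by
    refine intervalIntegral.integral_congr fun t ht => ?_
    rw [uIcc_of_le zero_le_one] at ht
    rw [Real.mul_rpow hX.le ht.1, mul_assoc α]
    ring
  rw [h2, h3, intervalIntegral.integral_const_mul, ← mul_assoc]
  rw [Real.rpow_sub_one hX.ne']
  field_simp

lemma betaInc_pos {ν p w : ℝ} (hν : 0 < ν) (hw : 0 ≤ w) : 0 < betaInc ν p w := by
  rw [betaInc_eq]
  refine intervalIntegral.intervalIntegral_pos_of_pos_on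
    (intervalIntegrable_kernel hν hw zero_le_one) (fun t ht => ?_) zero_lt_one
  have h0 : 0 < t := ht.1
  positivity

/-- Tangent-line form of the concavity of `log w ↦ log (w ^ ν * betaInc ν p w)`. -/
lemma log_betaInc_tangent {ν p w₀ : ℝ} (hν : 0 < ν) (hp : 0 ≤ p) (hw₀ : 0 < w₀) :
    ∃ E : ℝ, ∀ w : ℝ, 0 < w →
      Real.log (w ^ ν * betaInc ν p w) ≤
        Real.log (w₀ ^ ν * betaInc ν p w₀) + E * (Real.log w - Real.log w₀) := by
  set f : ℝ → ℝ := fun t => t ^ (ν - 1) * (1 + 1 * t) ^ (-p) with hf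
  set F : ℝ → ℝ := fun w => ∫ t in (0 : ℝ)..w, f t with hF
  have hFeq : ∀ w, 0 < w → F w = w ^ ν * betaInc ν p w := fun w hw => by
    simp only [hF, hf]; rw [integral_kernel_eq hw, one_mul]
  have hFpos : ∀ w, 0 < w → 0 < F w := fun w hw => by
    rw [hFeq w hw]; have := betaInc_pos (ν := ν) (p := p) hν hw.le; positivity
  have hfc : ∀ w, 0 < w → ContinuousAt f w := fun w hw => by
    refine ContinuousAt.mul (ContinuousAt.rpow_const continuousAt_id (Or.inl hw.ne')) ?_
    refine ContinuousAt.rpow_const (by fun_prop) (Or.inl (by positivity))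
  have hfm : Measurable f := by
    simp only [hf]
    fun_prop
  have hFd : ∀ w, 0 < w → HasDerivAt F (f w) w := fun w hw => by
    refine intervalIntegral.integral_hasDerivAt_right
      (intervalIntegrable_kernel hν zero_le_one hw.le) ?_ (hfc w hw)
    exact hfm.stronglyMeasurable.stronglyMeasurableAtFilter
  set E : ℝ → ℝ := fun w => w * f w / F w with hE
  -- the elasticity is antitone by a pointwise comparison of the two integrands
  have hEanti : ∀ w₁ w₂, 0 < w₁ → w₁ ≤ w₂ → E w₂ ≤ E w₁ := by
    intro w₁ w₂ h1 h12
    have h2 : 0 < w₂ := h1.trans_le h12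
    have hwf : ∀ w, 0 < w → w * f w = w ^ ν * (1 + w) ^ (-p) := fun w hw => by
      simp only [hf]; rw [Real.rpow_sub_one hw.ne', one_mul]; field_simp
    have key : (1 + w₂) ^ (-p) * betaInc ν p w₁ ≤ (1 + w₁) ^ (-p) * betaInc ν p w₂ := by
      unfold betaInc
      rw [← integral_const_mul, ← integral_const_mul]
      refine setIntegral_mono_on ((integrableOn_kernel hν h1.le).const_mul _)
        ((integrableOn_kernel hν h2.le).const_mul _) measurableSet_Ioo fun t ht => ?_
      have ht0 : 0 < t := ht.1
      have e : ∀ a b : ℝ, 0 < a → 0 < b → (1 + a) ^ (-p) * (t ^ (ν - 1) * (1 + b * t) ^ (-p)) =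
          t ^ (ν - 1) * ((1 + a) * (1 + b * t)) ^ (-p) := fun a b ha hb => by
        rw [Real.mul_rpow (by positivity) (by positivity)]; ring
      rw [e _ _ h2 h1, e _ _ h1 h2]
      refine mul_le_mul_of_nonneg_left ?_ (by positivity)
      refine Real.rpow_le_rpow_of_nonpos (by positivity) ?_ (by linarith)
      nlinarith [mul_nonneg (sub_nonneg.2 h12) (sub_nonneg.2 ht.2.le)]
    change w₂ * f w₂ / F w₂ ≤ w₁ * f w₁ / F w₁
    rw [hwf _ h1, hwf _ h2, hFeq _ h1, hFeq _ h2,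
      mul_div_mul_left _ _ (by positivity), mul_div_mul_left _ _ (by positivity),
      div_le_div_iff₀ (betaInc_pos hν h2.le) (betaInc_pos hν h1.le)]
    exact key
  refine ⟨E w₀, fun w hw => ?_⟩
  rw [← hFeq w hw, ← hFeq w₀ hw₀]
  have hhd : ∀ w, 0 < w → HasDerivAt (fun w => Real.log (F w) - E w₀ * Real.log w)
      ((E w - E w₀) / w) w := fun w hw => by
    have := ((hFd w hw).log (hFpos w hw).ne').sub ((Real.hasDerivAt_log hw.ne').const_mul (E w₀))
    refine this.congr_deriv ?_
    have := (hFpos w hw).ne'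
    change _ = (w * f w / F w - E w₀) / w
    field_simp
  suffices Real.log (F w) - E w₀ * Real.log w ≤ Real.log (F w₀) - E w₀ * Real.log w₀ by linarith
  rcases le_total w w₀ with h | h
  · have : MonotoneOn (fun w => Real.log (F w) - E w₀ * Real.log w) (Icc w w₀) := by
      refine monotoneOn_of_deriv_nonneg (convex_Icc _ _)
        (fun t ht => (hhd t (hw.trans_le ht.1)).continuousAt.continuousWithinAt)
        (fun t ht => ?_) (fun t ht => ?_)
      all_goals rw [interior_Icc] at ht
      · exact (hhd t (hw.trans ht.1)).differentiableAt.differentiableWithinAt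
      · rw [(hhd t (hw.trans ht.1)).deriv]
        exact div_nonneg (sub_nonneg.2 (hEanti _ _ (hw.trans ht.1) ht.2.le)) (hw.trans ht.1).le
    exact this (left_mem_Icc.2 h) (right_mem_Icc.2 h) h
  · have : AntitoneOn (fun w => Real.log (F w) - E w₀ * Real.log w) (Icc w₀ w) := by
      refine antitoneOn_of_deriv_nonpos (convex_Icc _ _)
        (fun t ht => (hhd t (hw₀.trans_le ht.1)).continuousAt.continuousWithinAt)
        (fun t ht => ?_) (fun t ht => ?_)
      all_goals rw [interior_Icc] at ht
      · exact (hhd t (hw₀.trans ht.1)).differentiableAt.differentiableWithinAt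
      · rw [(hhd t (hw₀.trans ht.1)).deriv]
        exact div_nonpos_of_nonpos_of_nonneg (sub_nonpos.2 (hEanti _ _ hw₀ ht.1.le))
          (hw₀.trans ht.1).le
    exact this (left_mem_Icc.2 h) (right_mem_Icc.2 h) h

/-! ### The crossing argument -/

lemma integrableOn_betaPrime {ν k : ℝ} (hν : 0 < ν) (hk : 0 < k) :
    IntegrableOn (fun t : ℝ => t ^ (ν - 1) * (1 + t) ^ (-(k + ν))) (Ioi 0) := by
  refine ⟨Measurable.aestronglyMeasurable (by fun_prop), ?_⟩
  rw [hasFiniteIntegral_iff_ofReal, lintegral_betaPrime hν hk]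
  · exact ENNReal.ofReal_lt_top
  · filter_upwards [ae_restrict_mem measurableSet_Ioi] with t ht
    have ht : 0 < t := ht
    simp only [Pi.zero_apply]; positivity

lemma integral_betaPrime {ν k : ℝ} (hν : 0 < ν) (hk : 0 < k) :
    ∫ t in Ioi (0 : ℝ), t ^ (ν - 1) * (1 + t) ^ (-(k + ν)) =
      Real.Gamma k * Real.Gamma ν / Real.Gamma (k + ν) := by
  rw [integral_eq_lintegral_of_nonneg_ae, lintegral_betaPrime hν hk, ENNReal.toReal_ofReal]
  · have := Real.Gamma_pos_of_pos hν
    have := Real.Gamma_pos_of_pos hk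
    have := Real.Gamma_pos_of_pos (add_pos hk hν)
    positivity
  · filter_upwards [ae_restrict_mem measurableSet_Ioi] with t ht
    have ht : 0 < t := ht
    simp only [Pi.zero_apply]; positivity
  · exact Measurable.aestronglyMeasurable (by fun_prop)

/-- A scaled beta-prime density of total mass `Γ(ν)`. -/
def scaledBetaPrime (ν k α t : ℝ) : ℝ :=
  Real.Gamma (k + ν) / Real.Gamma k * α ^ ν * (t ^ (ν - 1) * (1 + α * t) ^ (-(k + ν)))

lemma scaledBetaPrime_eq {ν k α t : ℝ} (hα : 0 < α) (ht : 0 < t) :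
    scaledBetaPrime ν k α t = Real.Gamma (k + ν) / Real.Gamma k * α *
      ((α * t) ^ (ν - 1) * (1 + α * t) ^ (-(k + ν))) := by
  unfold scaledBetaPrime
  rw [Real.mul_rpow hα.le ht.le, Real.rpow_sub_one hα.ne']
  field_simp

lemma integrableOn_scaledBetaPrime {ν k α : ℝ} (hν : 0 < ν) (hk : 0 < k) (hα : 0 < α) :
    IntegrableOn (scaledBetaPrime ν k α) (Ioi 0) := by
  have h := (integrableOn_Ioi_comp_mul_left_iff
    (fun t : ℝ => t ^ (ν - 1) * (1 + t) ^ (-(k + ν))) 0 hα).2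
    (by simpa using integrableOn_betaPrime hν hk)
  refine IntegrableOn.congr_fun (h.const_mul (Real.Gamma (k + ν) / Real.Gamma k * α)) (fun t ht => ?_)
    measurableSet_Ioi
  exact (scaledBetaPrime_eq hα ht).symm

lemma integral_scaledBetaPrime {ν k α : ℝ} (hν : 0 < ν) (hk : 0 < k) (hα : 0 < α) :
    ∫ t in Ioi (0 : ℝ), scaledBetaPrime ν k α t = Real.Gamma ν := by
  have h := integral_comp_mul_left_Ioi
    (fun t : ℝ => t ^ (ν - 1) * (1 + t) ^ (-(k + ν))) 0 hα
  rw [mul_zero, integral_betaPrime hν hk] at h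
  rw [setIntegral_congr_fun measurableSet_Ioi (fun t ht => scaledBetaPrime_eq hα ht),
    integral_const_mul, h]
  have := Real.Gamma_pos_of_pos hν
  have := Real.Gamma_pos_of_pos hk
  have := Real.Gamma_pos_of_pos (add_pos hk hν)
  rw [smul_eq_mul]
  field_simp

lemma integral_scaledBetaPrime_Ioc {ν k α X : ℝ} (hX : 0 < X) :
    ∫ t in Ioc (0 : ℝ) X, scaledBetaPrime ν k α t =
      Real.Gamma (k + ν) / Real.Gamma k * (α ^ ν * X ^ ν * betaInc ν (k + ν) (α * X)) := by
  unfold scaledBetaPrime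
  rw [integral_const_mul, ← intervalIntegral.integral_of_le hX.le, integral_kernel_eq hX]
  ring

/-- The logarithm `r + P' log (1 + β x) - P log (1 + α x)` of a density ratio, with `r ≤ 0` and
`P ≤ P'`, stays nonnegative once it has been positive. -/
lemma ratio_crossing {α β P P' x₁ x₂ r : ℝ} (hα : 0 < α) (hβ : 0 < β) (hP' : P ≤ P')
    (hr : r ≤ 0) (hx₁ : 0 < x₁) (hx : x₁ ≤ x₂)
    (h : 0 < r + P' * Real.log (1 + β * x₁) - P * Real.log (1 + α * x₁)) :
    0 ≤ r + P' * Real.log (1 + β * x₂) - P * Real.log (1 + α * x₂) := by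
  set L : ℝ → ℝ := fun x => P' * Real.log (1 + β * x) - P * Real.log (1 + α * x) with hL
  have hd : ∀ x, 0 ≤ x → HasDerivAt L
      (((P' * β - P * α) + α * β * (P' - P) * x) / ((1 + β * x) * (1 + α * x))) x := by
    intro x hx
    have hb : 0 < 1 + β * x := by positivity
    have ha : 0 < 1 + α * x := by positivity
    have h1 : HasDerivAt (fun x => Real.log (1 + β * x)) (β / (1 + β * x)) x := by
      have := (((hasDerivAt_id' x).const_mul β).const_add 1).log hb.ne'
      simpa using this
    have h2 : HasDerivAt (fun x => Real.log (1 + α * x)) (α / (1 + α * x)) x := by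
      have := (((hasDerivAt_id' x).const_mul α).const_add 1).log ha.ne'
      simpa using this
    refine ((h1.const_mul P').sub (h2.const_mul P)).congr_deriv ?_
    field_simp
    ring
  have hc : 0 ≤ α * β * (P' - P) := mul_nonneg (by positivity) (by linarith)
  have hpos : 0 < (P' * β - P * α) + α * β * (P' - P) * x₁ := by
    by_contra hneg
    push Not at hneg
    have : AntitoneOn L (Icc 0 x₁) := by
      refine antitoneOn_of_deriv_nonpos (convex_Icc _ _)
        (fun t ht => (hd t ht.1).continuousAt.continuousWithinAt)
        (fun t ht => ?_) (fun t ht => ?_)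
      all_goals rw [interior_Icc] at ht
      · exact (hd t ht.1.le).differentiableAt.differentiableWithinAt
      · rw [(hd t ht.1.le).deriv]
        have ht0 := ht.1
        refine div_nonpos_of_nonpos_of_nonneg ?_ (by positivity)
        nlinarith [mul_le_mul_of_nonneg_left ht.2.le hc]
    have h0 := this (left_mem_Icc.2 hx₁.le) (right_mem_Icc.2 hx₁.le) hx₁.le
    simp only [hL, mul_zero, add_zero, Real.log_one, sub_zero] at h0
    linarith
  have : MonotoneOn L (Icc x₁ x₂) := by
    refine monotoneOn_of_deriv_nonneg (convex_Icc _ _)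
      (fun t ht => (hd t (hx₁.le.trans ht.1)).continuousAt.continuousWithinAt)
      (fun t ht => ?_) (fun t ht => ?_)
    all_goals rw [interior_Icc] at ht
    · exact (hd t (hx₁.trans ht.1).le).differentiableAt.differentiableWithinAt
    · have ht0 := hx₁.trans ht.1
      rw [(hd t ht0.le).deriv]
      refine div_nonneg ?_ (by positivity)
      nlinarith [mul_le_mul_of_nonneg_left ht.1.le hc]
  have h0 := this (left_mem_Icc.2 hx) (right_mem_Icc.2 hx) hx
  simp only [hL] at h0
  linarith

/-- Two scaled beta-prime distribution functions are ordered: both densities have total mass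
`Γ(ν)`, their ratio is on the right side of `1` near the origin by `hr`, and it crosses `1` at most
once. -/
lemma crossing {ν k k' α β X : ℝ} (hν : 0 < ν) (hk : 0 < k) (hkk : k ≤ k')
    (hα : 0 < α) (hβ : 0 < β) (hX : 0 < X)
    (hr : α ^ ν * (Real.Gamma (k + ν) / Real.Gamma k) ≤
      β ^ ν * (Real.Gamma (k' + ν) / Real.Gamma k')) :
    Real.Gamma (k + ν) / Real.Gamma k * (α ^ ν * X ^ ν * betaInc ν (k + ν) (α * X)) ≤
      Real.Gamma (k' + ν) / Real.Gamma k' * (β ^ ν * X ^ ν * betaInc ν (k' + ν) (β * X)) := by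
  have hk' : 0 < k' := hk.trans_le hkk
  have g1 := Real.Gamma_pos_of_pos hk
  have g2 := Real.Gamma_pos_of_pos hk'
  have g3 := Real.Gamma_pos_of_pos (add_pos hk hν)
  have g4 := Real.Gamma_pos_of_pos (add_pos hk' hν)
  rw [← integral_scaledBetaPrime_Ioc hX, ← integral_scaledBetaPrime_Ioc hX]
  have i1 := integrableOn_scaledBetaPrime hν hk hα
  have i2 := integrableOn_scaledBetaPrime hν hk' hβ
  have hpos : ∀ κ a t : ℝ, 0 < κ → 0 < a → 0 < t → 0 < scaledBetaPrime ν κ a t := by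
    intro κ a t h1 h2 h3
    have := Real.Gamma_pos_of_pos h1
    have := Real.Gamma_pos_of_pos (add_pos h1 hν)
    unfold scaledBetaPrime; positivity
  -- logarithm of the ratio of the two densities
  have hlog : ∀ t, 0 < t →
      Real.log (scaledBetaPrime ν k α t) - Real.log (scaledBetaPrime ν k' β t) =
      (Real.log (α ^ ν * (Real.Gamma (k + ν) / Real.Gamma k)) -
        Real.log (β ^ ν * (Real.Gamma (k' + ν) / Real.Gamma k'))) +
      (k' + ν) * Real.log (1 + β * t) - (k + ν) * Real.log (1 + α * t) := by
    intro t ht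
    have aux : ∀ κ a : ℝ, 0 < κ → 0 < a → Real.log (scaledBetaPrime ν κ a t) =
        Real.log (a ^ ν * (Real.Gamma (κ + ν) / Real.Gamma κ)) + Real.log (t ^ (ν - 1)) -
          (κ + ν) * Real.log (1 + a * t) := by
      intro κ a h1 h2
      have := Real.Gamma_pos_of_pos h1
      have := Real.Gamma_pos_of_pos (add_pos h1 hν)
      unfold scaledBetaPrime
      rw [mul_comm (Real.Gamma _ / _), Real.log_mul (by positivity) (by positivity),
        Real.log_mul (x := t ^ (ν - 1)) (by positivity) (by positivity),
        Real.log_rpow (x := 1 + a * t) (by positivity)]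
      ring
    rw [aux k α hk hα, aux k' β hk' hβ]; ring
  have hr' : Real.log (α ^ ν * (Real.Gamma (k + ν) / Real.Gamma k)) -
        Real.log (β ^ ν * (Real.Gamma (k' + ν) / Real.Gamma k')) ≤ 0 :=
    sub_nonpos.2 (Real.log_le_log (by positivity) hr)
  by_cases hle : ∀ t ∈ Ioc 0 X, scaledBetaPrime ν k α t ≤ scaledBetaPrime ν k' β t
  · exact setIntegral_mono_on (i1.mono_set Ioc_subset_Ioi_self) (i2.mono_set Ioc_subset_Ioi_self)
      measurableSet_Ioc hle
  · push Not at hle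
    obtain ⟨x₁, hx₁, hlt⟩ := hle
    have hafter : ∀ t ∈ Ioi X, scaledBetaPrime ν k' β t ≤ scaledBetaPrime ν k α t := by
      intro t ht
      have ht0 : 0 < t := hX.trans ht
      rw [← Real.log_le_log_iff (hpos _ _ _ hk' hβ ht0) (hpos _ _ _ hk hα ht0), ← sub_nonneg,
        hlog t ht0]
      refine ratio_crossing hα hβ (by linarith) hr' hx₁.1 (hx₁.2.trans (le_of_lt ht)) ?_
      rw [← hlog x₁ hx₁.1, sub_pos]
      exact Real.log_lt_log (hpos _ _ _ hk' hβ hx₁.1) hlt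
    have hsub : Ioi X ⊆ Ioi (0 : ℝ) := Ioi_subset_Ioi hX.le
    have h3 := setIntegral_mono_on (i2.mono_set hsub) (i1.mono_set hsub) measurableSet_Ioi hafter
    have split : ∀ f : ℝ → ℝ, IntegrableOn f (Ioi 0) →
        ∫ t in Ioi (0 : ℝ), f t = (∫ t in Ioc 0 X, f t) + ∫ t in Ioi X, f t := by
      intro f hf
      rw [← Ioc_union_Ioi_eq_Ioi hX.le, setIntegral_union (Ioc_disjoint_Ioi le_rfl)
        measurableSet_Ioi (hf.mono_set Ioc_subset_Ioi_self) (hf.mono_set hsub)]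
    have e1 := split _ i1
    have e2 := split _ i2
    rw [integral_scaledBetaPrime hν hk hα] at e1
    rw [integral_scaledBetaPrime hν hk' hβ] at e2
    linarith

/-- The pointwise inequality behind the domination: combines concavity of `log ρ` in `log v` with
the crossing argument at the point `v e^{-c₀}`, `c₀ = ψ(n m) - ψ((n - 1) m)`. -/
lemma log_rhoRef_le {n : ℕ} (hn : 2 ≤ n) {m ν R v : ℝ} (hν : 0 < ν) (hνm : ν ≤ m - 1)
    (hR : 0 < R) (hv : 0 < v) :
    ∃ E : ℝ, ∀ b : ℝ, 0 < b →
      Real.log (rhoRef ν n (((n : ℝ) - 1) * m) R (v / b)) ≤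
        Real.log (rhoRef ν ((n : ℝ) + 1) ((n : ℝ) * m) R v) +
          E * (Real.log b - (digamma ((n : ℝ) * m) - digamma (((n : ℝ) - 1) * m))) := by
  have hn2 : (2 : ℝ) ≤ n := by exact_mod_cast hn
  have hm : 0 < m := by linarith
  set c₀ := digamma ((n : ℝ) * m) - digamma (((n : ℝ) - 1) * m) with hc₀
  set k := ((n : ℝ) - 1) * m with hkdef
  set k' := (n : ℝ) * m with hkdef'
  have hk : 0 < k := mul_pos (by linarith) hm
  have hkk : k ≤ k' := by simp only [hkdef, hkdef']; nlinarith
  have hk' : 0 < k' := hk.trans_le hkk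
  have g1 := Real.Gamma_pos_of_pos hk
  have g3 := Real.Gamma_pos_of_pos (add_pos hk hν)
  have hr := gamma_ratio_le hn hν hνm
  rw [← hkdef, ← hkdef', ← hc₀] at hr
  obtain ⟨E, hE⟩ := log_betaInc_tangent (ν := ν) (p := k + ν) (w₀ := n * Real.exp c₀ * (R / v))
    hν (by positivity) (by positivity)
  refine ⟨E, fun b hb => ?_⟩
  -- `rhoRef` through the variable `w = l R / v`
  have hrho : ∀ l κ u : ℝ, 0 < l → 0 < u → rhoRef ν l κ R u =
      R ^ (-ν) * (Real.Gamma (κ + ν) / Real.Gamma κ) *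
        ((l * R / u) ^ ν * betaInc ν (κ + ν) (l * R / u)) := by
    intro l κ u hl hu
    unfold rhoRef
    rw [Real.div_rpow (by positivity) hu.le, Real.mul_rpow hl.le hR.le, Real.rpow_neg hR.le,
      Real.rpow_neg hu.le]
    field_simp
  have hw : 0 < (n : ℝ) * R / (v / b) := by positivity
  have hlw : Real.log ((n : ℝ) * R / (v / b)) - Real.log (n * Real.exp c₀ * (R / v)) =
      Real.log b - c₀ := by
    rw [← Real.log_div (by positivity) (by positivity)]
    have : (n : ℝ) * R / (v / b) / (n * Real.exp c₀ * (R / v)) = b / Real.exp c₀ := by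
      field_simp
    rw [this, Real.log_div hb.ne' (Real.exp_ne_zero _), Real.log_exp]
  have h1 := hE _ hw
  rw [hlw] at h1
  have hb1 := betaInc_pos (ν := ν) (p := k + ν) hν hw.le
  have hb2 := betaInc_pos (ν := ν) (p := k + ν) (w := n * Real.exp c₀ * (R / v)) hν (by positivity)
  have hX : 0 < R / v := by positivity
  have h2 := crossing hν hk hkk (α := n * Real.exp c₀) (β := (n : ℝ) + 1) (by positivity)
    (by positivity) hX hr
  have h3 : Real.log (R ^ (-ν) * (Real.Gamma (k + ν) / Real.Gamma k) *
      ((n * Real.exp c₀ * (R / v)) ^ ν * betaInc ν (k + ν) (n * Real.exp c₀ * (R / v)))) ≤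
      Real.log (rhoRef ν ((n : ℝ) + 1) k' R v) := by
    refine Real.log_le_log (by positivity) ?_
    rw [hrho ((n : ℝ) + 1) k' v (by positivity) hv, mul_assoc (R ^ (-ν)), mul_assoc (R ^ (-ν))]
    refine mul_le_mul_of_nonneg_left ?_ (Real.rpow_nonneg hR.le _)
    rw [Real.mul_rpow (x := n * Real.exp c₀) (by positivity) hX.le, mul_div_assoc,
      Real.mul_rpow (x := (n : ℝ) + 1) (by positivity) hX.le]
    exact h2
  rw [hrho n k (v / b) (by positivity) (by positivity), Real.log_mul (by positivity) (by positivity)]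
  rw [Real.log_mul (by positivity) (by positivity)] at h3
  linarith

/-! ### Gaussian smoothing decreases the comparison function -/

lemma lintegral_gaussPdf_mul_exp {d : ℕ} (x : Euc d) {τ κ : ℝ} (hτ : 0 < τ) (hκ : 0 < κ) :
    ∫⁻ z, ENNReal.ofReal (gaussPdf d z x τ * Real.exp (-(κ * ‖z‖ ^ 2))) =
      ENNReal.ofReal ((1 + 2 * κ * τ) ^ (-(d : ℝ) / 2) *
        Real.exp (-(κ * ‖x‖ ^ 2 / (1 + 2 * κ * τ)))) := by
  have e1 : ∀ z : Euc d, gaussPdf d z x τ * Real.exp (-(κ * ‖z‖ ^ 2)) =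
      (Real.pi / κ) ^ ((d : ℝ) / 2) *
        (gaussPdf d x z τ * gaussPdf d z 0 ((2 * κ)⁻¹)) := by
    intro z
    have : gaussPdf d z 0 ((2 * κ)⁻¹) =
        (Real.pi / κ) ^ (-(d : ℝ) / 2) * Real.exp (-(κ * ‖z‖ ^ 2)) := by
      unfold gaussPdf
      rw [sub_zero]
      congr 2 <;> field_simp
    rw [this, gaussPdf_comm z x, neg_div, Real.rpow_neg (by positivity)]
    field_simp
  have i1 : Integrable (fun z : Euc d => (Real.pi / κ) ^ ((d : ℝ) / 2) *
      (gaussPdf d x z τ * gaussPdf d z 0 ((2 * κ)⁻¹))) :=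
    (integrable_gaussPdf_mul x 0 hτ (by positivity)).const_mul _
  simp_rw [e1]
  rw [← ofReal_integral_eq_lintegral_ofReal i1, integral_const_mul,
    integral_gaussPdf_mul x 0 hτ (by positivity)]
  · congr 1
    unfold gaussPdf
    rw [sub_zero, ← mul_assoc]
    have e2 : 2 * Real.pi * (τ + (2 * κ)⁻¹) = (Real.pi / κ) * (1 + 2 * κ * τ) := by
      field_simp; ring
    rw [e2, Real.mul_rpow (by positivity) (by positivity), ← mul_assoc, neg_div,
      Real.rpow_neg (x := Real.pi / κ) (by positivity), mul_inv_cancel₀ (by positivity), one_mul]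
    congr 2
    field_simp
    ring
  · refine Filter.Eventually.of_forall fun z => ?_
    have := gaussPdf_pos x z hτ
    have := gaussPdf_pos z 0 (τ := (2 * κ)⁻¹) (by positivity)
    simp only [Pi.zero_apply]
    positivity

/-- The substitution `t ↦ t / (1 + a t)`, whose Jacobian beats `(1 + a t)^(-D)` once
`ν + 1 ≤ D`. -/
lemma lintegral_substitution_le {ν a b D : ℝ} (ha : 0 ≤ a) (hD : ν + 1 ≤ D) :
    ∫⁻ t in Ioo (0 : ℝ) 1, ENNReal.ofReal
      (t ^ (ν - 1) * ((1 + a * t) ^ (-D) * Real.exp (-(b * t / (1 + a * t))))) ≤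
    ∫⁻ t in Ioo (0 : ℝ) 1, ENNReal.ofReal (t ^ (ν - 1) * Real.exp (-(b * t))) := by
  set g : ℝ → ℝ := fun t => t / (1 + a * t) with hg
  have hpos : ∀ t ∈ Ioo (0 : ℝ) 1, 0 < 1 + a * t := fun t ht => by
    have := ht.1; positivity
  have hd : ∀ t ∈ Ioo (0 : ℝ) 1, HasDerivWithinAt g (1 / (1 + a * t) ^ 2) (Ioo 0 1) t := by
    intro t ht
    have h1 : HasDerivAt (fun t : ℝ => 1 + a * t) a t := by
      simpa using ((hasDerivAt_id' t).const_mul a).const_add 1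
    have := (hasDerivAt_id' t).fun_div h1 (hpos t ht).ne'
    refine (this.congr_deriv ?_).hasDerivWithinAt
    congr 1
    ring
  have hinj : InjOn g (Ioo 0 1) := by
    intro t ht u hu h
    simp only [hg] at h
    rw [div_eq_div_iff (hpos t ht).ne' (hpos u hu).ne'] at h
    linarith
  have himg : g '' Ioo 0 1 ⊆ Ioo 0 1 := by
    rintro _ ⟨t, ht, rfl⟩
    have := hpos t ht
    refine ⟨div_pos ht.1 this, ?_⟩
    simp only [hg]
    rw [div_lt_one this]
    nlinarith [mul_nonneg ha ht.1.le, ht.2]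
  refine le_trans ?_ (lintegral_mono_set himg)
  rw [lintegral_image_eq_lintegral_abs_deriv_mul measurableSet_Ioo hd hinj]
  refine setLIntegral_mono' measurableSet_Ioo fun t ht => ?_
  have h1 := hpos t ht
  have ht0 := ht.1
  rw [← ENNReal.ofReal_mul (by positivity)]
  refine ENNReal.ofReal_le_ofReal ?_
  rw [abs_of_nonneg (by positivity)]
  simp only [hg]
  rw [Real.div_rpow ht0.le h1.le, mul_div_assoc]
  have e : 1 / (1 + a * t) ^ 2 * (t ^ (ν - 1) / (1 + a * t) ^ (ν - 1) *
      Real.exp (-(b * (t / (1 + a * t))))) =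
      t ^ (ν - 1) * ((1 + a * t) ^ (-(ν + 1)) * Real.exp (-(b * (t / (1 + a * t))))) := by
    have : (1 + a * t) ^ (ν + 1) = (1 + a * t) ^ 2 * (1 + a * t) ^ (ν - 1) := by
      rw [← Real.rpow_natCast, ← Real.rpow_add h1]; congr 1; push_cast; ring
    rw [Real.rpow_neg h1.le, this]
    field_simp
  rw [e]
  have : (1 + a * t) ^ (-D) ≤ (1 + a * t) ^ (-(ν + 1)) :=
    Real.rpow_le_rpow_of_exponent_le (by nlinarith [mul_nonneg ha ht0.le]) (by linarith)
  gcongr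

lemma ofReal_betaInc {ν p w : ℝ} (hν : 0 < ν) (hp : 0 < p) (hw : 0 ≤ w) :
    ENNReal.ofReal (betaInc ν p w) =
      ∫⁻ h in Ioi (0 : ℝ), ENNReal.ofReal ((Real.Gamma p)⁻¹ * (h ^ (p - 1) * Real.exp (-h))) *
        ∫⁻ t in Ioo (0 : ℝ) 1, ENNReal.ofReal (t ^ (ν - 1) * Real.exp (-(h * w * t))) := by
  have hG := Real.Gamma_pos_of_pos hp
  rw [betaInc, ofReal_integral_eq_lintegral_ofReal (integrableOn_kernel hν hw)]
  swap
  · filter_upwards [ae_restrict_mem measurableSet_Ioo] with t ht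
    have := ht.1
    simp only [Pi.zero_apply]; positivity
  have e1 : ∀ h : ℝ, ENNReal.ofReal ((Real.Gamma p)⁻¹ * (h ^ (p - 1) * Real.exp (-h))) *
        ∫⁻ t in Ioo (0 : ℝ) 1, ENNReal.ofReal (t ^ (ν - 1) * Real.exp (-(h * w * t))) =
      ∫⁻ t in Ioo (0 : ℝ) 1, ENNReal.ofReal ((Real.Gamma p)⁻¹ * (h ^ (p - 1) * Real.exp (-h))) *
        ENNReal.ofReal (t ^ (ν - 1) * Real.exp (-(h * w * t))) := by
    intro h
    rw [lintegral_const_mul]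
    fun_prop
  simp_rw [e1]
  rw [lintegral_lintegral_swap (by fun_prop)]
  refine setLIntegral_congr_fun measurableSet_Ioo fun t ht => ?_
  have ht0 := ht.1
  have hr : 0 < 1 + w * t := by positivity
  have e2 : ∀ h ∈ Ioi (0 : ℝ),
      ENNReal.ofReal ((Real.Gamma p)⁻¹ * (h ^ (p - 1) * Real.exp (-h))) *
        ENNReal.ofReal (t ^ (ν - 1) * Real.exp (-(h * w * t))) =
      ENNReal.ofReal ((Real.Gamma p)⁻¹ * t ^ (ν - 1)) *
        ENNReal.ofReal (h ^ (p - 1) * Real.exp (-((1 + w * t) * h))) := by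
    intro h hh
    have hh : 0 < h := hh
    rw [← ENNReal.ofReal_mul (by positivity), ← ENNReal.ofReal_mul (by positivity)]
    congr 1
    have : Real.exp (-((1 + w * t) * h)) = Real.exp (-h) * Real.exp (-(h * w * t)) := by
      rw [← Real.exp_add]; ring_nf
    rw [this]; ring
  rw [setLIntegral_congr_fun measurableSet_Ioi e2, lintegral_const_mul _ (by fun_prop),
    lintegral_rpow_exp hp hr, ← ENNReal.ofReal_mul (by positivity)]
  congr 1
  field_simp

/-- Convolution with a Gaussian decreases `betaInc` of the squared norm, as `ν + 1 ≤ d / 2`. -/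
lemma lintegral_gauss_betaInc_le {d : ℕ} {ν p c τ : ℝ} (hν : 0 < ν) (hνd : ν + 1 ≤ (d : ℝ) / 2)
    (hp : 0 < p) (hc : 0 < c) (hτ : 0 < τ) (x : Euc d) :
    ∫⁻ z, ENNReal.ofReal (gaussPdf d z x τ) * ENNReal.ofReal (betaInc ν p (c * ‖z‖ ^ 2)) ≤
      ENNReal.ofReal (betaInc ν p (c * ‖x‖ ^ 2)) := by
  have hG := Real.Gamma_pos_of_pos hp
  have hgm : Measurable (fun z : Euc d => gaussPdf d z x τ) := (continuous_gaussPdf x τ).measurable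
  calc _ = ∫⁻ z, ∫⁻ h in Ioi (0 : ℝ), ∫⁻ t in Ioo (0 : ℝ) 1,
        ENNReal.ofReal ((Real.Gamma p)⁻¹ * (h ^ (p - 1) * Real.exp (-h))) *
          (ENNReal.ofReal (t ^ (ν - 1)) *
          ENNReal.ofReal (gaussPdf d z x τ * Real.exp (-(h * c * t * ‖z‖ ^ 2)))) := by
        refine lintegral_congr fun z => ?_
        rw [ofReal_betaInc hν hp (by positivity), ← lintegral_const_mul _ (by fun_prop)]
        refine lintegral_congr fun h => ?_
        rw [mul_left_comm, ← lintegral_const_mul _ (by fun_prop),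
          ← lintegral_const_mul _ (by fun_prop)]
        refine setLIntegral_congr_fun measurableSet_Ioo fun t ht => ?_
        have ht0 := ht.1
        have := (gaussPdf_pos z x hτ).le
        refine congrArg _ ?_
        rw [← ENNReal.ofReal_mul this, ← ENNReal.ofReal_mul (by positivity)]
        congr 1
        ring_nf
    _ = ∫⁻ h in Ioi (0 : ℝ), ∫⁻ t in Ioo (0 : ℝ) 1,
        ENNReal.ofReal ((Real.Gamma p)⁻¹ * (h ^ (p - 1) * Real.exp (-h))) *
          (ENNReal.ofReal (t ^ (ν - 1)) * ∫⁻ z,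
          ENNReal.ofReal (gaussPdf d z x τ * Real.exp (-(h * c * t * ‖z‖ ^ 2)))) := by
        rw [lintegral_lintegral_swap]
        swap
        · refine Measurable.aemeasurable ?_
          refine Measurable.lintegral_prod_right' (f := fun q : (Euc d × ℝ) × ℝ =>
            ENNReal.ofReal ((Real.Gamma p)⁻¹ * (q.1.2 ^ (p - 1) * Real.exp (-q.1.2))) *
            (ENNReal.ofReal (q.2 ^ (ν - 1)) *
            ENNReal.ofReal (gaussPdf d q.1.1 x τ *
              Real.exp (-(q.1.2 * c * q.2 * ‖q.1.1‖ ^ 2))))) ?_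
          have : Measurable (fun q : (Euc d × ℝ) × ℝ => gaussPdf d q.1.1 x τ) :=
            measurable_gaussPdf (by fun_prop) (by fun_prop) (by fun_prop)
          fun_prop
        refine lintegral_congr fun h => ?_
        rw [lintegral_lintegral_swap]
        swap
        · have : Measurable (fun q : Euc d × ℝ => gaussPdf d q.1 x τ) :=
            measurable_gaussPdf (by fun_prop) (by fun_prop) (by fun_prop)
          refine Measurable.aemeasurable ?_
          unfold Function.uncurry
          fun_prop
        refine lintegral_congr fun t => ?_
        rw [lintegral_const_mul _ (by fun_prop), lintegral_const_mul _ (by fun_prop)]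
    _ ≤ _ := by
        rw [ofReal_betaInc hν hp (by positivity)]
        refine setLIntegral_mono' measurableSet_Ioi fun h hh => ?_
        have hh : 0 < h := hh
        rw [lintegral_const_mul']
        swap
        · exact ENNReal.ofReal_ne_top
        refine mul_le_mul_right ?_ _
        refine le_trans (le_of_eq ?_)
          (lintegral_substitution_le (ν := ν) (a := 2 * (h * c) * τ) (b := h * (c * ‖x‖ ^ 2))
          (D := (d : ℝ) / 2) (by positivity) hνd)
        refine setLIntegral_congr_fun measurableSet_Ioo fun t ht => ?_
        have ht0 := ht.1
        rw [lintegral_gaussPdf_mul_exp x hτ (by positivity), ← ENNReal.ofReal_mul (by positivity),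
          neg_div]
        congr 1
        ring_nf

/-! ### The predictive density through the marginal densities -/

lemma bayesPredNum_eq {d n : ℕ} (hd : 0 < d) (hn : 2 ≤ n) (pr : Euc d → ℝ → ℝ) (y x : Euc d)
    {s : ℝ} (hs : 0 < s) :
    bayesPredNum d n pr y x s = bestEquiv d n y x s * (newS n x y s / s) *
      marginalDens d pr (n + 1) (newMean n x y) (newS n x y s) := by
  have hn2 : (2 : ℝ) ≤ n := by exact_mod_cast hn
  have hd0 : (0 : ℝ) < d := by exact_mod_cast hd
  have hs' : 0 < newS n x y s := by unfold newS; positivity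
  unfold bayesPredNum marginalDens
  rw [← integral_const_mul]
  refine setIntegral_congr_fun measurableSet_Ioi fun η hη => ?_
  have hη : 0 < η := hη
  rw [← integral_const_mul]
  refine integral_congr_ae (Filter.Eventually.of_forall fun μ => ?_)
  have hp := gaussPdf_pair (n := n) (by omega) x y μ (τ := η⁻¹) (by positivity)
  have t1 : ((n : ℝ) * η)⁻¹ = η⁻¹ / n := by field_simp
  have t2 : (((n + 1 : ℕ) : ℝ) * η)⁻¹ = η⁻¹ / ((n : ℝ) + 1) := by push_cast; field_simp
  simp only [t1, t2]
  rw [mul_comm (gaussPdf d y μ η⁻¹), hp]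
  suffices h : gaussPdf d (y - x) 0 (η⁻¹ * ((n : ℝ) + 1) / n) * chiSqPdf (((n : ℝ) - 1) * d) (η * s) =
      bestEquiv d n y x s * (newS n x y s / s) *
        chiSqPdf ((((n + 1 : ℕ) : ℝ) - 1) * d) (η * newS n x y s) by
    linear_combination (gaussPdf d (newMean n x y) μ (η⁻¹ / ((n : ℝ) + 1)) * η * pr μ η) * h
  set k : ℝ := ((n : ℝ) - 1) * d / 2 with hk
  have hk0 : 0 < k := by
    have : (0 : ℝ) < (n : ℝ) - 1 := by linarith
    positivity
  set m : ℝ := (d : ℝ) / 2 with hm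
  have hm0 : 0 < m := by positivity
  have hk' : (n : ℝ) * d / 2 = k + m := by rw [hk, hm]; ring
  have e1 : (((n + 1 : ℕ) : ℝ) - 1) * d / 2 = k + m := by rw [hk, hm]; push_cast; ring
  have g1 := Real.Gamma_pos_of_pos hk0
  have g2 := Real.Gamma_pos_of_pos (add_pos hk0 hm0)
  set S := newS n x y s with hS
  have eS : 1 + (n : ℝ) / (((n : ℝ) + 1) * s) * ‖y - x‖ ^ 2 = S / s := by
    rw [hS, newS]; field_simp
  have eexp : Real.exp (-‖y - x‖ ^ 2 / (2 * (η⁻¹ * ((n : ℝ) + 1) / n))) * Real.exp (-(η * s) / 2) =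
      Real.exp (-(η * S) / 2) := by
    rw [← Real.exp_add]; congr 1; rw [hS, newS]; field_simp; ring
  unfold gaussPdf chiSqPdf bestEquiv
  rw [eS, e1, hk', sub_zero, ← hk, ← hm, neg_div (2 : ℝ) (d : ℝ),
    neg_div (2 : ℝ) ((n : ℝ) * d), hk', ← hm]
  have q1 : (2 * Real.pi * (η⁻¹ * ((n : ℝ) + 1) / n)) ^ (-m) =
      (n / (((n : ℝ) + 1) * Real.pi * s)) ^ m * (η * s) ^ m * (2 ^ m)⁻¹ := by
    rw [← Real.mul_rpow (by positivity) (by positivity), ← Real.inv_rpow (by positivity),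
      ← Real.mul_rpow (by positivity) (by positivity), Real.rpow_neg (by positivity),
      ← Real.inv_rpow (by positivity)]
    congr 1
    field_simp
  have q2 : (S / s) ^ (-(k + m)) * (S / s) * (η * S) ^ (k + m - 1) =
      (η * s) ^ m * (η * s) ^ (k - 1) := by
    have : S / s = (η * S) / (η * s) := by field_simp
    rw [this, Real.rpow_neg (by positivity), Real.div_rpow (by positivity) (by positivity),
      Real.rpow_sub_one (by positivity), Real.rpow_sub_one (by positivity),
      Real.rpow_add (x := η * s) (by positivity)]
    have := Real.rpow_pos_of_pos (show 0 < η * S by positivity) (k + m)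
    field_simp
  have q3 : (2 : ℝ) ^ (k + m) = 2 ^ k * 2 ^ m := Real.rpow_add two_pos _ _
  rw [q1, q3]
  calc _ = (n / (((n : ℝ) + 1) * Real.pi * s)) ^ m * (2 ^ m)⁻¹ / (2 ^ k * Real.Gamma k) *
        ((η * s) ^ m * (η * s) ^ (k - 1)) *
        (Real.exp (-‖y - x‖ ^ 2 / (2 * (η⁻¹ * ((n : ℝ) + 1) / n))) *
          Real.exp (-(η * s) / 2)) := by ring_nf
    _ = _ := by
        rw [eexp, ← q2]
        field_simp

lemma bayesPred_eq {d n : ℕ} (hd : 0 < d) (hn : 2 ≤ n) (pr : Euc d → ℝ → ℝ) (y x : Euc d)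
    {s : ℝ} (hs : 0 < s) :
    bayesPred d n pr y x s = bestEquiv d n y x s *
      (rhoDens d pr (n + 1) (newMean n x y) (newS n x y s) / rhoDens d pr n x s) := by
  rw [bayesPred, bayesPredNum_eq hd hn pr y x hs]
  have : bayesPredDen d n pr x s = marginalDens d pr n x s := rfl
  rw [this, rhoDens, rhoDens]
  rcases eq_or_ne (marginalDens d pr n x s) 0 with h | h
  · simp [h]
  · field_simp

/-! ### Closed form of the marginal density -/

/-- Tonelli's theorem for Bochner integrals of nonnegative functions whose inner integrals in one
order are known. -/
lemma integral_swap_of_lintegral {α β : Type*} [MeasurableSpace α] [MeasurableSpace β]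
    {μ : Measure α} {κ : Measure β} [SFinite μ] [SFinite κ] {f : α → β → ℝ} {h : β → ℝ}
    (hf : Measurable (Function.uncurry f)) (h0 : ∀ᵐ a ∂μ, ∀ᵐ b ∂κ, 0 ≤ f a b)
    (hh : ∀ᵐ b ∂κ, ∫⁻ a, ENNReal.ofReal (f a b) ∂μ = ENNReal.ofReal (h b))
    (hpos : 0 ≤ᵐ[κ] h) (hi : Integrable h κ) :
    ∫ a, ∫ b, f a b ∂κ ∂μ = ∫ b, h b ∂κ := by
  have hm : Measurable (fun a => ∫⁻ b, ENNReal.ofReal (f a b) ∂κ) :=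
    Measurable.lintegral_prod_right' (f := fun p : α × β => ENNReal.ofReal (f p.1 p.2))
      hf.ennreal_ofReal
  have hsw : ∫⁻ a, ∫⁻ b, ENNReal.ofReal (f a b) ∂κ ∂μ = ENNReal.ofReal (∫ b, h b ∂κ) := by
    rw [lintegral_lintegral_swap hf.ennreal_ofReal.aemeasurable, lintegral_congr_ae hh,
      ofReal_integral_eq_lintegral_ofReal hi hpos]
  have h1 : ∀ᵐ a ∂μ, ∫ b, f a b ∂κ = (∫⁻ b, ENNReal.ofReal (f a b) ∂κ).toReal := by
    filter_upwards [h0] with a ha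
    exact integral_eq_lintegral_of_nonneg_ae ha
      (hf.comp measurable_prodMk_left).aestronglyMeasurable
  rw [integral_congr_ae h1, integral_toReal hm.aemeasurable, hsw, ENNReal.toReal_ofReal]
  · exact integral_nonneg_of_ae hpos
  · refine ae_lt_top hm ?_
    rw [hsw]; exact ENNReal.ofReal_ne_top

/-- The mixing density after the substitution `λ = l t / (1 + (l - 1) t)`, divided by
`t^(ν-1)`. -/
def mixWeight (d : ℕ) (ν : ℝ) (q : ℝ → ℝ) (l t : ℝ) : ℝ :=
  (1 + (l - 1) * t) ^ ((d : ℝ) / 2 - ν - 1) * q (l * t / (1 + (l - 1) * t))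

lemma measurable_mixWeight {d : ℕ} {ν : ℝ} {q : ℝ → ℝ} (hq : Measurable q) (l : ℝ) :
    Measurable (mixWeight d ν q l) := by
  unfold mixWeight
  have : Measurable (fun t : ℝ => q (l * t / (1 + (l - 1) * t))) := hq.comp (by fun_prop)
  fun_prop

lemma gmPrior_subst {d : ℕ} {ν : ℝ} (q : ℝ → ℝ) {l : ℝ} (hl : 1 ≤ l) (μ : Euc d) {η : ℝ}
    (hη : 0 < η) :
    gmPrior d ν q μ η = ∫ t in Ioo (0 : ℝ) 1, l ^ (ν - (d : ℝ) / 2) * η ^ (ν - (d : ℝ) / 2 - 1) *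
      (gaussPdf d μ 0 ((1 - t) / (η * l * t)) * (t ^ (ν - (d : ℝ) / 2 - 1) *
        mixWeight d ν q l t)) := by
  have hl0 : 0 < l := by linarith
  set g : ℝ → ℝ := fun t => l * t / (1 + (l - 1) * t) with hg
  have hpos : ∀ t : ℝ, 0 < t → 0 < 1 + (l - 1) * t := fun t ht => by
    have := mul_nonneg (sub_nonneg.2 hl) ht.le; linarith
  have hd : ∀ t ∈ Ioo (0 : ℝ) 1, HasDerivWithinAt g (l / (1 + (l - 1) * t) ^ 2) (Ioo 0 1) t := by
    intro t ht
    have h1 : HasDerivAt (fun t : ℝ => 1 + (l - 1) * t) (l - 1) t := by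
      simpa using ((hasDerivAt_id' t).const_mul (l - 1)).const_add 1
    have h2 : HasDerivAt (fun t : ℝ => l * t) l t := by
      simpa using (hasDerivAt_id' t).const_mul l
    have := h2.fun_div h1 (hpos t ht.1).ne'
    refine (this.congr_deriv ?_).hasDerivWithinAt
    congr 1
    ring
  have hinj : InjOn g (Ioo 0 1) := by
    intro t ht u hu h
    simp only [hg] at h
    rw [div_eq_div_iff (hpos t ht.1).ne' (hpos u hu.1).ne'] at h
    have : l * (t - u) = 0 := by linarith
    rcases mul_eq_zero.1 this with h | h <;> linarith
  have himg : g '' Ioo 0 1 = Ioo 0 1 := by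
    ext x
    constructor
    · rintro ⟨t, ht, rfl⟩
      have h1 := hpos t ht.1
      refine ⟨div_pos (mul_pos hl0 ht.1) h1, ?_⟩
      simp only [hg]
      rw [div_lt_one h1]
      nlinarith [ht.2]
    · intro hx
      have h1 : 0 < l - (l - 1) * x := by nlinarith [hx.1, hx.2]
      refine ⟨x / (l - (l - 1) * x), ⟨div_pos hx.1 h1, ?_⟩, ?_⟩
      · rw [div_lt_one h1]; nlinarith [hx.1, hx.2]
      · simp only [hg]
        have : 1 + (l - 1) * (x / (l - (l - 1) * x)) = l / (l - (l - 1) * x) := by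
          field_simp; ring
        have h2 : l - x * (l - 1) ≠ 0 := by rw [mul_comm x]; exact h1.ne'
        rw [this]; field_simp
  unfold gmPrior
  conv_lhs => rw [← himg]
  rw [integral_image_eq_integral_abs_deriv_smul measurableSet_Ioo hd hinj]
  refine setIntegral_congr_fun measurableSet_Ioo fun t ht => ?_
  have ht0 := ht.1
  have h1 := hpos t ht0
  have h1' : 1 + t * (l - 1) ≠ 0 := by rw [mul_comm t]; exact h1.ne'
  have e1 : η⁻¹ * (l * t / (1 + (l - 1) * t))⁻¹ * (1 - l * t / (1 + (l - 1) * t)) =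
      (1 - t) / (η * l * t) := by
    have : 1 - l * t / (1 + (l - 1) * t) = (1 - t) / (1 + (l - 1) * t) := by
      field_simp; ring
    rw [this]; field_simp
  simp only [hg, e1, smul_eq_mul, mixWeight]
  rw [abs_of_pos (by positivity)]
  generalize gaussPdf d μ 0 ((1 - t) / (η * l * t)) = G
  generalize q (l * t / (1 + (l - 1) * t)) = z
  have e2 : (l * t / (1 + (l - 1) * t)) ^ (ν - (d : ℝ) / 2 - 1) =
      l ^ (ν - (d : ℝ) / 2) / l * t ^ (ν - (d : ℝ) / 2 - 1) *
        ((1 + (l - 1) * t) ^ ((d : ℝ) / 2 - ν - 1) * (1 + (l - 1) * t) ^ 2) := by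
    rw [Real.div_rpow (by positivity) h1.le, Real.mul_rpow hl0.le ht0.le, div_eq_mul_inv,
      ← Real.rpow_neg h1.le, ← Real.rpow_natCast, ← Real.rpow_add h1, Real.rpow_sub_one hl0.ne']
    congr 2
    push_cast; ring
  rw [e2]
  field_simp

/-- The Gaussian convolution with the prior, in closed form up to the mixing integral. -/
lemma integral_gauss_gmPrior {d : ℕ} {ν : ℝ} (hν : 0 < ν) {q : ℝ → ℝ} (hq : Measurable q)
    {l : ℝ} (hl : 1 ≤ l) {C : ℝ} (h0 : ∀ t ∈ Ioo (0 : ℝ) 1, 0 ≤ mixWeight d ν q l t)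
    (hC : ∀ t ∈ Ioo (0 : ℝ) 1, mixWeight d ν q l t ≤ C) (z : Euc d) {η : ℝ} (hη : 0 < η) :
    ∫ μ, gaussPdf d z μ ((l * η)⁻¹) * gmPrior d ν q μ η =
      ∫ t in Ioo (0 : ℝ) 1, (2 * Real.pi) ^ (-(d : ℝ) / 2) * l ^ ν * η ^ (ν - 1) *
        (t ^ (ν - 1) * Real.exp (-(η * l * t * ‖z‖ ^ 2 / 2)) * mixWeight d ν q l t) := by
  have hl0 : 0 < l := by linarith
  have hQ := measurable_mixWeight (d := d) (ν := ν) hq l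
  simp_rw [gmPrior_subst q hl _ hη, ← integral_const_mul]
  refine integral_swap_of_lintegral ?_ ?_ ?_ ?_ ?_
  · have g1 : Measurable (fun p : Euc d × ℝ => gaussPdf d z p.1 ((l * η)⁻¹)) :=
      measurable_gaussPdf (by fun_prop) (by fun_prop) (by fun_prop)
    have g2 : Measurable (fun p : Euc d × ℝ => gaussPdf d p.1 0 ((1 - p.2) / (η * l * p.2))) :=
      measurable_gaussPdf (by fun_prop) (by fun_prop) (by fun_prop)
    have g3 : Measurable (fun p : Euc d × ℝ => mixWeight d ν q l p.2) := hQ.comp measurable_snd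
    unfold Function.uncurry
    fun_prop
  · refine Filter.Eventually.of_forall fun μ => ?_
    filter_upwards [ae_restrict_mem measurableSet_Ioo] with t ht
    have ht0 := ht.1
    have ht1 : 0 < 1 - t := sub_pos.2 ht.2
    have := h0 t ht
    have := gaussPdf_pos z μ (τ := (l * η)⁻¹) (by positivity)
    have := gaussPdf_pos μ 0 (τ := (1 - t) / (η * l * t)) (by positivity)
    positivity
  · filter_upwards [ae_restrict_mem measurableSet_Ioo] with t ht
    have ht0 := ht.1
    have ht1 : 0 < 1 - t := sub_pos.2 ht.2
    have hw := h0 t ht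
    have e : ∀ μ : Euc d, gaussPdf d z μ (l * η)⁻¹ *
        (l ^ (ν - (d : ℝ) / 2) * η ^ (ν - (d : ℝ) / 2 - 1) *
        (gaussPdf d μ 0 ((1 - t) / (η * l * t)) *
          (t ^ (ν - (d : ℝ) / 2 - 1) * mixWeight d ν q l t))) =
        (l ^ (ν - (d : ℝ) / 2) * η ^ (ν - (d : ℝ) / 2 - 1) *
          (t ^ (ν - (d : ℝ) / 2 - 1) * mixWeight d ν q l t)) *
        (gaussPdf d z μ (l * η)⁻¹ * gaussPdf d μ 0 ((1 - t) / (η * l * t))) := fun μ => by ring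
    simp_rw [e]
    rw [← ofReal_integral_eq_lintegral_ofReal, integral_const_mul,
      integral_gaussPdf_mul z 0 (by positivity) (by positivity)]
    · congr 1
      have e2 : (l * η)⁻¹ + (1 - t) / (η * l * t) = (η * l * t)⁻¹ := by field_simp; ring
      rw [e2]
      unfold gaussPdf
      have e3 : (2 * Real.pi * (η * l * t)⁻¹) ^ (-(d : ℝ) / 2) =
          (2 * Real.pi) ^ (-(d : ℝ) / 2) * (η ^ ((d : ℝ) / 2) * l ^ ((d : ℝ) / 2) *
            t ^ ((d : ℝ) / 2)) := by
        rw [Real.mul_rpow (by positivity) (by positivity), Real.inv_rpow (by positivity),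
          neg_div, Real.rpow_neg (x := η * l * t) (by positivity), inv_inv,
          Real.mul_rpow (x := η * l) (by positivity) ht0.le, Real.mul_rpow hη.le hl0.le]
      have e4 : ∀ x : ℝ, 0 < x → x ^ (ν - 1) = x ^ (ν - (d : ℝ) / 2 - 1) * x ^ ((d : ℝ) / 2) :=
        fun x hx => by rw [← Real.rpow_add hx]; congr 1; ring
      have e5 : l ^ ν = l ^ (ν - (d : ℝ) / 2) * l ^ ((d : ℝ) / 2) := by
        rw [← Real.rpow_add hl0]; congr 1; ring
      have e6 : -‖z - 0‖ ^ 2 / (2 * (η * l * t)⁻¹) = -(η * l * t * ‖z‖ ^ 2 / 2) := by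
        rw [sub_zero]; field_simp
      rw [e3, e4 η hη, e4 t ht0, e5, e6]
      ring
    · exact (integrable_gaussPdf_mul z 0 (by positivity) (by positivity)).const_mul _
    · refine Filter.Eventually.of_forall fun μ => ?_
      have := gaussPdf_pos z μ (τ := (l * η)⁻¹) (by positivity)
      have := gaussPdf_pos μ 0 (τ := (1 - t) / (η * l * t)) (by positivity)
      simp only [Pi.zero_apply]
      positivity
  · filter_upwards [ae_restrict_mem measurableSet_Ioo] with t ht
    have ht0 := ht.1
    have := h0 t ht
    simp only [Pi.zero_apply]
    positivity
  · refine Integrable.const_mul ?_ _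
    have hi : IntegrableOn (fun t : ℝ => C * t ^ (ν - 1)) (Ioo 0 1) := by
      have := integrableOn_kernel (ν := ν) (α := 0) (p := 0) hν le_rfl
      simp only [neg_zero, Real.rpow_zero, mul_one] at this
      exact this.const_mul C
    refine Integrable.mono' hi ?_ ?_
    · exact Measurable.aestronglyMeasurable (by fun_prop)
    · filter_upwards [ae_restrict_mem measurableSet_Ioo] with t ht
      have ht0 := ht.1
      have h1 := h0 t ht
      have h2 := hC t ht
      have : 0 < t ^ (ν - 1) := by positivity
      rw [Real.norm_of_nonneg (by positivity)]
      have he : Real.exp (-(η * l * t * ‖z‖ ^ 2 / 2)) ≤ 1 :=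
        Real.exp_le_one_iff.2 (by simp only [Left.neg_nonpos_iff]; positivity)
      calc _ ≤ t ^ (ν - 1) * 1 * C := by gcongr
        _ = _ := by ring

lemma rhoDens_eq {d : ℕ} (hd : 0 < d) {ν : ℝ} (hν : 0 < ν) {q : ℝ → ℝ} (hq : Measurable q)
    {l : ℕ} (hl : 2 ≤ l) {C : ℝ} (h0 : ∀ t ∈ Ioo (0 : ℝ) 1, 0 ≤ mixWeight d ν q l t)
    (hC : ∀ t ∈ Ioo (0 : ℝ) 1, mixWeight d ν q l t ≤ C) (z : Euc d) {v : ℝ} (hv : 0 < v) :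
    rhoDens d (gmPrior d ν q) l z v = (2 * Real.pi) ^ (-(d : ℝ) / 2) * 2 ^ ν *
      ((l : ℝ) ^ ν * (Real.Gamma (((l : ℝ) - 1) * ((d : ℝ) / 2) + ν) /
        Real.Gamma (((l : ℝ) - 1) * ((d : ℝ) / 2))) * v ^ (-ν) *
      ∫ t in Ioo (0 : ℝ) 1, t ^ (ν - 1) * (1 + l * ‖z‖ ^ 2 / v * t) ^
        (-(((l : ℝ) - 1) * ((d : ℝ) / 2) + ν)) * mixWeight d ν q l t) := by
  have hl2 : (2 : ℝ) ≤ l := by exact_mod_cast hl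
  have hd0 : (0 : ℝ) < d := by exact_mod_cast hd
  set k : ℝ := ((l : ℝ) - 1) * ((d : ℝ) / 2) with hk
  have hk0 : 0 < k := mul_pos (by linarith) (by positivity)
  have hkd : ((l : ℝ) - 1) * d / 2 = k := by rw [hk]; ring
  have g1 := Real.Gamma_pos_of_pos hk0
  have g2 := Real.Gamma_pos_of_pos (add_pos hk0 hν)
  have hQ := measurable_mixWeight (d := d) (ν := ν) hq l
  set K : ℝ := (2 * Real.pi) ^ (-(d : ℝ) / 2) * (l : ℝ) ^ ν * (v ^ (k - 1) /
    (2 ^ k * Real.Gamma k)) with hK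
  have hK0 : 0 < K := by positivity
  have step1 : marginalDens d (gmPrior d ν q) l z v =
      ∫ η in Ioi (0 : ℝ), ∫ t in Ioo (0 : ℝ) 1, K * (t ^ (ν - 1) * mixWeight d ν q l t *
        (η ^ (k + ν - 1) * Real.exp (-((v + l * t * ‖z‖ ^ 2) / 2 * η)))) := by
    unfold marginalDens
    refine setIntegral_congr_fun measurableSet_Ioi fun η hη => ?_
    have hη : 0 < η := hη
    have e : ∀ μ : Euc d, gaussPdf d z μ ((l : ℝ) * η)⁻¹ * η *
        chiSqPdf (((l : ℝ) - 1) * d) (η * v) * gmPrior d ν q μ η =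
        η * chiSqPdf (((l : ℝ) - 1) * d) (η * v) *
          (gaussPdf d z μ ((l : ℝ) * η)⁻¹ * gmPrior d ν q μ η) := fun μ => by ring
    simp_rw [e]
    rw [integral_const_mul, integral_gauss_gmPrior hν hq (by linarith) h0 hC z hη,
      ← integral_const_mul]
    refine setIntegral_congr_fun measurableSet_Ioo fun t ht => ?_
    unfold chiSqPdf
    rw [hkd, hK, Real.mul_rpow hη.le hv.le]
    have e1 : η ^ (k + ν - 1) = η * η ^ (k - 1) * η ^ (ν - 1) := by
      rw [← Real.rpow_one_add' hη.le (by linarith), ← Real.rpow_add hη]; congr 1; ring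
    have e2 : Real.exp (-((v + l * t * ‖z‖ ^ 2) / 2 * η)) =
        Real.exp (-(η * v) / 2) * Real.exp (-(η * l * t * ‖z‖ ^ 2 / 2)) := by
      rw [← Real.exp_add]; congr 1; ring
    rw [e1, e2]
    ring
  have step2 : marginalDens d (gmPrior d ν q) l z v =
      ∫ t in Ioo (0 : ℝ) 1, K * (2 ^ (k + ν) * Real.Gamma (k + ν) * v ^ (-(k + ν))) *
        (t ^ (ν - 1) * (1 + l * ‖z‖ ^ 2 / v * t) ^ (-(k + ν)) * mixWeight d ν q l t) := by
    rw [step1]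
    refine integral_swap_of_lintegral ?_ ?_ ?_ ?_ ?_
    · have g3 : Measurable (fun p : ℝ × ℝ => mixWeight d ν q l p.2) := hQ.comp measurable_snd
      unfold Function.uncurry
      fun_prop
    · filter_upwards [ae_restrict_mem measurableSet_Ioi] with η hη
      filter_upwards [ae_restrict_mem measurableSet_Ioo] with t ht
      have hη : 0 < η := hη
      have ht0 := ht.1
      have := h0 t ht
      positivity
    · filter_upwards [ae_restrict_mem measurableSet_Ioo] with t ht
      have ht0 := ht.1
      have hw := h0 t ht
      have e : ∀ η : ℝ, K * (t ^ (ν - 1) * mixWeight d ν q l t *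
          (η ^ (k + ν - 1) * Real.exp (-((v + l * t * ‖z‖ ^ 2) / 2 * η)))) =
          (K * (t ^ (ν - 1) * mixWeight d ν q l t)) *
          (η ^ (k + ν - 1) * Real.exp (-((v + l * t * ‖z‖ ^ 2) / 2 * η))) := fun η => by ring
      simp_rw [e, fun x => ENNReal.ofReal_mul (q := x)
        (show 0 ≤ K * (t ^ (ν - 1) * mixWeight d ν q l t) by positivity)]
      rw [lintegral_const_mul _ (by fun_prop), lintegral_rpow_exp (by positivity) (by positivity),
        ← ENNReal.ofReal_mul (by positivity)]
      congr 1
      have e3 : (v + l * t * ‖z‖ ^ 2) / 2 = 2⁻¹ * (v * (1 + l * ‖z‖ ^ 2 / v * t)) := by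
        field_simp
      rw [e3, Real.mul_rpow (by positivity) (by positivity),
        Real.mul_rpow (by positivity) (by positivity), Real.inv_rpow (by positivity),
        Real.rpow_neg (x := 2) (by positivity), inv_inv]
      ring
    · filter_upwards [ae_restrict_mem measurableSet_Ioo] with t ht
      have ht0 := ht.1
      have := h0 t ht
      simp only [Pi.zero_apply]
      positivity
    · refine Integrable.const_mul ?_ _
      refine Integrable.mul_bdd (c := C) (integrableOn_kernel hν (by positivity))
        hQ.aestronglyMeasurable ?_
      filter_upwards [ae_restrict_mem measurableSet_Ioo] with t ht
      rw [Real.norm_of_nonneg (h0 t ht)]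
      exact hC t ht
  rw [rhoDens, step2, integral_const_mul]
  generalize ∫ t in Ioo (0 : ℝ) 1, t ^ (ν - 1) * (1 + l * ‖z‖ ^ 2 / v * t) ^ (-(k + ν)) *
    mixWeight d ν q l t = I
  rw [hK, Real.rpow_sub_one hv.ne', Real.rpow_add two_pos, neg_add, Real.rpow_add hv,
    Real.rpow_neg hv.le k]
  field_simp

lemma rhoRef_pos {ν l k R v : ℝ} (hν : 0 < ν) (hl : 0 < l) (hk : 0 < k) (hR : 0 ≤ R) (hv : 0 < v) :
    0 < rhoRef ν l k R v := by
  have g1 := Real.Gamma_pos_of_pos hk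
  have g2 := Real.Gamma_pos_of_pos (add_pos hk hν)
  have := betaInc_pos (ν := ν) (p := k + ν) (w := l * R / v) hν (by positivity)
  unfold rhoRef
  positivity

/-- Two-sided comparison of `ρ` with its reference version. -/
lemma rhoDens_bounds {d : ℕ} (hd : 0 < d) {ν : ℝ} (hν : 0 < ν) {q : ℝ → ℝ} (hq : Measurable q)
    {l : ℕ} (hl : 2 ≤ l) {c C : ℝ} (hc : 0 ≤ c) (h0 : ∀ t ∈ Ioo (0 : ℝ) 1, c ≤ mixWeight d ν q l t)
    (hC : ∀ t ∈ Ioo (0 : ℝ) 1, mixWeight d ν q l t ≤ C) (z : Euc d) {v : ℝ} (hv : 0 < v) :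
    (2 * Real.pi) ^ (-(d : ℝ) / 2) * 2 ^ ν * c *
        rhoRef ν l (((l : ℝ) - 1) * ((d : ℝ) / 2)) (‖z‖ ^ 2) v ≤
      rhoDens d (gmPrior d ν q) l z v ∧
    rhoDens d (gmPrior d ν q) l z v ≤ (2 * Real.pi) ^ (-(d : ℝ) / 2) * 2 ^ ν * C *
        rhoRef ν l (((l : ℝ) - 1) * ((d : ℝ) / 2)) (‖z‖ ^ 2) v := by
  have hl2 : (2 : ℝ) ≤ l := by exact_mod_cast hl
  have hd0 : (0 : ℝ) < d := by exact_mod_cast hd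
  rw [rhoDens_eq hd hν hq hl (fun t ht => hc.trans (h0 t ht)) hC z hv]
  set k : ℝ := ((l : ℝ) - 1) * ((d : ℝ) / 2) with hk
  have hk0 : 0 < k := mul_pos (by linarith) (by positivity)
  have g1 := Real.Gamma_pos_of_pos hk0
  have g2 := Real.Gamma_pos_of_pos (add_pos hk0 hν)
  have hQ := measurable_mixWeight (d := d) (ν := ν) hq l
  have hi := integrableOn_kernel (ν := ν) (α := l * ‖z‖ ^ 2 / v) (p := k + ν) hν (by positivity)
  have hi2 : IntegrableOn (fun t : ℝ => t ^ (ν - 1) * (1 + l * ‖z‖ ^ 2 / v * t) ^ (-(k + ν)) *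
      mixWeight d ν q l t) (Ioo 0 1) := by
    refine Integrable.mul_bdd (c := C) hi hQ.aestronglyMeasurable ?_
    filter_upwards [ae_restrict_mem measurableSet_Ioo] with t ht
    rw [Real.norm_of_nonneg (hc.trans (h0 t ht))]
    exact hC t ht
  have hpos : ∀ t ∈ Ioo (0 : ℝ) 1, 0 ≤ t ^ (ν - 1) * (1 + l * ‖z‖ ^ 2 / v * t) ^ (-(k + ν)) := by
    intro t ht; have := ht.1; positivity
  have hlow : c * betaInc ν (k + ν) (l * ‖z‖ ^ 2 / v) ≤ ∫ t in Ioo (0 : ℝ) 1, t ^ (ν - 1) *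
      (1 + l * ‖z‖ ^ 2 / v * t) ^ (-(k + ν)) * mixWeight d ν q l t := by
    rw [betaInc, ← integral_const_mul]
    refine setIntegral_mono_on (hi.const_mul c) hi2 measurableSet_Ioo fun t ht => ?_
    rw [mul_comm c]
    exact mul_le_mul_of_nonneg_left (h0 t ht) (hpos t ht)
  have hup : ∫ t in Ioo (0 : ℝ) 1, t ^ (ν - 1) *
      (1 + l * ‖z‖ ^ 2 / v * t) ^ (-(k + ν)) * mixWeight d ν q l t ≤
      C * betaInc ν (k + ν) (l * ‖z‖ ^ 2 / v) := by
    rw [betaInc, ← integral_const_mul]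
    refine setIntegral_mono_on hi2 (hi.const_mul C) measurableSet_Ioo fun t ht => ?_
    rw [mul_comm C]
    exact mul_le_mul_of_nonneg_left (hC t ht) (hpos t ht)
  unfold rhoRef
  set B := betaInc ν (k + ν) (l * ‖z‖ ^ 2 / v)
  set P := (2 * Real.pi) ^ (-(d : ℝ) / 2) * 2 ^ ν with hP
  set G := (l : ℝ) ^ ν * (Real.Gamma (k + ν) / Real.Gamma k) * v ^ (-ν) with hG
  have hPG : 0 ≤ P * G := by positivity
  constructor
  · calc P * c * (G * B) = P * G * (c * B) := by ring
      _ ≤ _ := by rw [← mul_assoc P G]; exact mul_le_mul_of_nonneg_left hlow hPG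
  · calc _ ≤ P * G * (C * B) := by rw [← mul_assoc P G]; exact mul_le_mul_of_nonneg_left hup hPG
      _ = _ := by ring

/-! ### Gaussian and gamma sampling measures -/

/-- The Gaussian probability measure `N(θ, τ I)`. -/
def gm {d : ℕ} (θ : Euc d) (τ : ℝ) : Measure (Euc d) :=
  volume.withDensity fun z => ENNReal.ofReal (gaussPdf d z θ τ)

/-- Density of the gamma distribution with shape `k` and rate `r`, on the positive half line. -/
def gammaDens (k r s : ℝ) : ℝ := r ^ k / Real.Gamma k * (s ^ (k - 1) * Real.exp (-(r * s)))

/-- The gamma probability measure with shape `k` and rate `r`. -/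
def gs (k r : ℝ) : Measure ℝ :=
  (volume.restrict (Ioi 0)).withDensity fun s => ENNReal.ofReal (gammaDens k r s)

lemma measurable_gauss_ofReal {d : ℕ} (θ : Euc d) (τ : ℝ) :
    Measurable fun z => ENNReal.ofReal (gaussPdf d z θ τ) :=
  (continuous_gaussPdf θ τ).measurable.ennreal_ofReal

lemma measurable_gammaDens (k r : ℝ) : Measurable fun s => gammaDens k r s := by
  unfold gammaDens; fun_prop

lemma gammaDens_nonneg {k r s : ℝ} (hk : 0 < k) (hr : 0 < r) (hs : 0 < s) :
    0 ≤ gammaDens k r s := by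
  have := Real.Gamma_pos_of_pos hk
  unfold gammaDens; positivity

lemma isProb_gm {d : ℕ} (θ : Euc d) {τ : ℝ} (hτ : 0 < τ) : IsProbabilityMeasure (gm θ τ) := by
  constructor
  rw [gm, withDensity_apply _ MeasurableSet.univ, Measure.restrict_univ,
    ← ofReal_integral_eq_lintegral_ofReal (integrable_gaussPdf θ hτ)
      (ae_of_all _ fun z => (gaussPdf_pos z θ hτ).le), integral_gaussPdf θ hτ, ENNReal.ofReal_one]

lemma isProb_gs {k r : ℝ} (hk : 0 < k) (hr : 0 < r) : IsProbabilityMeasure (gs k r) := by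
  have hG := Real.Gamma_pos_of_pos hk
  constructor
  rw [gs, withDensity_apply _ MeasurableSet.univ, Measure.restrict_univ]
  unfold gammaDens
  simp_rw [fun x => ENNReal.ofReal_mul (q := x) (show 0 ≤ r ^ k / Real.Gamma k by positivity)]
  rw [lintegral_const_mul _ (by fun_prop), lintegral_rpow_exp hk hr,
    ← ENNReal.ofReal_mul (by positivity), ENNReal.ofReal_eq_one, Real.rpow_neg hr.le]
  have : r ^ k ≠ 0 := by positivity
  field_simp

lemma lintegral_gm {d : ℕ} (θ : Euc d) (τ : ℝ) {f : Euc d → ENNReal} (hf : Measurable f) :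
    ∫⁻ z, f z ∂gm θ τ = ∫⁻ z, ENNReal.ofReal (gaussPdf d z θ τ) * f z := by
  rw [gm, lintegral_withDensity_eq_lintegral_mul _ (measurable_gauss_ofReal θ τ) hf]; rfl

lemma lintegral_gs (k r : ℝ) {f : ℝ → ENNReal} (hf : Measurable f) :
    ∫⁻ s, f s ∂gs k r = ∫⁻ s in Ioi 0, ENNReal.ofReal (gammaDens k r s) * f s := by
  rw [gs, lintegral_withDensity_eq_lintegral_mul _ (measurable_gammaDens k r).ennreal_ofReal hf]
  rfl

lemma integral_gm {d : ℕ} (θ : Euc d) {τ : ℝ} (hτ : 0 < τ) (f : Euc d → ℝ) :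
    ∫ z, f z ∂gm θ τ = ∫ z, gaussPdf d z θ τ * f z := by
  rw [gm, integral_withDensity_eq_integral_toReal_smul (measurable_gauss_ofReal θ τ)
    (ae_of_all _ fun _ => ENNReal.ofReal_lt_top)]
  simp [ENNReal.toReal_ofReal (gaussPdf_pos _ θ hτ).le]

lemma integral_gs {k r : ℝ} (hk : 0 < k) (hr : 0 < r) (f : ℝ → ℝ) :
    ∫ s, f s ∂gs k r = ∫ s in Ioi 0, gammaDens k r s * f s := by
  rw [gs, integral_withDensity_eq_integral_toReal_smul (measurable_gammaDens k r).ennreal_ofReal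
    (ae_of_all _ fun _ => ENNReal.ofReal_lt_top)]
  refine setIntegral_congr_fun measurableSet_Ioi fun s hs => ?_
  rw [ENNReal.toReal_ofReal (gammaDens_nonneg hk hr hs), smul_eq_mul]

lemma ae_gs_pos (k r : ℝ) : ∀ᵐ s ∂gs k r, 0 < s :=
  (withDensity_absolutelyContinuous _ _).ae_le (ae_restrict_mem measurableSet_Ioi)

lemma integrable_gm_iff {d : ℕ} (θ : Euc d) {τ : ℝ} (hτ : 0 < τ) {f : Euc d → ℝ} :
    Integrable f (gm θ τ) ↔ Integrable fun z => gaussPdf d z θ τ * f z := by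
  rw [gm, integrable_withDensity_iff_integrable_smul' (measurable_gauss_ofReal θ τ)
    (ae_of_all _ fun _ => ENNReal.ofReal_lt_top)]
  simp [ENNReal.toReal_ofReal (gaussPdf_pos _ θ hτ).le]

lemma integrable_gs_iff {k r : ℝ} (hk : 0 < k) (hr : 0 < r) {f : ℝ → ℝ} :
    Integrable f (gs k r) ↔ IntegrableOn (fun s => gammaDens k r s * f s) (Ioi 0) := by
  rw [gs, integrable_withDensity_iff_integrable_smul' (measurable_gammaDens k r).ennreal_ofReal
    (ae_of_all _ fun _ => ENNReal.ofReal_lt_top)]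
  refine integrableOn_congr_fun (fun s hs => ?_) measurableSet_Ioi
  rw [ENNReal.toReal_ofReal (gammaDens_nonneg hk hr hs), smul_eq_mul]

lemma lintegral_comp_smul_euc {d : ℕ} {a : ℝ} (ha : 0 < a) {f : Euc d → ENNReal}
    (hf : Measurable f) :
    ∫⁻ e, f e = ENNReal.ofReal (a ^ d) * ∫⁻ e, f (a • e) := by
  have h := Measure.map_addHaar_smul (volume : Measure (Euc d)) ha.ne'
  have h2 : ∫⁻ e, f (a • e) = ∫⁻ e, f e ∂(Measure.map (a • ·) (volume : Measure (Euc d))) :=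
    (lintegral_map hf (measurable_const_smul a)).symm
  rw [h2, h, lintegral_smul_measure, finrank_euclideanSpace_fin, smul_eq_mul, ← mul_assoc,
    ← ENNReal.ofReal_mul (by positivity), abs_of_pos (by positivity), mul_inv_cancel₀
    (by positivity), ENNReal.ofReal_one, one_mul]

lemma lintegral_comp_mul_Ioi {a : ℝ} (ha : 0 < a) (f : ℝ → ENNReal) :
    ∫⁻ s in Ioi (0 : ℝ), f s = ENNReal.ofReal a * ∫⁻ s in Ioi (0 : ℝ), f (a * s) := by
  have h := lintegral_image_eq_lintegral_abs_deriv_mul (s := Ioi (0 : ℝ)) measurableSet_Ioi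
    (f := fun s => a * s) (f' := fun _ => a)
    (fun s _ => by simpa using ((hasDerivAt_id s).const_mul a).hasDerivWithinAt)
    (fun x _ y _ h => mul_left_cancel₀ ha.ne' h) f
  have h2 : (fun s => a * s) '' Ioi (0 : ℝ) = Ioi 0 := by
    rw [image_const_mul_Ioi_zero ha] 
  rw [h2] at h
  rw [h, abs_of_pos ha, lintegral_const_mul' _ _ ENNReal.ofReal_ne_top]

/-- Change of variables from `(x̄ₙ, y)` to `(x̄ₙ₊₁, y - x̄ₙ)`, which are independent. -/
lemma map_gauss_pair {d n : ℕ} (hn : 0 < n) (μ : Euc d) {τ : ℝ} (hτ : 0 < τ)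
    {g : Euc d → Euc d → ENNReal} (hg : Measurable (Function.uncurry g)) :
    ∫⁻ x, ∫⁻ y, g x y ∂gm μ τ ∂gm μ (τ / n) =
      ∫⁻ z, ∫⁻ ε, g (z - ((n : ℝ) + 1)⁻¹ • ε) (z - ((n : ℝ) + 1)⁻¹ • ε + ε)
        ∂gm 0 (τ * ((n : ℝ) + 1) / n) ∂gm μ (τ / ((n : ℝ) + 1)) := by
  have hn' : (0 : ℝ) < n := by exact_mod_cast hn
  have hP : IsProbabilityMeasure (gm μ τ) := isProb_gm μ hτ
  have hQ : IsProbabilityMeasure (gm (0 : Euc d) (τ * ((n : ℝ) + 1) / n)) :=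
    isProb_gm 0 (by positivity)
  have hgg : ∀ {α : Type} [MeasurableSpace α] {a b : α → Euc d}, Measurable a → Measurable b →
      Measurable fun t => g (a t) (b t) := fun ha hb => hg.comp (ha.prodMk hb)
  have m1 : Measurable fun q : Euc d × Euc d => gaussPdf d q.1 μ (τ / n) :=
    measurable_gaussPdf (by fun_prop) (by fun_prop) (by fun_prop)
  have m2 : Measurable fun q : Euc d × Euc d => gaussPdf d (q.1 + q.2) μ τ :=
    measurable_gaussPdf (by fun_prop) (by fun_prop) (by fun_prop)
  have m3 : Measurable fun q : Euc d × Euc d => g q.1 (q.1 + q.2) :=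
    hgg (by fun_prop) (by fun_prop)
  rw [lintegral_gm _ _ (Measurable.lintegral_prod_right hg)]
  have e1 : ∀ x : Euc d, ENNReal.ofReal (gaussPdf d x μ (τ / n)) * ∫⁻ y, g x y ∂gm μ τ =
      ∫⁻ ε, ENNReal.ofReal (gaussPdf d x μ (τ / n)) *
        (ENNReal.ofReal (gaussPdf d (x + ε) μ τ) * g x (x + ε)) := by
    intro x
    rw [lintegral_gm _ _ (hgg (by fun_prop) (by fun_prop)),
      lintegral_const_mul' _ _ ENNReal.ofReal_ne_top,
      lintegral_add_left_eq_self (fun y => ENNReal.ofReal (gaussPdf d y μ τ) * g x y) x]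
  simp_rw [e1]
  rw [lintegral_lintegral_swap (by fun_prop)]
  have e2 : ∀ ε : Euc d, ∫⁻ x, ENNReal.ofReal (gaussPdf d x μ (τ / n)) *
        (ENNReal.ofReal (gaussPdf d (x + ε) μ τ) * g x (x + ε)) =
      ∫⁻ z, ENNReal.ofReal (gaussPdf d z μ (τ / ((n : ℝ) + 1))) *
        (ENNReal.ofReal (gaussPdf d ε 0 (τ * ((n : ℝ) + 1) / n)) *
          g (z - ((n : ℝ) + 1)⁻¹ • ε) (z - ((n : ℝ) + 1)⁻¹ • ε + ε)) := by
    intro ε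
    rw [← lintegral_sub_right_eq_self (fun x => ENNReal.ofReal (gaussPdf d x μ (τ / n)) *
        (ENNReal.ofReal (gaussPdf d (x + ε) μ τ) * g x (x + ε))) (((n : ℝ) + 1)⁻¹ • ε)]
    refine lintegral_congr fun z => ?_
    rw [← mul_assoc, ← mul_assoc, ← ENNReal.ofReal_mul (gaussPdf_pos _ _ (by positivity)).le,
      gaussPdf_pair hn _ _ _ hτ, ← ENNReal.ofReal_mul (gaussPdf_pos _ _ (by positivity)).le]
    congr 5
    · unfold newMean
      have : (n : ℝ) + 1 ≠ 0 := by positivity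
      match_scalars <;> field_simp
      ring
    · abel
  simp_rw [e2]
  have m4 : Measurable fun q : Euc d × Euc d =>
      g (q.2 - ((n : ℝ) + 1)⁻¹ • q.1) (q.2 - ((n : ℝ) + 1)⁻¹ • q.1 + q.1) :=
    hgg (by fun_prop) (by fun_prop)
  have m4' : Measurable fun q : Euc d × Euc d =>
      g (q.1 - ((n : ℝ) + 1)⁻¹ • q.2) (q.1 - ((n : ℝ) + 1)⁻¹ • q.2 + q.2) :=
    hgg (by fun_prop) (by fun_prop)
  have m5 : Measurable fun q : Euc d × Euc d => gaussPdf d q.2 μ (τ / ((n : ℝ) + 1)) :=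
    measurable_gaussPdf (by fun_prop) (by fun_prop) (by fun_prop)
  have m6 : Measurable fun q : Euc d × Euc d => gaussPdf d q.1 0 (τ * ((n : ℝ) + 1) / n) :=
    measurable_gaussPdf (by fun_prop) (by fun_prop) (by fun_prop)
  rw [lintegral_lintegral_swap (by fun_prop), lintegral_gm _ _ (Measurable.lintegral_prod_right m4')]
  refine lintegral_congr fun z => ?_
  rw [lintegral_const_mul' _ _ ENNReal.ofReal_ne_top,
    lintegral_gm _ _ (hgg (by fun_prop) (by fun_prop))]

/-! ### Independent coordinates on the sample space -/

/-- Coordinates `(x̄ₙ₊₁, (sₙ, y - x̄ₙ)) ↦ (sₙ, (x̄ₙ, y))` on the sample space. -/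
def toSample {d : ℕ} (n : ℕ) (p : Euc d × (ℝ × Euc d)) : ℝ × (Euc d × Euc d) :=
  (p.2.1, (p.1 - ((n : ℝ) + 1)⁻¹ • p.2.2, p.1 - ((n : ℝ) + 1)⁻¹ • p.2.2 + p.2.2))

lemma newMean_toSample {d n : ℕ} (p : Euc d × (ℝ × Euc d)) :
    newMean n (toSample n p).2.1 (toSample n p).2.2 = p.1 := by
  have : (n : ℝ) + 1 ≠ 0 := by positivity
  unfold newMean toSample
  match_scalars <;> field_simp
  ring

lemma newS_toSample {d n : ℕ} (p : Euc d × (ℝ × Euc d)) (s : ℝ) :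
    newS n (toSample n p).2.1 (toSample n p).2.2 s = s + n / ((n : ℝ) + 1) * ‖p.2.2‖ ^ 2 := by
  unfold newS toSample
  rw [add_sub_cancel_left]; ring

lemma measurePreserving_toSample {d n : ℕ} (hn : 0 < n) (μ : Euc d) {τ k r : ℝ} (hτ : 0 < τ)
    (hk : 0 < k) (hr : 0 < r) :
    MeasurePreserving (toSample n)
      ((gm μ (τ / ((n : ℝ) + 1))).prod ((gs k r).prod (gm 0 (τ * ((n : ℝ) + 1) / n))))
      ((gs k r).prod ((gm μ (τ / n)).prod (gm μ τ))) := by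
  have hn' : (0 : ℝ) < n := by exact_mod_cast hn
  have := isProb_gm μ hτ
  have := isProb_gs hk hr
  have := isProb_gm (d := d) 0 (show 0 < τ * ((n : ℝ) + 1) / n by positivity)
  have := isProb_gm μ (show 0 < τ / ((n : ℝ) + 1) by positivity)
  have := isProb_gm μ (show 0 < τ / n by positivity)
  have hm : Measurable (toSample (d := d) n) := by unfold toSample; fun_prop
  refine ⟨hm, Measure.ext_of_lintegral _ fun f hf => ?_⟩
  have hfm : Measurable fun p => f (toSample n p) := hf.comp hm
  rw [lintegral_map hf hm, lintegral_prod _ hfm.aemeasurable, lintegral_prod _ hf.aemeasurable]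
  have e1 : ∀ s : ℝ, ∫⁻ q : Euc d × Euc d, f (s, q) ∂(gm μ (τ / n)).prod (gm μ τ) =
      ∫⁻ z, ∫⁻ ε, f (toSample n (z, (s, ε)))
        ∂gm 0 (τ * ((n : ℝ) + 1) / n) ∂gm μ (τ / ((n : ℝ) + 1)) := by
    intro s
    rw [lintegral_prod _ (by fun_prop)]
    exact map_gauss_pair hn μ hτ (g := fun x y => f (s, (x, y)))
      (hf.comp (by fun_prop : Measurable fun q : Euc d × Euc d => (s, q)))
  have m1 : Measurable fun q : (ℝ × Euc d) × Euc d => f (toSample n (q.1.2, (q.1.1, q.2))) :=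
    (hf.comp hm).comp (by fun_prop)
  simp_rw [e1]
  symm
  rw [lintegral_lintegral_swap (Measurable.lintegral_prod_right m1).aemeasurable]
  refine lintegral_congr fun z => ?_
  exact (lintegral_prod _ (hfm.comp measurable_prodMk_left).aemeasurable).symm

/-- The multivariate Student-type measure with density `p̂_R(· | 0, 1)`. -/
def studentM (d n : ℕ) : Measure (Euc d) :=
  volume.withDensity fun e => ENNReal.ofReal (bestEquiv d n e 0 1)

/-- The factor `sₙ₊₁ / sₙ` as a function of the normalised residual `e = (y - x̄ₙ) / √sₙ`. -/
def bFac {d : ℕ} (n : ℕ) (e : Euc d) : ℝ := 1 + n / ((n : ℝ) + 1) * ‖e‖ ^ 2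

lemma bFac_pos {d n : ℕ} (e : Euc d) : 0 < bFac n e := by unfold bFac; positivity

lemma measurable_bFac {d n : ℕ} : Measurable fun e : Euc d => bFac n e := by
  unfold bFac; fun_prop

/-- Coordinates `(sₙ₊₁, e) ↦ (sₙ, y - x̄ₙ)` where `e = (y - x̄ₙ) / √sₙ` is independent of
`sₙ₊₁`. -/
def toResidual {d : ℕ} (n : ℕ) (p : ℝ × Euc d) : ℝ × Euc d :=
  (p.1 / bFac n p.2, √(p.1 / bFac n p.2) • p.2)

lemma toResidual_snd {d n : ℕ} (p : ℝ × Euc d) (hp : 0 < p.1) :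
    (toResidual n p).1 + n / ((n : ℝ) + 1) * ‖(toResidual n p).2‖ ^ 2 = p.1 := by
  have hb := bFac_pos (n := n) p.2
  unfold toResidual
  simp only [norm_smul, mul_pow, Real.norm_eq_abs, sq_abs]
  rw [Real.sq_sqrt (by positivity)]
  have h : bFac n p.2 = 1 + n / ((n : ℝ) + 1) * ‖p.2‖ ^ 2 := rfl
  calc _ = p.1 / bFac n p.2 * (1 + n / ((n : ℝ) + 1) * ‖p.2‖ ^ 2) := by ring
    _ = p.1 := by rw [← h]; field_simp

lemma measurable_bestEquiv (d n : ℕ) {α : Type*} [MeasurableSpace α] {f g : α → Euc d}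
    {h : α → ℝ} (hf : Measurable f) (hg : Measurable g) (hh : Measurable h) :
    Measurable fun a => bestEquiv d n (f a) (g a) (h a) := by
  unfold bestEquiv
  have h1 : Measurable fun a => ‖f a - g a‖ := (hf.sub hg).norm
  fun_prop

/-- Factorisation of the density of `(sₙ, y - x̄ₙ)` in the coordinates of `toResidual`; the powers
of `s / b` and `b` are Jacobian factors. -/
lemma dens_residual {d n : ℕ} (hd : 0 < d) (hn : 2 ≤ n) {σ2 : ℝ} (hσ : 0 < σ2) {s : ℝ} (hs : 0 < s)
    (e : Euc d) :
    (bFac n e)⁻¹ * (gammaDens (((n : ℝ) - 1) * (d / 2)) (2 * σ2)⁻¹ (s / bFac n e) *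
      (√(s / bFac n e) ^ d *
        gaussPdf d (√(s / bFac n e) • e) 0 (σ2 * ((n : ℝ) + 1) / n))) =
      gammaDens ((n : ℝ) * (d / 2)) (2 * σ2)⁻¹ s * bestEquiv d n e 0 1 := by
  have hn' : (2 : ℝ) ≤ n := by exact_mod_cast hn
  have hd' : (0 : ℝ) < d := by exact_mod_cast hd
  have hb := bFac_pos (n := n) e
  have hGk := Real.Gamma_pos_of_pos (show 0 < ((n : ℝ) - 1) * (d / 2) by nlinarith)
  have hGk' := Real.Gamma_pos_of_pos (show 0 < (n : ℝ) * (d / 2) by positivity)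
  have hbe : bFac n e = 1 + n / (((n : ℝ) + 1) * 1) * ‖e - 0‖ ^ 2 := by
    unfold bFac; simp
  unfold bestEquiv
  rw [← hbe]
  generalize bFac n e = b at *
  have hsq : √(s / b) ^ d = (s / b) ^ ((d : ℝ) / 2) := by
    rw [Real.sqrt_eq_rpow, ← Real.rpow_natCast, ← Real.rpow_mul (by positivity)]; congr 1; ring
  unfold gammaDens gaussPdf
  rw [hsq]
  have hex : Real.exp (-((2 * σ2)⁻¹ * (s / b))) *
      Real.exp (-‖√(s / b) • e - 0‖ ^ 2 / (2 * (σ2 * ((n : ℝ) + 1) / n))) =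
      Real.exp (-((2 * σ2)⁻¹ * s)) := by
    rw [← Real.exp_add]; congr 1
    rw [sub_zero, norm_smul, mul_pow, Real.norm_eq_abs, sq_abs, Real.sq_sqrt (by positivity)]
    have hE : ‖e‖ ^ 2 = (b - 1) * ((n : ℝ) + 1) / n := by
      rw [hbe]; simp; field_simp
    rw [hE]
    field_simp
    ring
  have e1 : ((n : ℝ) * d / 2) = n * (d / 2) := by ring
  have e2 : (((n : ℝ) - 1) * d / 2) = (n - 1) * (d / 2) := by ring
  have e3 : (-((n : ℝ) * d) / 2) = -(n * (d / 2)) := by ring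
  have e4 : (-(d : ℝ) / 2) = -(d / 2) := by ring
  rw [e1, e2, e3, e4]
  set m : ℝ := d / 2 with hm
  have p1 : (s / b) ^ (((n : ℝ) - 1) * m - 1) * (s / b) ^ m = s ^ (n * m - 1) * (b ^ (-(n * m)) * b) := by
    rw [← Real.rpow_add (by positivity), Real.div_rpow hs.le hb.le, div_eq_mul_inv,
      ← Real.rpow_neg hb.le]
    have : b ^ (-(n * m)) * b = b ^ (-(n * m) + 1) := by rw [Real.rpow_add hb, Real.rpow_one]
    rw [this]; congr 2 <;> ring
  have p2 : (2 * σ2)⁻¹ ^ (((n : ℝ) - 1) * m) * (2 * Real.pi * (σ2 * ((n : ℝ) + 1) / n)) ^ (-m) =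
      (2 * σ2)⁻¹ ^ (n * m) * (n / (((n : ℝ) + 1) * Real.pi * 1)) ^ m := by
    have h1 : (2 * σ2)⁻¹ ^ (((n : ℝ) - 1) * m) = (2 * σ2)⁻¹ ^ (n * m) * (2 * σ2) ^ m := by
      rw [show ((n : ℝ) - 1) * m = n * m - m by ring, Real.rpow_sub (by positivity),
        Real.inv_rpow (by positivity) m]
      field_simp
    rw [h1, Real.rpow_neg (by positivity), ← Real.inv_rpow (by positivity), mul_assoc,
      ← Real.mul_rpow (by positivity) (by positivity)]
    congr 2
    field_simp
  calc _ = b⁻¹ * (((2 * σ2)⁻¹ ^ (((n : ℝ) - 1) * m) *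
          (2 * Real.pi * (σ2 * ((n : ℝ) + 1) / n)) ^ (-m)) / Real.Gamma ((n - 1) * m) *
        ((s / b) ^ (((n : ℝ) - 1) * m - 1) * (s / b) ^ m) *
        (Real.exp (-((2 * σ2)⁻¹ * (s / b))) *
          Real.exp (-‖√(s / b) • e - 0‖ ^ 2 / (2 * (σ2 * ((n : ℝ) + 1) / n))))) := by ring
    _ = _ := by
      rw [hex, p1, p2]
      field_simp

lemma bestEquiv_pos {d n : ℕ} (hd : 0 < d) (hn : 2 ≤ n) (y x : Euc d) {s : ℝ} (hs : 0 < s) :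
    0 < bestEquiv d n y x s := by
  have hn' : (2 : ℝ) ≤ n := by exact_mod_cast hn
  have hd' : (0 : ℝ) < d := by exact_mod_cast hd
  have h1 := Real.Gamma_pos_of_pos (show 0 < (n : ℝ) * d / 2 by positivity)
  have h2 := Real.Gamma_pos_of_pos (show 0 < ((n : ℝ) - 1) * d / 2 by
    have : 0 < (n : ℝ) - 1 := by linarith
    positivity)
  unfold bestEquiv; positivity

instance {d n : ℕ} : SFinite (studentM d n) := by unfold studentM; infer_instance

lemma measurePreserving_toResidual {d n : ℕ} (hd : 0 < d) (hn : 2 ≤ n) {σ2 : ℝ} (hσ : 0 < σ2) :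
    MeasurePreserving (toResidual (d := d) n)
      ((gs ((n : ℝ) * (d / 2)) (2 * σ2)⁻¹).prod (studentM d n))
      ((gs (((n : ℝ) - 1) * (d / 2)) (2 * σ2)⁻¹).prod (gm 0 (σ2 * ((n : ℝ) + 1) / n))) := by
  have hn' : (2 : ℝ) ≤ n := by exact_mod_cast hn
  have hd' : (0 : ℝ) < d := by exact_mod_cast hd
  have hk : 0 < ((n : ℝ) - 1) * (d / 2) := by
    have : 0 < (n : ℝ) - 1 := by linarith
    positivity
  have hτ : 0 < σ2 * ((n : ℝ) + 1) / n := by positivity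
  have := isProb_gs (show 0 < (n : ℝ) * (d / 2) by positivity) (show 0 < (2 * σ2)⁻¹ by positivity)
  have := isProb_gs hk (show 0 < (2 * σ2)⁻¹ by positivity)
  have := isProb_gm (d := d) 0 hτ
  have hmb : Measurable fun p : ℝ × Euc d => bFac n p.2 := measurable_bFac.comp measurable_snd
  have hm : Measurable (toResidual (d := d) n) := by unfold toResidual; fun_prop
  refine ⟨hm, Measure.ext_of_lintegral _ fun f hf => ?_⟩
  have hff : ∀ {α : Type} [MeasurableSpace α] {a : α → ℝ} {b : α → Euc d}, Measurable a →
      Measurable b → Measurable fun t => f (a t, b t) := fun ha hb => hf.comp (ha.prodMk hb)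
  have hfm : Measurable fun p => f (toResidual n p) := hf.comp hm
  rw [lintegral_map hf hm, lintegral_prod_symm _ hfm.aemeasurable, lintegral_prod _ hf.aemeasurable]
  -- right-hand side: scale the Gaussian variable by `√s`
  have e1 : ∀ s ∈ Ioi (0 : ℝ), ENNReal.ofReal (gammaDens (((n : ℝ) - 1) * (d / 2)) (2 * σ2)⁻¹ s) *
      ∫⁻ ε, f (s, ε) ∂gm 0 (σ2 * ((n : ℝ) + 1) / n) =
      ∫⁻ e : Euc d, ENNReal.ofReal (gammaDens (((n : ℝ) - 1) * (d / 2)) (2 * σ2)⁻¹ s *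
        (√s ^ d * gaussPdf d (√s • e) 0 (σ2 * ((n : ℝ) + 1) / n))) * f (s, √s • e) := by
    intro s hs
    have hs' : (0 : ℝ) < s := hs
    have hc : 0 < √s := Real.sqrt_pos.2 hs'
    have hm0 : Measurable fun z => ENNReal.ofReal (gaussPdf d z 0 (σ2 * ((n : ℝ) + 1) / n)) *
        f (s, z) := (measurable_gauss_ofReal _ _).mul (hff (by fun_prop) (by fun_prop))
    rw [lintegral_gm _ _ (hff (by fun_prop) (by fun_prop)), lintegral_comp_smul_euc hc hm0, ← mul_assoc,
      ← ENNReal.ofReal_mul (gammaDens_nonneg hk (by positivity) hs'),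
      ← lintegral_const_mul' _ _ ENNReal.ofReal_ne_top]
    refine lintegral_congr fun e => ?_
    rw [← mul_assoc, ← ENNReal.ofReal_mul (mul_nonneg (gammaDens_nonneg hk (by positivity) hs')
      (by positivity)), mul_assoc]
  rw [lintegral_gs _ _ (Measurable.lintegral_prod_right' hf), setLIntegral_congr_fun
    measurableSet_Ioi e1]
  have m1 : Measurable fun p : ℝ × Euc d => gammaDens (((n : ℝ) - 1) * (d / 2)) (2 * σ2)⁻¹ p.1 :=
    (measurable_gammaDens _ _).comp measurable_fst
  have m2 : Measurable fun p : ℝ × Euc d => gaussPdf d (√p.1 • p.2) 0 (σ2 * ((n : ℝ) + 1) / n) :=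
    measurable_gaussPdf (by fun_prop) (by fun_prop) (by fun_prop)
  have m3 : Measurable fun p : ℝ × Euc d => f (p.1, √p.1 • p.2) := hff (by fun_prop) (by fun_prop)
  symm
  rw [lintegral_lintegral_swap (by fun_prop)]
  symm
  -- left-hand side: unfold the density of the Student measure
  rw [studentM, lintegral_withDensity_eq_lintegral_mul _
    (measurable_bestEquiv d n (f := fun e => e) measurable_id measurable_const
      measurable_const).ennreal_ofReal
    (Measurable.lintegral_prod_left' hfm)]
  refine lintegral_congr fun e => ?_
  have hb := bFac_pos (n := n) e
  rw [lintegral_comp_mul_Ioi (inv_pos.2 hb), ← lintegral_const_mul' _ _ ENNReal.ofReal_ne_top,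
    Pi.mul_apply, lintegral_gs _ _ (by fun_prop),
    ← lintegral_const_mul' _ _ ENNReal.ofReal_ne_top]
  refine setLIntegral_congr_fun measurableSet_Ioi fun s hs => ?_
  have hs' : (0 : ℝ) < s := hs
  have hgn := gammaDens_nonneg (show 0 < (n : ℝ) * (d / 2) by positivity)
    (show 0 < (2 * σ2)⁻¹ by positivity) hs'
  have h1 : (bFac n e)⁻¹ * s = s / bFac n e := by ring
  simp only [h1]
  rw [← mul_assoc, ← mul_assoc, ← ENNReal.ofReal_mul (bestEquiv_pos hd hn e 0 one_pos).le,
    ← ENNReal.ofReal_mul (inv_pos.2 hb).le, dens_residual hd hn hσ hs', mul_comm (bestEquiv d n e 0 1)]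
  rfl

/-! ### Moments and logarithmic moments -/

lemma isProb_studentM {d n : ℕ} (hd : 0 < d) (hn : 2 ≤ n) :
    IsProbabilityMeasure (studentM d n) := by
  have hn' : (2 : ℝ) ≤ n := by exact_mod_cast hn
  have hd' : (0 : ℝ) < d := by exact_mod_cast hd
  have hk : 0 < ((n : ℝ) - 1) * (d / 2) := by
    have : 0 < (n : ℝ) - 1 := by linarith
    positivity
  have h := measurePreserving_toResidual (d := d) hd hn one_pos
  have i1 := isProb_gs (show 0 < (n : ℝ) * (d / 2) by positivity)
    (show 0 < (2 * (1 : ℝ))⁻¹ by positivity)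
  have i2 := isProb_gs hk (show 0 < (2 * (1 : ℝ))⁻¹ by positivity)
  have i3 := isProb_gm (d := d) 0 (show 0 < 1 * ((n : ℝ) + 1) / n by positivity)
  have h1 := h.measure_preimage MeasurableSet.univ.nullMeasurableSet
  rw [preimage_univ, measure_univ (μ := (gs _ _).prod (gm _ _)), ← univ_prod_univ,
    Measure.prod_prod, measure_univ (μ := gs _ _), one_mul] at h1
  exact ⟨h1⟩

lemma integrable_rpow_gs {k r a : ℝ} (hk : 0 < k) (hr : 0 < r) (ha : 0 < k + a) :
    Integrable (fun s : ℝ => s ^ a) (gs k r) := by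
  rw [integrable_gs_iff hk hr]
  have h := (integrableOn_rpow_exp ha hr).const_mul (r ^ k / Real.Gamma k)
  refine IntegrableOn.congr_fun h (fun s hs => ?_) measurableSet_Ioi
  have hs' : (0 : ℝ) < s := hs
  unfold gammaDens
  rw [show k + a - 1 = (k - 1) + a by ring, Real.rpow_add hs']
  ring

lemma integrable_id_gs {k r : ℝ} (hk : 0 < k) (hr : 0 < r) :
    Integrable (fun s : ℝ => s) (gs k r) := by
  simpa using integrable_rpow_gs (a := 1) hk hr (by linarith)

lemma integrable_log_gs {k r : ℝ} (hk : 0 < k) (hr : 0 < r) :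
    Integrable (fun s : ℝ => Real.log s) (gs k r) := by
  have h1 := (integrable_rpow_gs (a := k / 2) hk hr (by linarith)).div_const (k / 2)
  have h2 := (integrable_rpow_gs (a := -(k / 2)) hk hr (by linarith)).div_const (k / 2)
  refine (h1.add h2).mono' Real.measurable_log.aestronglyMeasurable ?_
  filter_upwards [ae_gs_pos k r] with s hs
  have a1 := Real.log_le_rpow_div hs.le (show 0 < k / 2 by positivity)
  have a2 := Real.log_le_rpow_div (inv_pos.2 hs).le (show 0 < k / 2 by positivity)
  rw [Real.log_inv, Real.inv_rpow hs.le, ← Real.rpow_neg hs.le] at a2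
  have p1 : 0 ≤ s ^ (k / 2) / (k / 2) := by positivity
  have p2 : 0 ≤ s ^ (-(k / 2)) / (k / 2) := by positivity
  rw [Real.norm_eq_abs, Pi.add_apply, abs_le]
  constructor <;> linarith

lemma hasDerivAt_realGamma {k : ℝ} (hk : 0 < k) :
    HasDerivAt Real.Gamma (∫ t in Ioi (0 : ℝ), t ^ (k - 1) * (Real.log t * Real.exp (-t))) k := by
  have h1 : HasDerivAt Complex.Gamma
      (∫ t in Ioi (0 : ℝ), (t : ℂ) ^ ((k : ℂ) - 1) * (Real.log t * Real.exp (-t))) (k : ℂ) := by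
    refine (Complex.hasDerivAt_GammaIntegral (s := k) (by simpa using hk)).congr_of_eventuallyEq ?_
    have : {z : ℂ | 0 < z.re} ∈ nhds (k : ℂ) :=
      (isOpen_lt continuous_const Complex.continuous_re).mem_nhds (by simpa using hk)
    filter_upwards [this] with z hz
    exact Complex.Gamma_eq_integral hz
  have h2 := h1.real_of_complex
  have h3 : (∫ t in Ioi (0 : ℝ), (t : ℂ) ^ ((k : ℂ) - 1) * (Real.log t * Real.exp (-t))) =
      ((∫ t in Ioi (0 : ℝ), t ^ (k - 1) * (Real.log t * Real.exp (-t)) : ℝ) : ℂ) := by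
    rw [← integral_complex_ofReal]
    refine setIntegral_congr_fun measurableSet_Ioi fun t ht => ?_
    have ht' : (0 : ℝ) ≤ t := le_of_lt ht
    push_cast
    rw [Complex.ofReal_cpow ht']
    push_cast
    rfl
  rw [h3, Complex.ofReal_re] at h2
  exact h2

lemma integral_log_gs {k r : ℝ} (hk : 0 < k) (hr : 0 < r) :
    ∫ s, Real.log s ∂gs k r = digamma k - Real.log r := by
  have hG := Real.Gamma_pos_of_pos hk
  have hdig : digamma k =
      (∫ t in Ioi (0 : ℝ), t ^ (k - 1) * (Real.log t * Real.exp (-t))) / Real.Gamma k :=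
    ((hasDerivAt_realGamma hk).log hG.ne').deriv
  have i1 : IntegrableOn (fun t : ℝ => t ^ (k - 1) * (Real.log t * Real.exp (-t))) (Ioi 0) := by
    have h := ((integrable_gs_iff hk one_pos).1 (integrable_log_gs hk one_pos)).const_mul
      (Real.Gamma k)
    refine IntegrableOn.congr_fun h (fun s hs => ?_) measurableSet_Ioi
    simp only [gammaDens, Real.one_rpow, one_mul]
    field_simp
  have i2 := integrableOn_rpow_exp hk one_pos
  simp only [one_mul] at i2
  have hGe : ∫ t in Ioi (0 : ℝ), t ^ (k - 1) * Real.exp (-t) = Real.Gamma k := by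
    rw [Real.Gamma_eq_integral hk]
    exact setIntegral_congr_fun measurableSet_Ioi fun t _ => mul_comm _ _
  have hg := integral_comp_mul_left_Ioi
    (fun u : ℝ => u ^ (k - 1) * (Real.log u * Real.exp (-u)) -
      Real.log r * (u ^ (k - 1) * Real.exp (-u))) 0 hr
  rw [mul_zero, integral_sub i1 (i2.const_mul _), integral_const_mul, hGe, smul_eq_mul] at hg
  rw [integral_gs hk hr]
  have : ∀ s ∈ Ioi (0 : ℝ), gammaDens k r s * Real.log s = r / Real.Gamma k *
      ((r * s) ^ (k - 1) * (Real.log (r * s) * Real.exp (-(r * s))) -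
        Real.log r * ((r * s) ^ (k - 1) * Real.exp (-(r * s)))) := by
    intro s hs
    have hs' : (0 : ℝ) < s := hs
    have hrk : r ^ k = r * r ^ (k - 1) := by
      rw [Real.rpow_sub_one hr.ne']; field_simp
    unfold gammaDens
    rw [Real.mul_rpow hr.le hs'.le, Real.log_mul hr.ne' hs'.ne', hrk]
    ring
  rw [setIntegral_congr_fun measurableSet_Ioi this, integral_const_mul, hg, hdig]
  field_simp

/-- The logarithm of `sₙ₊₁ / sₙ` has mean `ψ(nd/2) - ψ((n-1)d/2)`. -/
lemma integrable_log_bFac {d n : ℕ} (hd : 0 < d) (hn : 2 ≤ n) :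
    Integrable (fun e => Real.log (bFac n e)) (studentM d n) ∧
      ∫ e, Real.log (bFac n e) ∂studentM d n =
        digamma ((n : ℝ) * (d / 2)) - digamma (((n : ℝ) - 1) * (d / 2)) := by
  have hn' : (2 : ℝ) ≤ n := by exact_mod_cast hn
  have hd' : (0 : ℝ) < d := by exact_mod_cast hd
  have hk : 0 < ((n : ℝ) - 1) * (d / 2) := by
    have : 0 < (n : ℝ) - 1 := by linarith
    positivity
  have hk' : 0 < (n : ℝ) * (d / 2) := by positivity
  have hr : 0 < (2 * (1 : ℝ))⁻¹ := by positivity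
  have h := measurePreserving_toResidual (d := d) hd hn one_pos
  have i1 := isProb_gs hk' hr
  have i2 := isProb_gs hk hr
  have i3 := isProb_gm (d := d) 0 (show 0 < 1 * ((n : ℝ) + 1) / n by positivity)
  have i4 := isProb_studentM (d := d) hd hn
  -- `log b = log s' - log (s' / b)`, and `s' / b` has a gamma law
  have j1 : Integrable (fun p : ℝ × Euc d => Real.log p.1)
      ((gs (((n : ℝ) - 1) * (d / 2)) (2 * 1)⁻¹).prod (gm 0 (1 * ((n : ℝ) + 1) / n))) :=
    (integrable_log_gs hk hr).comp_fst _
  have j2 : Integrable (fun p : ℝ × Euc d => Real.log (toResidual n p).1)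
      ((gs ((n : ℝ) * (d / 2)) (2 * 1)⁻¹).prod (studentM d n)) :=
    h.integrable_comp_of_integrable j1
  have j3 : Integrable (fun p : ℝ × Euc d => Real.log p.1)
      ((gs ((n : ℝ) * (d / 2)) (2 * 1)⁻¹).prod (studentM d n)) :=
    (integrable_log_gs hk' hr).comp_fst _
  have hae : ∀ᵐ p ∂((gs ((n : ℝ) * (d / 2)) (2 * 1)⁻¹).prod (studentM d n)),
      Real.log p.1 - Real.log (toResidual n p).1 = Real.log (bFac n p.2) := by
    have : ∀ᵐ p ∂((gs ((n : ℝ) * (d / 2)) (2 * 1)⁻¹).prod (studentM d n)), 0 < p.1 :=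
      Measure.quasiMeasurePreserving_fst.ae (ae_gs_pos _ _)
    filter_upwards [this] with p hp
    simp only [toResidual]
    rw [Real.log_div hp.ne' (bFac_pos _).ne']; ring
  have j4 : Integrable (fun p : ℝ × Euc d => Real.log (bFac n p.2))
      ((gs ((n : ℝ) * (d / 2)) (2 * 1)⁻¹).prod (studentM d n)) := (j3.sub j2).congr hae
  have e1 : ∫ p, Real.log (toResidual n p).1
      ∂((gs ((n : ℝ) * (d / 2)) (2 * 1)⁻¹).prod (studentM d n)) =
      digamma (((n : ℝ) - 1) * (d / 2)) - Real.log (2 * 1)⁻¹ := by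
    have := integral_map (μ := (gs ((n : ℝ) * (d / 2)) (2 * 1)⁻¹).prod (studentM d n))
      h.measurable.aemeasurable (f := fun p : ℝ × Euc d => Real.log p.1)
      (Measurable.aestronglyMeasurable (by fun_prop))
    rw [← this, h.map_eq, integral_fun_fst, integral_log_gs hk hr, probReal_univ, one_smul]
  have e2 : ∫ p, Real.log p.1
      ∂((gs ((n : ℝ) * (d / 2)) (2 * 1)⁻¹).prod (studentM d n)) =
      digamma ((n : ℝ) * (d / 2)) - Real.log (2 * 1)⁻¹ := by
    rw [integral_fun_fst, integral_log_gs hk' hr, probReal_univ, one_smul]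
  have e3 := integral_congr_ae hae
  rw [integral_sub j3 j2, e1, e2, integral_fun_snd (fun e : Euc d => Real.log (bFac n e)),
    probReal_univ, one_smul] at e3
  refine ⟨j4.of_comp_snd (NeZero.ne _), ?_⟩
  linarith

lemma integrable_normSq_gm {d : ℕ} (θ : Euc d) {τ : ℝ} (hτ : 0 < τ) :
    Integrable (fun z : Euc d => ‖z‖ ^ 2) (gm θ τ) := by
  have := isProb_gm θ hτ
  have h1 : Integrable (fun z : Euc d => ‖z - θ‖ ^ 2) (gm θ τ) := by
    rw [integrable_gm_iff θ hτ]
    refine ((integrable_gaussPdf θ (show 0 < 2 * τ by positivity)).const_mul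
      (4 * τ * 2 ^ ((d : ℝ) / 2))).mono' ?_ (ae_of_all _ fun z => ?_)
    · exact ((continuous_gaussPdf θ τ).mul (by fun_prop)).aestronglyMeasurable
    · rw [Real.norm_eq_abs, abs_of_nonneg (mul_nonneg (gaussPdf_pos z θ hτ).le (by positivity))]
      unfold gaussPdf
      have e1 : (2 * Real.pi * (2 * τ)) ^ (-(d : ℝ) / 2) =
          (2 * Real.pi * τ) ^ (-(d : ℝ) / 2) * 2 ^ (-(d : ℝ) / 2) := by
        rw [← Real.mul_rpow (by positivity) (by positivity)]; congr 1; ring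
      have e2 : (2 : ℝ) ^ ((d : ℝ) / 2) * 2 ^ (-(d : ℝ) / 2) = 1 := by
        rw [← Real.rpow_add (by positivity)]; ring_nf; simp
      set u := ‖z - θ‖ ^ 2 with hu
      have hE : Real.exp (-u / (2 * τ)) =
          Real.exp (-u / (2 * (2 * τ))) * Real.exp (-(u / (4 * τ))) := by
        rw [← Real.exp_add]; congr 1; field_simp; ring
      have hx : Real.exp (-(u / (4 * τ))) * u ≤ 4 * τ := by
        have h3 := Real.add_one_le_exp (u / (4 * τ))
        rw [Real.exp_neg, inv_mul_le_iff₀ (Real.exp_pos _)]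
        have h4 : u = u / (4 * τ) * (4 * τ) := by field_simp
        nlinarith
      rw [e1, hE]
      calc _ = (2 * Real.pi * τ) ^ (-(d : ℝ) / 2) * Real.exp (-u / (2 * (2 * τ))) *
            (Real.exp (-(u / (4 * τ))) * u) := by ring
        _ ≤ (2 * Real.pi * τ) ^ (-(d : ℝ) / 2) * Real.exp (-u / (2 * (2 * τ))) * (4 * τ) := by
            gcongr
        _ = (2 * Real.pi * τ) ^ (-(d : ℝ) / 2) * Real.exp (-u / (2 * (2 * τ))) * (4 * τ) *
            ((2 : ℝ) ^ ((d : ℝ) / 2) * 2 ^ (-(d : ℝ) / 2)) := by rw [e2, mul_one]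
        _ = _ := by ring
  refine ((h1.const_mul 2).add (integrable_const (2 * ‖θ‖ ^ 2))).mono'
    (Continuous.aestronglyMeasurable (by fun_prop)) (ae_of_all _ fun z => ?_)
  have h3 : ‖z‖ ≤ ‖z - θ‖ + ‖θ‖ := by simpa using norm_add_le (z - θ) θ
  rw [Real.norm_eq_abs, abs_of_nonneg (by positivity), Pi.add_apply]
  nlinarith [norm_nonneg z, norm_nonneg θ, norm_nonneg (z - θ), sq_nonneg (‖z - θ‖ - ‖θ‖)]

/-! ### Integrability of the logarithms and the risk as an expectation -/

/-- The joint law of `(sₙ, (x̄ₙ, y))`. -/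
def sampleM (d n : ℕ) (μ0 : Euc d) (σ2 : ℝ) : Measure (ℝ × (Euc d × Euc d)) :=
  (gs (((n : ℝ) - 1) * (d / 2)) (2 * σ2)⁻¹).prod ((gm μ0 (σ2 / n)).prod (gm μ0 σ2))

/-- An integrable function which, up to a constant factor, dominates all logarithms that occur. -/
def dom {d : ℕ} (p : ℝ × (Euc d × Euc d)) : ℝ :=
  1 + |Real.log p.1| + p.1 + ‖p.2.1‖ ^ 2 + ‖p.2.2‖ ^ 2

lemma shape_pos {d n : ℕ} (hd : 0 < d) (hn : 2 ≤ n) : 0 < ((n : ℝ) - 1) * ((d : ℝ) / 2) := by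
  have hn' : (2 : ℝ) ≤ n := by exact_mod_cast hn
  have hd' : (0 : ℝ) < d := by exact_mod_cast hd
  have : 0 < (n : ℝ) - 1 := by linarith
  positivity

lemma isProb_sampleM {d n : ℕ} (hd : 0 < d) (hn : 2 ≤ n) (μ0 : Euc d) {σ2 : ℝ} (hσ : 0 < σ2) :
    IsProbabilityMeasure (sampleM d n μ0 σ2) := by
  have hn' : (0 : ℝ) < n := by exact_mod_cast (by omega : 0 < n)
  have := isProb_gs (shape_pos hd hn) (show 0 < (2 * σ2)⁻¹ by positivity)
  have := isProb_gm μ0 hσ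
  have := isProb_gm μ0 (show 0 < σ2 / n by positivity)
  unfold sampleM; infer_instance

lemma ae_sampleM_pos {d n : ℕ} (μ0 : Euc d) (σ2 : ℝ) : ∀ᵐ p ∂sampleM d n μ0 σ2, 0 < p.1 :=
  Measure.quasiMeasurePreserving_fst.ae (ae_gs_pos _ _)

lemma integrable_dom {d n : ℕ} (hd : 0 < d) (hn : 2 ≤ n) (μ0 : Euc d) {σ2 : ℝ} (hσ : 0 < σ2) :
    Integrable dom (sampleM d n μ0 σ2) := by
  have hn' : (0 : ℝ) < n := by exact_mod_cast (by omega : 0 < n)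
  have hr : 0 < (2 * σ2)⁻¹ := by positivity
  have i1 := isProb_gs (shape_pos hd hn) hr
  have i2 := isProb_gm μ0 hσ
  have i3 := isProb_gm μ0 (show 0 < σ2 / n by positivity)
  have i4 := isProb_sampleM hd hn μ0 hσ
  have h1 : Integrable (fun p : ℝ × (Euc d × Euc d) => |Real.log p.1|) (sampleM d n μ0 σ2) :=
    (integrable_log_gs (shape_pos hd hn) hr).abs.comp_fst _
  have h2 : Integrable (fun p : ℝ × (Euc d × Euc d) => p.1) (sampleM d n μ0 σ2) :=
    (integrable_id_gs (shape_pos hd hn) hr).comp_fst _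
  have h3 : Integrable (fun p : ℝ × (Euc d × Euc d) => ‖p.2.1‖ ^ 2) (sampleM d n μ0 σ2) :=
    ((integrable_normSq_gm μ0 (show 0 < σ2 / n by positivity)).comp_fst (gm μ0 σ2)).comp_snd
      (gs (((n : ℝ) - 1) * (d / 2)) (2 * σ2)⁻¹)
  have h4 : Integrable (fun p : ℝ × (Euc d × Euc d) => ‖p.2.2‖ ^ 2) (sampleM d n μ0 σ2) :=
    ((integrable_normSq_gm μ0 hσ).comp_snd (gm μ0 (σ2 / n))).comp_snd
      (gs (((n : ℝ) - 1) * (d / 2)) (2 * σ2)⁻¹)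
  exact ((((integrable_const 1).add h1).add h2).add h3).add h4

lemma integrable_of_dom {d n : ℕ} (hd : 0 < d) (hn : 2 ≤ n) {μ0 : Euc d} {σ2 : ℝ} (hσ : 0 < σ2)
    {F : ℝ × (Euc d × Euc d) → ℝ} (hF : AEStronglyMeasurable F (sampleM d n μ0 σ2)) {C : ℝ}
    (hC : ∀ p, 0 < p.1 → |F p| ≤ C * dom p) : Integrable F (sampleM d n μ0 σ2) :=
  ((integrable_dom hd hn μ0 hσ).const_mul C).mono' hF
    ((ae_sampleM_pos μ0 σ2).mono fun p hp => hC p hp)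

lemma chiSqPdf_eq {d n : ℕ} {σ2 s : ℝ} (hσ : 0 < σ2) (hs : 0 < s) :
    chiSqPdf (((n : ℝ) - 1) * d) (s / σ2) / σ2 =
      gammaDens (((n : ℝ) - 1) * (d / 2)) (2 * σ2)⁻¹ s := by
  unfold chiSqPdf gammaDens
  rw [show ((n : ℝ) - 1) * d / 2 = (n - 1) * (d / 2) by ring]
  set k := ((n : ℝ) - 1) * (d / 2)
  have h1 : (s / σ2) ^ (k - 1) = s ^ (k - 1) / (σ2 ^ k / σ2) := by
    rw [Real.div_rpow hs.le hσ.le, Real.rpow_sub_one hσ.ne']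
  have h2 : (2 * σ2)⁻¹ ^ k = (2 ^ k * σ2 ^ k)⁻¹ := by
    rw [Real.inv_rpow (by positivity), Real.mul_rpow (by positivity) hσ.le]
  have h3 : -(s / σ2) / 2 = -((2 * σ2)⁻¹ * s) := by field_simp
  rw [h1, h2, h3]
  field_simp

lemma klRisk_iter {d n : ℕ} (hd : 0 < d) (hn : 2 ≤ n) (μ0 : Euc d) {σ2 : ℝ} (hσ : 0 < σ2)
    (pred : Euc d → Euc d → ℝ → ℝ) :
    klRisk d n μ0 σ2 pred = ∫ s, ∫ x, ∫ y, Real.log (gaussPdf d y μ0 σ2 / pred y x s)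
      ∂gm μ0 σ2 ∂gm μ0 (σ2 / n) ∂gs (((n : ℝ) - 1) * (d / 2)) (2 * σ2)⁻¹ := by
  have hn' : (0 : ℝ) < n := by exact_mod_cast (by omega : 0 < n)
  rw [integral_gs (shape_pos hd hn) (show 0 < (2 * σ2)⁻¹ by positivity), klRisk]
  refine setIntegral_congr_fun measurableSet_Ioi fun s hs => ?_
  rw [integral_gm μ0 (show 0 < σ2 / n by positivity), ← integral_const_mul]
  refine integral_congr_ae (ae_of_all _ fun x => ?_)
  simp only [integral_gm μ0 hσ]
  rw [chiSqPdf_eq hσ hs]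
  ring

lemma klRisk_eq {d n : ℕ} (hd : 0 < d) (hn : 2 ≤ n) (μ0 : Euc d) {σ2 : ℝ} (hσ : 0 < σ2)
    (pred : Euc d → Euc d → ℝ → ℝ)
    (hi : Integrable (fun p : ℝ × (Euc d × Euc d) =>
      Real.log (gaussPdf d p.2.2 μ0 σ2 / pred p.2.2 p.2.1 p.1)) (sampleM d n μ0 σ2)) :
    klRisk d n μ0 σ2 pred = ∫ p : ℝ × (Euc d × Euc d),
      Real.log (gaussPdf d p.2.2 μ0 σ2 / pred p.2.2 p.2.1 p.1) ∂sampleM d n μ0 σ2 := by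
  have hn' : (0 : ℝ) < n := by exact_mod_cast (by omega : 0 < n)
  have i1 := isProb_gs (shape_pos hd hn) (show 0 < (2 * σ2)⁻¹ by positivity)
  have i2 := isProb_gm μ0 hσ
  have i3 := isProb_gm μ0 (show 0 < σ2 / n by positivity)
  unfold sampleM at hi ⊢
  rw [klRisk_iter hd hn μ0 hσ, integral_prod _ hi]
  refine integral_congr_ae ?_
  filter_upwards [hi.prod_right_ae] with s hs
  rw [integral_prod _ hs]

lemma betaInc_bounds {ν p w : ℝ} (hν : 0 < ν) (hp : 0 ≤ p) (hw : 0 ≤ w) :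
    (1 + w) ^ (-p) * ν⁻¹ ≤ betaInc ν p w ∧ betaInc ν p w ≤ ν⁻¹ := by
  have h0 : ∫ t in (0 : ℝ)..1, t ^ (ν - 1) = ν⁻¹ := by
    rw [integral_rpow (Or.inl (by linarith))]
    simp [hν.ne']
  have hi0 : IntervalIntegrable (fun t : ℝ => t ^ (ν - 1)) volume 0 1 :=
    intervalIntegral.intervalIntegrable_rpow' (by linarith)
  have hi := intervalIntegrable_kernel (p := p) hν hw zero_le_one
  rw [betaInc_eq, ← h0]
  constructor
  · rw [← intervalIntegral.integral_const_mul]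
    refine intervalIntegral.integral_mono_on zero_le_one (hi0.const_mul _) hi fun t ht => ?_
    have ht0 : 0 ≤ t := ht.1
    rw [mul_comm]
    refine mul_le_mul_of_nonneg_left ?_ (by positivity)
    refine Real.rpow_le_rpow_of_nonpos (by positivity) ?_ (by linarith)
    nlinarith [ht.2]
  · refine intervalIntegral.integral_mono_on zero_le_one hi hi0 fun t ht => ?_
    have ht0 : 0 ≤ t := ht.1
    refine mul_le_of_le_one_right (by positivity) ?_
    exact Real.rpow_le_one_of_one_le_of_nonpos (by nlinarith [mul_nonneg hw ht0]) (by linarith)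

/-- Growth bound for `log rhoRef`. -/
lemma abs_log_rhoRef_le {ν l k : ℝ} (hν : 0 < ν) (hl : 0 < l) (hk : 0 < k) :
    ∃ C : ℝ, 0 ≤ C ∧ ∀ R v : ℝ, 0 ≤ R → 0 < v →
      |Real.log (rhoRef ν l k R v)| ≤ C * (1 + |Real.log v| + v + R) := by
  have hG1 := Real.Gamma_pos_of_pos hk
  have hG2 := Real.Gamma_pos_of_pos (add_pos hk hν)
  set A := l ^ ν * (Real.Gamma (k + ν) / Real.Gamma k) with hA
  have hA0 : 0 < A := by positivity
  refine ⟨|Real.log A| + ν + |Real.log ν| + (k + ν) * (2 + l), by positivity, fun R v hR hv => ?_⟩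
  have hw : 0 ≤ l * R / v := by positivity
  have hB := betaInc_pos (p := k + ν) hν hw
  obtain ⟨b1, b2⟩ := betaInc_bounds (p := k + ν) hν (by linarith) hw
  have e : Real.log (rhoRef ν l k R v) =
      Real.log A + -ν * Real.log v + Real.log (betaInc ν (k + ν) (l * R / v)) := by
    rw [rhoRef, ← hA, Real.log_mul (by positivity) hB.ne', Real.log_mul hA0.ne' (by positivity),
      Real.log_rpow hv]
  have l1 := Real.log_le_log (by positivity) b1
  have l2 := Real.log_le_log hB b2
  rw [Real.log_mul (by positivity) (by positivity), Real.log_rpow (by positivity), Real.log_inv] at l1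
  rw [Real.log_inv] at l2
  have l3 : Real.log (1 + l * R / v) ≤ v + l * R + |Real.log v| := by
    have : 1 + l * R / v = (v + l * R) / v := by field_simp
    have h4 : 0 < v + l * R := by positivity
    rw [this, Real.log_div h4.ne' hv.ne']
    have := Real.log_le_sub_one_of_pos h4
    have := neg_abs_le (Real.log v)
    linarith
  have l4 : |Real.log (betaInc ν (k + ν) (l * R / v))| ≤
      |Real.log ν| + (k + ν) * (v + l * R + |Real.log v|) := by
    have h5 : (k + ν) * Real.log (1 + l * R / v) ≤ (k + ν) * (v + l * R + |Real.log v|) := by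
      gcongr
    have h6 := neg_abs_le (Real.log ν)
    have h7 := le_abs_self (Real.log ν)
    have h8 : 0 ≤ (k + ν) * (v + l * R + |Real.log v|) := by positivity
    rw [abs_le]; constructor <;> linarith
  have l5 : |Real.log (rhoRef ν l k R v)| ≤ |Real.log A| + ν * |Real.log v| +
      (|Real.log ν| + (k + ν) * (v + l * R + |Real.log v|)) := by
    rw [e]
    refine (abs_add_le _ _).trans (add_le_add ((abs_add_le _ _).trans ?_) l4)
    rw [abs_mul, abs_neg, abs_of_pos hν]
  refine l5.trans ?_
  set D := 1 + |Real.log v| + v + R with hD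
  have d0 := abs_nonneg (Real.log v)
  have d1 : 1 ≤ D := by linarith
  have d2 : |Real.log v| ≤ D := by linarith
  have d3 : v + l * R + |Real.log v| ≤ (2 + l) * D := by
    have : l * R ≤ l * D := by gcongr; linarith
    linarith
  have q1 : |Real.log A| ≤ |Real.log A| * D := le_mul_of_one_le_right (abs_nonneg _) d1
  have q2 : ν * |Real.log v| ≤ ν * D := by gcongr
  have q3 : |Real.log ν| ≤ |Real.log ν| * D := le_mul_of_one_le_right (abs_nonneg _) d1
  have q4 : (k + ν) * (v + l * R + |Real.log v|) ≤ (k + ν) * ((2 + l) * D) := by gcongr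
  nlinarith

lemma newS_pos {d n : ℕ} (x y : Euc d) {s : ℝ} (hs : 0 < s) : 0 < newS n x y s := by
  unfold newS; positivity

lemma newS_dom {d n : ℕ} (p : ℝ × (Euc d × Euc d)) (hp : 0 < p.1) :
    1 + |Real.log (newS n p.2.1 p.2.2 p.1)| + newS n p.2.1 p.2.2 p.1 +
      ‖newMean n p.2.1 p.2.2‖ ^ 2 ≤ 6 * dom p := by
  obtain ⟨s, x, y⟩ := p
  simp only [dom] at hp ⊢
  have hn1 : (0 : ℝ) < (n : ℝ) + 1 := by positivity
  have hs' := newS_pos (n := n) x y hp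
  have a1 : newS n x y s ≤ s + 2 * ‖x‖ ^ 2 + 2 * ‖y‖ ^ 2 := by
    have h1 : ‖y - x‖ ≤ ‖y‖ + ‖x‖ := norm_sub_le _ _
    have h2 : (n : ℝ) * ‖y - x‖ ^ 2 / ((n : ℝ) + 1) ≤ ‖y - x‖ ^ 2 := by
      rw [div_le_iff₀ hn1]; nlinarith [sq_nonneg ‖y - x‖]
    unfold newS
    nlinarith [norm_nonneg x, norm_nonneg y, norm_nonneg (y - x), sq_nonneg (‖x‖ - ‖y‖)]
  have a2 : s ≤ newS n x y s := by
    unfold newS; have : 0 ≤ (n : ℝ) * ‖y - x‖ ^ 2 / ((n : ℝ) + 1) := by positivity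
    linarith
  have a3 : ‖newMean n x y‖ ≤ ‖x‖ + ‖y‖ := by
    unfold newMean
    rw [norm_smul, Real.norm_of_nonneg (by positivity), inv_mul_le_iff₀ hn1]
    refine (norm_add_le _ _).trans ?_
    rw [norm_smul, Real.norm_of_nonneg (by positivity)]
    have : (0 : ℝ) ≤ n := by positivity
    nlinarith [norm_nonneg x, norm_nonneg y, mul_nonneg this (norm_nonneg y)]
  have a4 : |Real.log (newS n x y s)| ≤ |Real.log s| + newS n x y s := by
    have h1 := Real.log_le_sub_one_of_pos hs'
    have h2 := Real.log_le_log hp a2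
    have h3 := neg_abs_le (Real.log s)
    have h4 := abs_nonneg (Real.log s)
    rw [abs_le]; constructor <;> linarith
  have a5 : ‖newMean n x y‖ ^ 2 ≤ 2 * ‖x‖ ^ 2 + 2 * ‖y‖ ^ 2 := by
    nlinarith [norm_nonneg (newMean n x y), norm_nonneg x, norm_nonneg y, sq_nonneg (‖x‖ - ‖y‖)]
  have h4 := abs_nonneg (Real.log s)
  nlinarith

lemma measurable_betaInc (ν p : ℝ) : Measurable (betaInc ν p) := by
  unfold betaInc
  have : StronglyMeasurable
      (fun q : ℝ × ℝ => q.2 ^ (ν - 1) * (1 + q.1 * q.2) ^ (-p)) :=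
    Measurable.stronglyMeasurable (by fun_prop)
  exact (this.integral_prod_right' (ν := volume.restrict (Ioo 0 1))).measurable

lemma measurable_rhoRef (ν l k : ℝ) {α : Type*} [MeasurableSpace α] {f g : α → ℝ}
    (hf : Measurable f) (hg : Measurable g) : Measurable fun a => rhoRef ν l k (f a) (g a) := by
  unfold rhoRef
  have := (measurable_betaInc ν (k + ν)).comp ((hf.const_mul l).div hg)
  exact (by fun_prop : Measurable fun a =>
    l ^ ν * (Real.Gamma (k + ν) / Real.Gamma k) * g a ^ (-ν)).mul this

lemma measurable_newMean {d n : ℕ} :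
    Measurable fun p : ℝ × (Euc d × Euc d) => newMean n p.2.1 p.2.2 := by
  unfold newMean; fun_prop

lemma measurable_newS {d n : ℕ} :
    Measurable fun p : ℝ × (Euc d × Euc d) => newS n p.2.1 p.2.2 p.1 := by
  unfold newS; fun_prop

/-! ### The comparison of expected logarithms -/

lemma integral_comp_measurePreserving {α β : Type*} [MeasurableSpace α] [MeasurableSpace β]
    {μ : Measure α} {ν : Measure β} {f : α → β} (hf : MeasurePreserving f μ ν) {g : β → ℝ}
    (hg : AEStronglyMeasurable g ν) : ∫ a, g (f a) ∂μ = ∫ b, g b ∂ν := by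
  have := integral_map hf.measurable.aemeasurable (hf.map_eq ▸ hg)
  rw [← this, hf.map_eq]

lemma integral_prod_mono {α β : Type*} [MeasurableSpace α] [MeasurableSpace β]
    {μ : Measure α} {ν : Measure β} [SFinite μ] [SFinite ν] {f g : α × β → ℝ}
    (hf : Integrable f (μ.prod ν)) (hg : Integrable g (μ.prod ν))
    (h : ∀ᵐ a ∂μ, Integrable (fun b => f (a, b)) ν → Integrable (fun b => g (a, b)) ν →
      ∫ b, f (a, b) ∂ν ≤ ∫ b, g (a, b) ∂ν) :
    ∫ p, f p ∂μ.prod ν ≤ ∫ p, g p ∂μ.prod ν := by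
  rw [integral_prod _ hf, integral_prod _ hg]
  refine integral_mono_ae hf.integral_prod_left hg.integral_prod_left ?_
  filter_upwards [h, hf.prod_right_ae, hg.prod_right_ae] with a h1 h2 h3 using h1 h2 h3

lemma lintegral_gm_affine {d : ℕ} (z : Euc d) {a τ : ℝ} (ha : 0 < a) (hτ : 0 < τ)
    {f : Euc d → ENNReal} (hf : Measurable f) :
    ∫⁻ ε, f (z - a • ε) ∂gm 0 τ = ∫⁻ u, ENNReal.ofReal (gaussPdf d u z (a ^ 2 * τ)) * f u := by
  have hm : Measurable fun ε : Euc d => ENNReal.ofReal (gaussPdf d ε 0 τ) * f (z - a • ε) :=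
    (measurable_gauss_ofReal 0 τ).mul (hf.comp (by fun_prop))
  have hm' : Measurable fun ε : Euc d => f (z - a • ε) := hf.comp (by fun_prop)
  rw [lintegral_gm _ _ hm', lintegral_comp_smul_euc (inv_pos.2 ha) hm,
    ← lintegral_const_mul' _ _ ENNReal.ofReal_ne_top,
    ← lintegral_sub_left_eq_self _ z]
  refine lintegral_congr fun u => ?_
  rw [← mul_assoc, ← ENNReal.ofReal_mul (by positivity), smul_smul, mul_inv_cancel₀ ha.ne',
    one_smul, sub_sub_cancel]
  congr 2
  unfold gaussPdf
  have h1 : (2 * Real.pi * (a ^ 2 * τ)) ^ (-(d : ℝ) / 2) =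
      a⁻¹ ^ d * (2 * Real.pi * τ) ^ (-(d : ℝ) / 2) := by
    rw [show 2 * Real.pi * (a ^ 2 * τ) = a ^ 2 * (2 * Real.pi * τ) by ring,
      Real.mul_rpow (by positivity) (by positivity)]
    congr 1
    rw [← Real.rpow_natCast a 2, ← Real.rpow_mul ha.le, inv_pow, ← Real.rpow_natCast,
      ← Real.rpow_neg ha.le]
    congr 1; push_cast; ring
  rw [h1, mul_assoc (a⁻¹ ^ d)]
  congr 3
  rw [sub_zero, norm_smul, norm_inv, Real.norm_of_nonneg ha.le, mul_pow, norm_sub_rev]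
  field_simp

/-- Replacing `x̄ₙ` by its conditional mean `x̄ₙ₊₁` given `(x̄ₙ₊₁, sₙ)` increases the expected
logarithm: Jensen's inequality combined with superharmonicity. -/
lemma integral_log_rhoRef_gauss {d : ℕ} {ν l k : ℝ} (hν : 0 < ν) (hνd : ν + 1 ≤ (d : ℝ) / 2)
    (hl : 0 < l) (hk : 0 < k) (z : Euc d) {a τ s : ℝ} (ha : 0 < a) (hτ : 0 < τ) (hs : 0 < s)
    (hi : Integrable (fun ε => Real.log (rhoRef ν l k (‖z - a • ε‖ ^ 2) s)) (gm (0 : Euc d) τ)) :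
    ∫ ε, Real.log (rhoRef ν l k (‖z - a • ε‖ ^ 2) s) ∂gm (0 : Euc d) τ ≤
      Real.log (rhoRef ν l k (‖z‖ ^ 2) s) := by
  have := isProb_gm (d := d) 0 hτ
  set B : Euc d → ℝ := fun u => betaInc ν (k + ν) (l / s * ‖u‖ ^ 2) with hB
  have hBpos : ∀ u, 0 < B u := fun u => betaInc_pos hν (by positivity)
  have hBm : Measurable B := (measurable_betaInc ν (k + ν)).comp (by fun_prop)
  have hiB : Integrable (fun ε => B (z - a • ε)) (gm (0 : Euc d) τ) := by
    refine Integrable.of_bound (hBm.comp (by fun_prop)).aestronglyMeasurable ν⁻¹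
      (ae_of_all _ fun ε => ?_)
    rw [Real.norm_of_nonneg (hBpos _).le]
    exact (betaInc_bounds hν (by linarith) (by positivity)).2
  have hmean : ∫ ε, B (z - a • ε) ∂gm (0 : Euc d) τ ≤ B z := by
    rw [integral_eq_lintegral_of_nonneg_ae (ae_of_all _ fun ε => (hBpos _).le)
      hiB.aestronglyMeasurable,
      lintegral_gm_affine z ha hτ (f := fun u => ENNReal.ofReal (B u)) hBm.ennreal_ofReal]
    refine ENNReal.toReal_le_of_le_ofReal (hBpos _).le ?_
    exact lintegral_gauss_betaInc_le hν hνd (by linarith) (by positivity) (by positivity) z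
  have hpt : ∀ ε : Euc d, Real.log (rhoRef ν l k (‖z - a • ε‖ ^ 2) s) ≤
      Real.log (rhoRef ν l k (‖z‖ ^ 2) s) + (B (z - a • ε) / B z - 1) := by
    intro ε
    have r1 := rhoRef_pos hν hl hk (sq_nonneg ‖z - a • ε‖) hs
    have r2 := rhoRef_pos hν hl hk (sq_nonneg ‖z‖) hs
    have h1 := Real.log_le_sub_one_of_pos (div_pos r1 r2)
    have h2 : rhoRef ν l k (‖z - a • ε‖ ^ 2) s / rhoRef ν l k (‖z‖ ^ 2) s =
        B (z - a • ε) / B z := by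
      have hG1 := Real.Gamma_pos_of_pos hk
      have hG2 := Real.Gamma_pos_of_pos (add_pos hk hν)
      simp only [rhoRef, hB, mul_div_right_comm l]
      exact mul_div_mul_left _ _ (by positivity)
    rw [Real.log_div r1.ne' r2.ne', h2] at h1
    linarith
  have hi3 : Integrable (fun ε => B (z - a • ε) / B z - 1) (gm (0 : Euc d) τ) :=
    (hiB.div_const _).sub (integrable_const _)
  have hi2 : Integrable (fun ε => Real.log (rhoRef ν l k (‖z‖ ^ 2) s) +
      (B (z - a • ε) / B z - 1)) (gm (0 : Euc d) τ) :=
    (integrable_const _).add hi3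
  refine (integral_mono hi hi2 hpt).trans ?_
  rw [integral_add (integrable_const _) hi3,
    integral_sub (hiB.div_const _) (integrable_const _), integral_div]
  simp only [integral_const, probReal_univ, smul_eq_mul, one_mul]
  have : (∫ ε, B (z - a • ε) ∂gm (0 : Euc d) τ) / B z ≤ 1 := (div_le_one (hBpos z)).2 hmean
  linarith

/-- For a fixed location, comparison of the scale statistics `sₙ` and `sₙ₊₁`. -/
lemma integral_log_rhoRef_scale {d n : ℕ} (hd : 0 < d) (hn : 2 ≤ n) {ν : ℝ} (hν : 0 < ν)
    (hνd : ν ≤ (d : ℝ) / 2 - 1) {σ2 R : ℝ} (hσ : 0 < σ2) (hR : 0 < R)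
    (h1 : Integrable (fun p : ℝ × Euc d => Real.log (rhoRef ν n ((n - 1) * (d / 2)) R p.1))
      ((gs (((n : ℝ) - 1) * (d / 2)) (2 * σ2)⁻¹).prod (gm 0 (σ2 * ((n : ℝ) + 1) / n))))
    (h2 : Integrable (fun p : ℝ × Euc d => Real.log (rhoRef ν (n + 1) (n * (d / 2)) R
        (p.1 + n / ((n : ℝ) + 1) * ‖p.2‖ ^ 2)))
      ((gs (((n : ℝ) - 1) * (d / 2)) (2 * σ2)⁻¹).prod (gm 0 (σ2 * ((n : ℝ) + 1) / n)))) :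
    ∫ p : ℝ × Euc d, Real.log (rhoRef ν n ((n - 1) * (d / 2)) R p.1)
      ∂((gs (((n : ℝ) - 1) * (d / 2)) (2 * σ2)⁻¹).prod (gm 0 (σ2 * ((n : ℝ) + 1) / n))) ≤
    ∫ p : ℝ × Euc d, Real.log (rhoRef ν (n + 1) (n * (d / 2)) R
        (p.1 + n / ((n : ℝ) + 1) * ‖p.2‖ ^ 2))
      ∂((gs (((n : ℝ) - 1) * (d / 2)) (2 * σ2)⁻¹).prod (gm 0 (σ2 * ((n : ℝ) + 1) / n))) := by
  have hd' : (0 : ℝ) < d := by exact_mod_cast hd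
  have hn' : (0 : ℝ) < n := by exact_mod_cast (by omega : 0 < n)
  have hmp := measurePreserving_toResidual (d := d) hd hn hσ
  have i4 := isProb_studentM (d := d) hd hn
  have i1 := isProb_gs (show 0 < (n : ℝ) * (d / 2) by positivity)
    (show 0 < (2 * σ2)⁻¹ by positivity)
  obtain ⟨hbi, hbe⟩ := integrable_log_bFac (d := d) hd hn
  rw [← integral_comp_measurePreserving hmp h1.aestronglyMeasurable,
    ← integral_comp_measurePreserving hmp h2.aestronglyMeasurable]
  refine integral_prod_mono (hmp.integrable_comp_of_integrable h1)
    (hmp.integrable_comp_of_integrable h2) ?_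
  filter_upwards [ae_gs_pos _ _] with s hs j1 j2
  have e2 : ∀ e : Euc d, (toResidual n (s, e)).1 +
      n / ((n : ℝ) + 1) * ‖(toResidual n (s, e)).2‖ ^ 2 = s := fun e => toResidual_snd (s, e) hs
  simp only [e2, integral_const, probReal_univ, one_smul]
  obtain ⟨E, hE⟩ := log_rhoRef_le hn hν hνd hR hs
  have hi4 : Integrable (fun e : Euc d =>
      E * (Real.log (bFac n e) - (digamma (n * (d / 2)) - digamma ((n - 1) * (d / 2)))))
      (studentM d n) := (hbi.sub (integrable_const _)).const_mul _
  have hi3 : Integrable (fun e : Euc d => Real.log (rhoRef ν (n + 1) (n * (d / 2)) R s) +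
      E * (Real.log (bFac n e) - (digamma (n * (d / 2)) - digamma ((n - 1) * (d / 2)))))
      (studentM d n) :=
    (integrable_const _).add hi4
  refine (integral_mono j1 hi3 fun e => hE _ (bFac_pos e)).trans (le_of_eq ?_)
  rw [integral_add (integrable_const _) hi4,
    integral_const_mul, integral_sub hbi (integrable_const _), hbe]
  simp

/-- The expectation of `log ρ(x̄ₙ, sₙ; n)` is at most that of `log ρ(x̄ₙ₊₁, sₙ₊₁; n + 1)` for the
reference function `rhoRef`. -/
theorem integral_log_rhoRef_le {d n : ℕ} (hd : 0 < d) (hn : 2 ≤ n) {ν : ℝ} (hν : 0 < ν)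
    (hνd : ν ≤ (d : ℝ) / 2 - 1) (μ0 : Euc d) {σ2 : ℝ} (hσ : 0 < σ2) :
    Integrable (fun p : ℝ × (Euc d × Euc d) =>
        Real.log (rhoRef ν n ((n - 1) * (d / 2)) (‖p.2.1‖ ^ 2) p.1)) (sampleM d n μ0 σ2) ∧
    Integrable (fun p : ℝ × (Euc d × Euc d) => Real.log (rhoRef ν (n + 1) (n * (d / 2))
        (‖newMean n p.2.1 p.2.2‖ ^ 2) (newS n p.2.1 p.2.2 p.1))) (sampleM d n μ0 σ2) ∧
    ∫ p : ℝ × (Euc d × Euc d),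
        Real.log (rhoRef ν n ((n - 1) * (d / 2)) (‖p.2.1‖ ^ 2) p.1) ∂sampleM d n μ0 σ2 ≤
      ∫ p : ℝ × (Euc d × Euc d), Real.log (rhoRef ν (n + 1) (n * (d / 2))
        (‖newMean n p.2.1 p.2.2‖ ^ 2) (newS n p.2.1 p.2.2 p.1)) ∂sampleM d n μ0 σ2 := by
  have hd' : (0 : ℝ) < d := by exact_mod_cast hd
  have hn' : (0 : ℝ) < n := by exact_mod_cast (by omega : 0 < n)
  have hk := shape_pos hd hn
  have hk' : 0 < (n : ℝ) * ((d : ℝ) / 2) := by positivity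
  have hr : 0 < (2 * σ2)⁻¹ := by positivity
  obtain ⟨C, hC0, hC⟩ := abs_log_rhoRef_le hν hn' hk
  obtain ⟨C', hC0', hC'⟩ := abs_log_rhoRef_le hν (show 0 < (n : ℝ) + 1 by positivity) hk'
  have mN := measurable_newMean (d := d) (n := n)
  have mS := measurable_newS (d := d) (n := n)
  have g1 : Integrable (fun p : ℝ × (Euc d × Euc d) =>
      Real.log (rhoRef ν n ((n - 1) * (d / 2)) (‖p.2.1‖ ^ 2) p.1)) (sampleM d n μ0 σ2) := by
    refine integrable_of_dom hd hn hσ (Measurable.log (measurable_rhoRef _ _ _ (by fun_prop)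
      (by fun_prop))).aestronglyMeasurable (C := C) fun p hp => ?_
    refine (hC _ _ (by positivity) hp).trans ?_
    refine mul_le_mul_of_nonneg_left ?_ hC0
    unfold dom
    have : 0 ≤ ‖p.2.2‖ ^ 2 := by positivity
    linarith
  have g2 : Integrable (fun p : ℝ × (Euc d × Euc d) =>
      Real.log (rhoRef ν n ((n - 1) * (d / 2)) (‖newMean n p.2.1 p.2.2‖ ^ 2) p.1))
      (sampleM d n μ0 σ2) := by
    refine integrable_of_dom hd hn hσ (Measurable.log (measurable_rhoRef _ _ _ (by fun_prop)
      (by fun_prop))).aestronglyMeasurable (C := C * 7) fun p hp => ?_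
    refine (hC _ _ (by positivity) hp).trans ?_
    have h1 := newS_dom (n := n) p hp
    have h2 := newS_pos (n := n) p.2.1 p.2.2 hp
    have h3 := abs_nonneg (Real.log (newS n p.2.1 p.2.2 p.1))
    have h4 : 1 + |Real.log p.1| + p.1 ≤ dom p := by
      unfold dom
      have : 0 ≤ ‖p.2.2‖ ^ 2 := by positivity
      have : 0 ≤ ‖p.2.1‖ ^ 2 := by positivity
      linarith
    rw [mul_assoc]
    gcongr
    linarith
  have g3 : Integrable (fun p : ℝ × (Euc d × Euc d) => Real.log (rhoRef ν (n + 1) (n * (d / 2))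
        (‖newMean n p.2.1 p.2.2‖ ^ 2) (newS n p.2.1 p.2.2 p.1))) (sampleM d n μ0 σ2) := by
    refine integrable_of_dom hd hn hσ (Measurable.log (measurable_rhoRef _ _ _ (by fun_prop)
      (by fun_prop))).aestronglyMeasurable (C := C' * 6) fun p hp => ?_
    refine (hC' _ _ (by positivity) (newS_pos _ _ hp)).trans ?_
    rw [mul_assoc]
    exact mul_le_mul_of_nonneg_left (newS_dom p hp) hC0'
  refine ⟨g1, g3, ?_⟩
  have i1 := isProb_gs hk hr
  have i2 := isProb_gm (d := d) 0 (show 0 < σ2 * ((n : ℝ) + 1) / n by positivity)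
  have i3 := isProb_gm μ0 (show 0 < σ2 / ((n : ℝ) + 1) by positivity)
  have hmp := measurePreserving_toSample (n := n) (by omega) μ0 hσ hk hr
  change MeasurePreserving _ _ (sampleM d n μ0 σ2) at hmp
  have j1 := hmp.integrable_comp_of_integrable g1
  have j2 := hmp.integrable_comp_of_integrable g2
  have j3 := hmp.integrable_comp_of_integrable g3
  rw [← integral_comp_measurePreserving hmp g1.aestronglyMeasurable,
    ← integral_comp_measurePreserving hmp g3.aestronglyMeasurable]
  simp only [Function.comp_def, newMean_toSample, newS_toSample] at j2 j3 ⊢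
  -- average over `y - x̄ₙ` with `(x̄ₙ₊₁, sₙ)` fixed
  refine (integral_prod_mono (g := fun p : Euc d × (ℝ × Euc d) =>
    Real.log (rhoRef ν n ((n - 1) * (d / 2)) (‖p.1‖ ^ 2) p.2.1)) j1 j2 ?_).trans ?_
  · refine ae_of_all _ fun z k1 k2 => ?_
    refine integral_prod_mono k1 k2 ?_
    filter_upwards [ae_gs_pos _ _] with s hs l1 _
    simp only [integral_const, probReal_univ, one_smul]
    exact integral_log_rhoRef_gauss hν (by linarith) hn' hk z (by positivity) (by positivity) hs l1
  -- then compare `sₙ` with `sₙ₊₁` for fixed `x̄ₙ₊₁ ≠ 0`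
  · refine integral_prod_mono j2 j3 ?_
    have hz : ∀ᵐ z ∂gm μ0 (σ2 / ((n : ℝ) + 1)), z ≠ 0 := by
      refine (withDensity_absolutelyContinuous _ _).ae_le ?_
      have : Nontrivial (Euc d) := by
        have : Nonempty (Fin d) := ⟨⟨0, hd⟩⟩
        infer_instance
      exact compl_mem_ae_iff.2 (measure_singleton 0)
    filter_upwards [hz] with z hz k2 k3
    exact integral_log_rhoRef_scale hd hn hν hνd hσ (by positivity) k2 k3

/-! ### Integrability of the logarithmic densities -/

lemma one_le_dom {d : ℕ} (p : ℝ × (Euc d × Euc d)) (hp : 0 < p.1) : 1 ≤ dom p := by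
  have h1 := abs_nonneg (Real.log p.1)
  have h2 := sq_nonneg ‖p.2.1‖
  have h3 := sq_nonneg ‖p.2.2‖
  unfold dom
  linarith

lemma integrable_log_gaussPdf {d n : ℕ} (hd : 0 < d) (hn : 2 ≤ n) (μ0 : Euc d) {σ2 : ℝ}
    (hσ : 0 < σ2) : Integrable (fun p : ℝ × (Euc d × Euc d) =>
      Real.log (gaussPdf d p.2.2 μ0 σ2)) (sampleM d n μ0 σ2) := by
  have hm : Measurable fun p : ℝ × (Euc d × Euc d) => gaussPdf d p.2.2 μ0 σ2 :=
    measurable_gaussPdf (by fun_prop) (by fun_prop) (by fun_prop)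
  refine integrable_of_dom hd hn hσ hm.log.aestronglyMeasurable
    (C := |Real.log ((2 * Real.pi * σ2) ^ (-(d : ℝ) / 2))| + (1 + ‖μ0‖ ^ 2) / σ2) fun p hp => ?_
  have h1 := one_le_dom p hp
  rw [gaussPdf, Real.log_mul (by positivity) (Real.exp_pos _).ne', Real.log_exp, add_mul]
  refine (abs_add_le _ _).trans (add_le_add (le_mul_of_one_le_right (abs_nonneg _) h1) ?_)
  rw [neg_div, abs_neg, abs_of_nonneg (by positivity), div_mul_eq_mul_div,
    div_le_div_iff₀ (by positivity) hσ]
  have h2 : ‖p.2.2 - μ0‖ ^ 2 ≤ 2 * ‖p.2.2‖ ^ 2 + 2 * ‖μ0‖ ^ 2 := by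
    have := norm_sub_le p.2.2 μ0
    nlinarith [norm_nonneg (p.2.2 - μ0), sq_nonneg (‖p.2.2‖ - ‖μ0‖)]
  have h3 : ‖p.2.2‖ ^ 2 ≤ dom p := by
    have h1 := abs_nonneg (Real.log p.1)
    have h2 := sq_nonneg ‖p.2.1‖
    unfold dom
    linarith
  have h4 : ‖μ0‖ ^ 2 ≤ ‖μ0‖ ^ 2 * dom p := le_mul_of_one_le_right (by positivity) h1
  nlinarith

lemma integrable_log_bestEquiv {d n : ℕ} (hd : 0 < d) (hn : 2 ≤ n) (μ0 : Euc d) {σ2 : ℝ}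
    (hσ : 0 < σ2) : Integrable (fun p : ℝ × (Euc d × Euc d) =>
      Real.log (bestEquiv d n p.2.2 p.2.1 p.1)) (sampleM d n μ0 σ2) := by
  have hm : Measurable fun p : ℝ × (Euc d × Euc d) => bestEquiv d n p.2.2 p.2.1 p.1 :=
    measurable_bestEquiv d n (by fun_prop) (by fun_prop) (by fun_prop)
  have hn' : (2 : ℝ) ≤ n := by exact_mod_cast hn
  have hd' : (0 : ℝ) < d := by exact_mod_cast hd
  have G1 := Real.Gamma_pos_of_pos (show 0 < (n : ℝ) * d / 2 by positivity)
  have G2 := Real.Gamma_pos_of_pos (show 0 < ((n : ℝ) - 1) * d / 2 by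
    have : 0 < (n : ℝ) - 1 := by linarith
    positivity)
  set K := Real.Gamma ((n : ℝ) * d / 2) / Real.Gamma (((n : ℝ) - 1) * d / 2) with hK
  have hK0 : 0 < K := div_pos G1 G2
  set c := Real.log ((n : ℝ) / (((n : ℝ) + 1) * Real.pi)) with hc
  refine integrable_of_dom hd hn hσ hm.log.aestronglyMeasurable
    (C := |Real.log K| + (d / 2) * (|c| + 1) + (n * d / 2) * 7) fun p hp => ?_
  have h1 := one_le_dom p hp
  have h2 := newS_dom (n := n) p hp
  have hs' := newS_pos (n := n) p.2.1 p.2.2 hp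
  have h3 : |Real.log p.1| ≤ dom p := by
    have h2 := sq_nonneg ‖p.2.1‖
    have h3 := sq_nonneg ‖p.2.2‖
    unfold dom
    linarith
  have h4 : |Real.log (newS n p.2.1 p.2.2 p.1)| ≤ 6 * dom p := by
    have := sq_nonneg ‖newMean n p.2.1 p.2.2‖
    linarith
  have e1 : (n : ℝ) / (((n : ℝ) + 1) * Real.pi * p.1) = n / (((n : ℝ) + 1) * Real.pi) / p.1 := by
    field_simp
  have e2 : 1 + ((n : ℝ) / (((n : ℝ) + 1) * p.1)) * ‖p.2.2 - p.2.1‖ ^ 2 =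
      newS n p.2.1 p.2.2 p.1 / p.1 := by
    unfold newS; field_simp
  have e3 : Real.log (bestEquiv d n p.2.2 p.2.1 p.1) = Real.log K + (d / 2) * (c - Real.log p.1) +
      (-(n * d) / 2) * (Real.log (newS n p.2.1 p.2.2 p.1) - Real.log p.1) := by
    have q1 : 0 < (n : ℝ) / (((n : ℝ) + 1) * Real.pi) := by positivity
    rw [bestEquiv, e1, e2, Real.log_mul (by positivity) (by positivity),
      Real.log_mul (by positivity) (by positivity), Real.log_rpow (by positivity),
      Real.log_rpow (by positivity), Real.log_div q1.ne' hp.ne', Real.log_div hs'.ne' hp.ne']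
  rw [e3, add_mul, add_mul]
  refine (abs_add_le _ _).trans (add_le_add ((abs_add_le _ _).trans (add_le_add
    (le_mul_of_one_le_right (abs_nonneg _) h1) ?_)) ?_)
  · rw [abs_mul, abs_of_pos (by positivity : (0 : ℝ) < d / 2), mul_assoc]
    refine mul_le_mul_of_nonneg_left ?_ (by positivity)
    have := abs_sub c (Real.log p.1)
    have h5 : |c| ≤ |c| * dom p := le_mul_of_one_le_right (abs_nonneg _) h1
    linarith
  · rw [abs_mul, neg_div, abs_neg, abs_of_pos (by positivity : (0 : ℝ) < n * d / 2), mul_assoc]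
    refine mul_le_mul_of_nonneg_left ?_ (by positivity)
    have := abs_sub (Real.log (newS n p.2.1 p.2.2 p.1)) (Real.log p.1)
    linarith

lemma aestronglyMeasurable_rhoDens {d : ℕ} (hd : 0 < d) {ν : ℝ} (hν : 0 < ν) {q : ℝ → ℝ}
    (hq : Measurable q) {l : ℕ} (hl : 2 ≤ l) {C : ℝ}
    (h0 : ∀ t ∈ Ioo (0 : ℝ) 1, 0 ≤ mixWeight d ν q l t)
    (hC : ∀ t ∈ Ioo (0 : ℝ) 1, mixWeight d ν q l t ≤ C) {α : Type*} [MeasurableSpace α]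
    {m : Measure α} {f : α → Euc d} {g : α → ℝ} (hf : Measurable f) (hg : Measurable g)
    (hpos : ∀ᵐ a ∂m, 0 < g a) :
    AEStronglyMeasurable (fun a => rhoDens d (gmPrior d ν q) l (f a) (g a)) m := by
  have hQ := measurable_mixWeight (d := d) (ν := ν) hq l
  have hI : Measurable fun a => ∫ t in Ioo (0 : ℝ) 1, t ^ (ν - 1) *
      (1 + l * ‖f a‖ ^ 2 / g a * t) ^ (-(((l : ℝ) - 1) * ((d : ℝ) / 2) + ν)) *
        mixWeight d ν q l t := by
    have h1 : Measurable fun p : α × ℝ => p.2 ^ (ν - 1) *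
      (1 + l * ‖f p.1‖ ^ 2 / g p.1 * p.2) ^ (-(((l : ℝ) - 1) * ((d : ℝ) / 2) + ν)) *
        mixWeight d ν q l p.2 := by fun_prop
    exact (h1.stronglyMeasurable.integral_prod_right'
      (ν := volume.restrict (Ioo (0 : ℝ) 1))).measurable
  have hM : Measurable fun a => (2 * Real.pi) ^ (-(d : ℝ) / 2) * 2 ^ ν *
      ((l : ℝ) ^ ν * (Real.Gamma (((l : ℝ) - 1) * ((d : ℝ) / 2) + ν) /
        Real.Gamma (((l : ℝ) - 1) * ((d : ℝ) / 2))) * g a ^ (-ν) *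
      ∫ t in Ioo (0 : ℝ) 1, t ^ (ν - 1) * (1 + l * ‖f a‖ ^ 2 / g a * t) ^
        (-(((l : ℝ) - 1) * ((d : ℝ) / 2) + ν)) * mixWeight d ν q l t) := by fun_prop
  refine hM.aestronglyMeasurable.congr ?_
  filter_upwards [hpos] with a ha
  exact (rhoDens_eq hd hν hq hl h0 hC (f a) ha).symm

/-- Two-sided comparison of `log ρ` with its reference version. -/
lemma log_rhoDens_bounds {d : ℕ} (hd : 0 < d) {ν : ℝ} (hν : 0 < ν) {q : ℝ → ℝ} (hq : Measurable q)
    {l : ℕ} (hl : 2 ≤ l) {c C : ℝ} (hc : 0 < c) (hcC : 0 < C)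
    (h0 : ∀ t ∈ Ioo (0 : ℝ) 1, c ≤ mixWeight d ν q l t)
    (hC : ∀ t ∈ Ioo (0 : ℝ) 1, mixWeight d ν q l t ≤ C) (z : Euc d) {v : ℝ} (hv : 0 < v) :
    0 < rhoDens d (gmPrior d ν q) l z v ∧
    Real.log ((2 * Real.pi) ^ (-(d : ℝ) / 2) * 2 ^ ν) + Real.log c +
        Real.log (rhoRef ν l (((l : ℝ) - 1) * ((d : ℝ) / 2)) (‖z‖ ^ 2) v) ≤
      Real.log (rhoDens d (gmPrior d ν q) l z v) ∧
    Real.log (rhoDens d (gmPrior d ν q) l z v) ≤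
      Real.log ((2 * Real.pi) ^ (-(d : ℝ) / 2) * 2 ^ ν) + Real.log C +
        Real.log (rhoRef ν l (((l : ℝ) - 1) * ((d : ℝ) / 2)) (‖z‖ ^ 2) v) := by
  obtain ⟨b1, b2⟩ := rhoDens_bounds hd hν hq hl hc.le h0 hC z hv
  have hl0 : (0 : ℝ) < l := by exact_mod_cast (by omega : 0 < l)
  have hR := rhoRef_pos hν hl0 (shape_pos hd hl) (sq_nonneg ‖z‖) hv
  have hK : 0 < (2 * Real.pi) ^ (-(d : ℝ) / 2) * (2 : ℝ) ^ ν := by positivity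
  have hpos : 0 < rhoDens d (gmPrior d ν q) l z v := lt_of_lt_of_le (by positivity) b1
  refine ⟨hpos, ?_, ?_⟩
  · rw [← Real.log_mul hK.ne' hc.ne', ← Real.log_mul (by positivity) hR.ne']
    exact Real.log_le_log (by positivity) b1
  · rw [← Real.log_mul hK.ne' hcC.ne', ← Real.log_mul (by positivity) hR.ne']
    exact Real.log_le_log hpos b2

lemma integrable_log_rhoDens {d : ℕ} (hd : 0 < d) {ν : ℝ} (hν : 0 < ν) {q : ℝ → ℝ}
    (hq : Measurable q) {l : ℕ} (hl : 2 ≤ l) {c C : ℝ} (hc : 0 < c) (hcC : 0 < C)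
    (h0 : ∀ t ∈ Ioo (0 : ℝ) 1, c ≤ mixWeight d ν q l t)
    (hC : ∀ t ∈ Ioo (0 : ℝ) 1, mixWeight d ν q l t ≤ C) {α : Type*} [MeasurableSpace α]
    {m : Measure α} [IsFiniteMeasure m] {f : α → Euc d} {g : α → ℝ} (hf : Measurable f)
    (hg : Measurable g) (hpos : ∀ᵐ a ∂m, 0 < g a)
    (hi : Integrable (fun a => Real.log (rhoRef ν l (((l : ℝ) - 1) * ((d : ℝ) / 2))
      (‖f a‖ ^ 2) (g a))) m) :
    Integrable (fun a => Real.log (rhoDens d (gmPrior d ν q) l (f a) (g a))) m := by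
  have hm := aestronglyMeasurable_rhoDens hd hν hq hl (fun t ht => hc.le.trans (h0 t ht)) hC
    hf hg hpos
  have hi' : Integrable (fun a => |Real.log ((2 * Real.pi) ^ (-(d : ℝ) / 2) * 2 ^ ν)| +
      |Real.log c| + |Real.log C| + |Real.log (rhoRef ν l (((l : ℝ) - 1) * ((d : ℝ) / 2))
      (‖f a‖ ^ 2) (g a))|) m := (integrable_const _).add hi.abs
  refine hi'.mono' (Real.measurable_log.comp_aemeasurable hm.aemeasurable).aestronglyMeasurable ?_
  filter_upwards [hpos] with a ha
  obtain ⟨-, b1, b2⟩ := log_rhoDens_bounds hd hν hq hl hc hcC h0 hC (f a) ha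
  rw [Real.norm_eq_abs, abs_le]
  constructor
  · linarith [neg_abs_le (Real.log ((2 * Real.pi) ^ (-(d : ℝ) / 2) * 2 ^ ν)),
      neg_abs_le (Real.log c), abs_nonneg (Real.log C), neg_abs_le (Real.log (rhoRef ν l
        (((l : ℝ) - 1) * ((d : ℝ) / 2)) (‖f a‖ ^ 2) (g a)))]
  · linarith [le_abs_self (Real.log ((2 * Real.pi) ^ (-(d : ℝ) / 2) * 2 ^ ν)),
      le_abs_self (Real.log C), abs_nonneg (Real.log c), le_abs_self (Real.log (rhoRef ν l
        (((l : ℝ) - 1) * ((d : ℝ) / 2)) (‖f a‖ ^ 2) (g a)))]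

/-! ### Bounds on the mixing weight -/

/-- The point `λ = l t / (1 + (l - 1) t)` satisfies `1 - (l - 1) λ / l = 1 / (1 + (l - 1) t)`. -/
lemma mix_point {l t : ℝ} (hl : 1 ≤ l) (ht : t ∈ Ioo (0 : ℝ) 1) :
    0 < 1 + (l - 1) * t ∧ l * t / (1 + (l - 1) * t) ∈ Ioo (0 : ℝ) 1 ∧
      1 - (l - 1) * (l * t / (1 + (l - 1) * t)) / l = (1 + (l - 1) * t)⁻¹ := by
  obtain ⟨h0, h1⟩ := ht
  have hA : 0 < 1 + (l - 1) * t := by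
    have := mul_nonneg (sub_nonneg.2 hl) h0.le
    linarith
  have hl0 : 0 < l := by linarith
  refine ⟨hA, ⟨by positivity, ?_⟩, ?_⟩
  · rw [div_lt_one hA]; nlinarith
  · field_simp; ring

lemma mixWeight_bounds {d n : ℕ} (hn : 2 ≤ n) {ν : ℝ} (hν : ν ≤ (d : ℝ) / 2 - 1) {q : ℝ → ℝ}
    (hq_lb : ∀ x ∈ Ioo (0 : ℝ) 1,
      (1 - (n : ℝ) * x / ((n : ℝ) + 1)) ^ ((d : ℝ) / 2 - ν - 1) ≤ q x)
    (hq_ub : ∀ x ∈ Ioo (0 : ℝ) 1,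
      q x ≤ (1 - ((n : ℝ) - 1) * x / n) ^ ((d : ℝ) / 2 - ν - 1)) :
    (∀ t ∈ Ioo (0 : ℝ) 1, ((n : ℝ) / (n + 1)) ^ ((d : ℝ) / 2 - ν - 1) ≤ mixWeight d ν q n t) ∧
    (∀ t ∈ Ioo (0 : ℝ) 1, mixWeight d ν q n t ≤ 1) ∧
    (∀ t ∈ Ioo (0 : ℝ) 1, 1 ≤ mixWeight d ν q (n + 1) t) ∧
    (∀ t ∈ Ioo (0 : ℝ) 1,
      mixWeight d ν q (n + 1) t ≤ (((n : ℝ) + 1) / n) ^ ((d : ℝ) / 2 - ν - 1)) := by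
  have hn' : (2 : ℝ) ≤ n := by exact_mod_cast hn
  have hn0 : (0 : ℝ) < n := by linarith
  set e := (d : ℝ) / 2 - ν - 1 with he
  have he0 : 0 ≤ e := by rw [he]; linarith
  -- the two bases of the sandwich differ by a factor of at most `(n + 1) / n`
  have cmp : ∀ x ∈ Ioo (0 : ℝ) 1, 1 - ((n : ℝ) - 1) * x / n ≤
      ((n : ℝ) + 1) / n * (1 - n * x / (n + 1)) := by
    intro x hx
    have e1 : ((n : ℝ) + 1) / n * (1 - n * x / (n + 1)) = 1 - ((n : ℝ) - 1) * x / n +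
        (1 - x) / n := by
      field_simp; ring
    rw [e1]
    have : 0 ≤ (1 - x) / (n : ℝ) := div_nonneg (by linarith [hx.2]) hn0.le
    linarith
  refine ⟨fun t ht => ?_, fun t ht => ?_, fun t ht => ?_, fun t ht => ?_⟩
  · obtain ⟨hA, hm, hv⟩ := mix_point (l := n) (by linarith) ht
    have h1 := hq_lb _ hm
    have h2 := cmp _ hm
    rw [hv] at h2
    set A := 1 + ((n : ℝ) - 1) * t
    unfold mixWeight
    refine le_trans ?_ (mul_le_mul_of_nonneg_left h1 (by positivity))
    have h3 : (n : ℝ) / (n + 1) * A⁻¹ ≤ 1 - n * (n * t / A) / (n + 1) := by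
      rw [div_mul_eq_mul_div, div_le_iff₀ (by positivity)]
      rw [div_mul_eq_mul_div, le_div_iff₀ hn0] at h2
      linarith
    rw [← Real.mul_rpow hA.le (le_trans (by positivity) h3)]
    refine Real.rpow_le_rpow (by positivity) ?_ he0
    calc (n : ℝ) / (n + 1) = A * ((n : ℝ) / (n + 1) * A⁻¹) := by field_simp
      _ ≤ _ := mul_le_mul_of_nonneg_left h3 hA.le
  · obtain ⟨hA, hm, hv⟩ := mix_point (l := n) (by linarith) ht
    have h1 := hq_ub _ hm
    rw [hv] at h1
    unfold mixWeight
    refine (mul_le_mul_of_nonneg_left h1 (by positivity)).trans (le_of_eq ?_)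
    rw [← Real.mul_rpow hA.le (by positivity), mul_inv_cancel₀ hA.ne', Real.one_rpow]
  · obtain ⟨hA, hm, hv⟩ := mix_point (l := n + 1) (by linarith) ht
    have h1 := hq_lb _ hm
    rw [show ∀ x : ℝ, (n : ℝ) * x = ((n : ℝ) + 1 - 1) * x from fun x => by ring, hv] at h1
    unfold mixWeight
    refine le_trans (le_of_eq ?_) (mul_le_mul_of_nonneg_left h1 (by positivity))
    rw [← Real.mul_rpow hA.le (by positivity), mul_inv_cancel₀ hA.ne', Real.one_rpow]
  · obtain ⟨hA, hm, hv⟩ := mix_point (l := n + 1) (by linarith) ht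
    have h1 := hq_ub _ hm
    have h2 := cmp _ hm
    have e1 : ∀ x : ℝ, (n : ℝ) * x = ((n : ℝ) + 1 - 1) * x := fun x => by ring
    rw [e1, hv] at h2
    have h0 : 0 ≤ 1 - ((n : ℝ) - 1) * (((n : ℝ) + 1) * t / (1 + ((n : ℝ) + 1 - 1) * t)) / n := by
      rw [sub_nonneg, div_le_one hn0]
      nlinarith [hm.1, hm.2]
    unfold mixWeight
    refine (mul_le_mul_of_nonneg_left h1 (by positivity)).trans ?_
    rw [← Real.mul_rpow hA.le h0]
    refine Real.rpow_le_rpow (mul_nonneg hA.le h0) ?_ he0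
    refine (mul_le_mul_of_nonneg_left h2 hA.le).trans (le_of_eq ?_)
    field_simp

/-! ### Domination for a measurable mixing function -/

lemma klRisk_le_of_measurable {d n : ℕ} (hd : 0 < d) (hn : 2 ≤ n) {ν : ℝ} (hν0 : 0 < ν)
    (hν : ν ≤ (d : ℝ) / 2 - 1) {q : ℝ → ℝ} (hq : Measurable q)
    (hq_lb : ∀ x ∈ Ioo (0 : ℝ) 1,
      (1 - (n : ℝ) * x / ((n : ℝ) + 1)) ^ ((d : ℝ) / 2 - ν - 1) ≤ q x)
    (hq_ub : ∀ x ∈ Ioo (0 : ℝ) 1,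
      q x ≤ (1 - ((n : ℝ) - 1) * x / n) ^ ((d : ℝ) / 2 - ν - 1))
    (μ0 : Euc d) {σ2 : ℝ} (hσ : 0 < σ2) :
    klRisk d n μ0 σ2 (bayesPred d n (gmPrior d ν q)) ≤ klRisk d n μ0 σ2 (bestEquiv d n) := by
  have hn0 : (0 : ℝ) < n := by exact_mod_cast (by omega : 0 < n)
  obtain ⟨w1, w2, w3, w4⟩ := mixWeight_bounds hn hν hq_lb hq_ub
  have ip := isProb_sampleM hd hn μ0 hσ
  have hpos := ae_sampleM_pos (n := n) μ0 σ2
  have hpos' : ∀ᵐ p ∂sampleM d n μ0 σ2, 0 < newS n p.2.1 p.2.2 p.1 :=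
    hpos.mono fun p hp => newS_pos _ _ hp
  obtain ⟨r1, r2, hle⟩ := integral_log_rhoRef_le hd hn hν0 hν μ0 hσ
  set c : ℝ := ((n : ℝ) / (n + 1)) ^ ((d : ℝ) / 2 - ν - 1) with hc
  set C : ℝ := (((n : ℝ) + 1) / n) ^ ((d : ℝ) / 2 - ν - 1) with hC
  have hc0 : 0 < c := by positivity
  have hC0 : 0 < C := by positivity
  have w3' : ∀ t ∈ Ioo (0 : ℝ) 1, 1 ≤ mixWeight d ν q ((n + 1 : ℕ) : ℝ) t := by
    push_cast; exact w3
  have w4' : ∀ t ∈ Ioo (0 : ℝ) 1, mixWeight d ν q ((n + 1 : ℕ) : ℝ) t ≤ C := by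
    push_cast; exact w4
  have ecast : (((n + 1 : ℕ) : ℝ) - 1) * ((d : ℝ) / 2) = n * (d / 2) := by push_cast; ring
  have ecast' : ((n + 1 : ℕ) : ℝ) = n + 1 := by push_cast; ring
  have iG := integrable_log_gaussPdf hd hn μ0 hσ
  have iB := integrable_log_bestEquiv hd hn μ0 hσ
  have i1 := integrable_log_rhoDens hd hν0 hq hn hc0 one_pos w1 w2
    (f := fun p : ℝ × (Euc d × Euc d) => p.2.1) (by fun_prop) measurable_fst hpos r1
  have i2 := integrable_log_rhoDens hd hν0 hq (show 2 ≤ n + 1 by omega) one_pos hC0 w3' w4'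
    measurable_newMean measurable_newS hpos' (by rw [ecast, ecast']; exact r2)
  have e1 : ∀ᵐ p ∂sampleM d n μ0 σ2, Real.log (gaussPdf d p.2.2 μ0 σ2) -
      Real.log (bestEquiv d n p.2.2 p.2.1 p.1) =
      Real.log (gaussPdf d p.2.2 μ0 σ2 / bestEquiv d n p.2.2 p.2.1 p.1) := by
    filter_upwards [hpos] with p hp
    rw [Real.log_div (gaussPdf_pos _ _ hσ).ne' (bestEquiv_pos hd hn _ _ hp).ne']
  have e2 : ∀ᵐ p ∂sampleM d n μ0 σ2, (Real.log (gaussPdf d p.2.2 μ0 σ2) -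
      Real.log (bestEquiv d n p.2.2 p.2.1 p.1)) +
      (Real.log (rhoDens d (gmPrior d ν q) n p.2.1 p.1) -
      Real.log (rhoDens d (gmPrior d ν q) (n + 1) (newMean n p.2.1 p.2.2)
        (newS n p.2.1 p.2.2 p.1))) =
      Real.log (gaussPdf d p.2.2 μ0 σ2 / bayesPred d n (gmPrior d ν q) p.2.2 p.2.1 p.1) := by
    filter_upwards [hpos] with p hp
    obtain ⟨p1, -, -⟩ := log_rhoDens_bounds hd hν0 hq hn hc0 one_pos w1 w2 p.2.1 hp
    obtain ⟨p2, -, -⟩ := log_rhoDens_bounds hd hν0 hq (show 2 ≤ n + 1 by omega) one_pos hC0 w3' w4'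
      (newMean n p.2.1 p.2.2) (newS_pos (n := n) p.2.1 p.2.2 hp)
    have p3 := bestEquiv_pos hd hn p.2.2 p.2.1 hp
    rw [bayesPred_eq hd hn _ _ _ hp, Real.log_div (gaussPdf_pos _ _ hσ).ne' (by positivity),
      Real.log_mul p3.ne' (by positivity), Real.log_div p2.ne' p1.ne']
    ring
  have e3 : ∀ᵐ p ∂sampleM d n μ0 σ2, Real.log (rhoDens d (gmPrior d ν q) n p.2.1 p.1) -
      Real.log (rhoDens d (gmPrior d ν q) (n + 1) (newMean n p.2.1 p.2.2)
        (newS n p.2.1 p.2.2 p.1)) ≤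
      Real.log (rhoRef ν n ((n - 1) * (d / 2)) (‖p.2.1‖ ^ 2) p.1) -
      Real.log (rhoRef ν (n + 1) (n * (d / 2))
        (‖newMean n p.2.1 p.2.2‖ ^ 2) (newS n p.2.1 p.2.2 p.1)) := by
    filter_upwards [hpos] with p hp
    obtain ⟨-, -, p1⟩ := log_rhoDens_bounds hd hν0 hq hn hc0 one_pos w1 w2 p.2.1 hp
    obtain ⟨-, p2, -⟩ := log_rhoDens_bounds hd hν0 hq (show 2 ≤ n + 1 by omega) one_pos hC0 w3' w4'
      (newMean n p.2.1 p.2.2) (newS_pos (n := n) p.2.1 p.2.2 hp)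
    rw [ecast, ecast'] at p2
    rw [Real.log_one] at p1 p2
    linarith
  have iGB := iG.sub iB
  have i12 := i1.sub i2
  rw [klRisk_eq hd hn μ0 hσ _ ((iGB.add i12).congr e2), klRisk_eq hd hn μ0 hσ _ (iGB.congr e1),
    ← integral_congr_ae e2, ← integral_congr_ae e1]
  have hI := (integral_mono_ae i12 (r1.sub r2) e3).trans
    ((integral_sub r1 r2).le.trans (sub_nonpos.2 hle))
  have hA := integral_add iGB i12
  simp only [Pi.sub_apply] at hA hI
  rw [hA]
  linarith

/-! ### Nonnegativity of the risk of the best equivariant density -/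

lemma lintegral_bestEquiv {d n : ℕ} (hd : 0 < d) (hn : 2 ≤ n) (x : Euc d) {s : ℝ} (hs : 0 < s) :
    ∫⁻ y, ENNReal.ofReal (bestEquiv d n y x s) = 1 := by
  have hp := (isProb_studentM (d := d) hd hn).measure_univ
  rw [studentM, withDensity_apply _ MeasurableSet.univ, Measure.restrict_univ] at hp
  have hm : Measurable fun y : Euc d => ENNReal.ofReal (bestEquiv d n y 0 s) :=
    (measurable_bestEquiv d n measurable_id measurable_const measurable_const).ennreal_ofReal
  have h1 : ∀ y : Euc d, bestEquiv d n y x s = bestEquiv d n (y - x) 0 s := fun y => by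
    simp [bestEquiv]
  simp_rw [h1]
  rw [lintegral_sub_right_eq_self (fun y => ENNReal.ofReal (bestEquiv d n y 0 s)) x,
    lintegral_comp_smul_euc (Real.sqrt_pos.2 hs) hm,
    ← lintegral_const_mul' _ _ ENNReal.ofReal_ne_top, ← hp]
  refine lintegral_congr fun e => ?_
  rw [← ENNReal.ofReal_mul (by positivity)]
  congr 1
  have h2 : ‖Real.sqrt s • e‖ ^ 2 = s * ‖e‖ ^ 2 := by
    rw [norm_smul, mul_pow, Real.norm_of_nonneg (Real.sqrt_nonneg s), Real.sq_sqrt hs.le]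
  have h3 : Real.sqrt s ^ d * ((n : ℝ) / (((n : ℝ) + 1) * Real.pi * s)) ^ ((d : ℝ) / 2) =
      ((n : ℝ) / (((n : ℝ) + 1) * Real.pi * 1)) ^ ((d : ℝ) / 2) := by
    have h4 : Real.sqrt s ^ d = s ^ ((d : ℝ) / 2) := by
      rw [Real.sqrt_eq_rpow, ← Real.rpow_natCast, ← Real.rpow_mul hs.le]
      congr 1; ring
    rw [h4, ← Real.mul_rpow hs.le (by positivity)]
    congr 1; field_simp
  have h5 : (n : ℝ) / (((n : ℝ) + 1) * s) * (s * ‖e‖ ^ 2) = n / (((n : ℝ) + 1) * 1) * ‖e‖ ^ 2 := by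
    field_simp
  simp only [bestEquiv, sub_zero]
  rw [h2, h5, ← h3]
  ring

/-- Gibbs' inequality. -/
lemma klRisk_bestEquiv_nonneg {d n : ℕ} (hd : 0 < d) (hn : 2 ≤ n) (μ0 : Euc d) {σ2 : ℝ}
    (hσ : 0 < σ2) : 0 ≤ klRisk d n μ0 σ2 (bestEquiv d n) := by
  rw [klRisk_iter hd hn μ0 hσ]
  have ip := isProb_gm μ0 hσ
  refine integral_nonneg_of_ae ?_
  filter_upwards [ae_gs_pos _ _] with s hs
  refine integral_nonneg fun x => ?_
  simp only [Pi.zero_apply]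
  by_cases hi : Integrable (fun y => Real.log (gaussPdf d y μ0 σ2 / bestEquiv d n y x s))
      (gm μ0 σ2)
  swap
  · rw [integral_undef hi]
  have hm : Measurable fun y : Euc d => bestEquiv d n y x s :=
    measurable_bestEquiv d n measurable_id measurable_const measurable_const
  have hl := lintegral_bestEquiv hd hn x hs
  have hb0 : ∀ y : Euc d, 0 ≤ bestEquiv d n y x s := fun y => (bestEquiv_pos hd hn y x hs).le
  have hbi : Integrable fun y : Euc d => bestEquiv d n y x s :=
    (lintegral_ofReal_ne_top_iff_integrable hm.aestronglyMeasurable (ae_of_all _ hb0)).1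
      (by rw [hl]; exact ENNReal.one_ne_top)
  have hb1 : ∫ y : Euc d, bestEquiv d n y x s = 1 := by
    rw [integral_eq_lintegral_of_nonneg_ae (ae_of_all _ hb0) hm.aestronglyMeasurable, hl]
    rfl
  have hc : ∀ y : Euc d, gaussPdf d y μ0 σ2 * (bestEquiv d n y x s / gaussPdf d y μ0 σ2) =
      bestEquiv d n y x s := fun y => mul_div_cancel₀ _ (gaussPdf_pos _ _ hσ).ne'
  have hri : Integrable (fun y => bestEquiv d n y x s / gaussPdf d y μ0 σ2) (gm μ0 σ2) := by
    rw [integrable_gm_iff μ0 hσ]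
    simpa only [hc] using hbi
  have hr1 : ∫ y, bestEquiv d n y x s / gaussPdf d y μ0 σ2 ∂gm μ0 σ2 = 1 := by
    rw [integral_gm μ0 hσ]
    simpa only [hc] using hb1
  have hmono := integral_mono ((integrable_const (1 : ℝ)).sub hri) hi fun y => by
    have p1 := gaussPdf_pos y μ0 hσ
    have p2 := bestEquiv_pos hd hn y x hs
    have := Real.one_sub_inv_le_log_of_pos (div_pos p1 p2)
    rwa [inv_div] at this
  have hz := integral_sub (integrable_const (1 : ℝ)) hri
  simp only [Pi.sub_apply] at hmono
  rw [hz, hr1] at hmono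
  simpa using hmono

/-! ### Mixing functions that are not measurable -/

lemma gmPrior_congr {d : ℕ} {ν : ℝ} {q q' : ℝ → ℝ}
    (h : q =ᵐ[volume.restrict (Ioo (0 : ℝ) 1)] q') : gmPrior d ν q = gmPrior d ν q' := by
  funext μ η
  refine integral_congr_ae ?_
  filter_upwards [h] with l hl
  rw [hl]

/-- If `q` is not almost everywhere measurable, then the integral defining the prior takes the
default value `0`. -/
lemma gmPrior_eq_zero {d : ℕ} {ν : ℝ} {q : ℝ → ℝ}
    (h : ¬ AEStronglyMeasurable q (volume.restrict (Ioo (0 : ℝ) 1))) (μ : Euc d) {η : ℝ}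
    (hη : 0 < η) : gmPrior d ν q μ η = 0 := by
  refine integral_undef fun hi => h ?_
  set g : ℝ → ℝ := fun l => gaussPdf d μ 0 (η⁻¹ * l⁻¹ * (1 - l)) *
    η ^ (ν - (d : ℝ) / 2 - 1) * l ^ (ν - (d : ℝ) / 2 - 1) with hg
  have hgm : Measurable g := by
    have : Measurable fun l : ℝ => gaussPdf d μ 0 (η⁻¹ * l⁻¹ * (1 - l)) :=
      measurable_gaussPdf (by fun_prop) (by fun_prop) (by fun_prop)
    fun_prop
  refine (hgm.inv.aestronglyMeasurable.mul hi.aestronglyMeasurable).congr ?_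
  filter_upwards [ae_restrict_mem measurableSet_Ioo] with l hl
  have h1 : 0 < 1 - l := by linarith [hl.2]
  have h2 := hl.1
  have hp : 0 < g l := by
    have := gaussPdf_pos μ 0 (show 0 < η⁻¹ * l⁻¹ * (1 - l) by positivity)
    simp only [hg]
    positivity
  change (g l)⁻¹ * (g l * q l) = q l
  field_simp

/-- For a non-measurable `q` the integral defining the prior takes the default value `0`; then the
predictive density is `0` by division by zero, and the logarithmic loss is `0` everywhere because
`log 0 = 0`. -/
lemma klRisk_eq_zero {d n : ℕ} (hd : 0 < d) (hn : 2 ≤ n) {ν : ℝ} {q : ℝ → ℝ}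
    (h : ¬ AEStronglyMeasurable q (volume.restrict (Ioo (0 : ℝ) 1))) (μ0 : Euc d) {σ2 : ℝ}
    (hσ : 0 < σ2) : klRisk d n μ0 σ2 (bayesPred d n (gmPrior d ν q)) = 0 := by
  have hb : ∀ y x s, bayesPred d n (gmPrior d ν q) y x s = 0 := by
    intro y x s
    have : bayesPredDen d n (gmPrior d ν q) x s = 0 := by
      rw [bayesPredDen, setIntegral_congr_fun (g := fun _ => (0 : ℝ)) measurableSet_Ioi
        fun η hη => ?_, integral_zero]
      simp only [gmPrior_eq_zero h _ (mem_Ioi.1 hη), mul_zero, integral_zero]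
    rw [bayesPred, this, div_zero]
  rw [klRisk_iter hd hn μ0 hσ]
  simp [hb]

/-- for `d ≥ 3`, `n ≥ 2` and `0 < ν ≤ d/2 - 1`, if `q` satisfies the sandwich
condition (7), then the Bayesian predictive density with respect to the Gaussian-mixture
prior built from `q` dominates the best equivariant predictive density under the
Kullback–Leibler risk. -/
theorem stmt_3 (d n : ℕ) (hd : 3 ≤ d) (hn : 2 ≤ n)
    (ν : ℝ) (hν0 : 0 < ν) (hν : ν ≤ (d : ℝ) / 2 - 1)
    (q : ℝ → ℝ) (hq_pos : ∀ x ∈ Ioo (0 : ℝ) 1, 0 < q x)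
    (hq_lb : ∀ x ∈ Ioo (0 : ℝ) 1,
      (1 - (n : ℝ) * x / ((n : ℝ) + 1)) ^ ((d : ℝ) / 2 - ν - 1) ≤ q x)
    (hq_ub : ∀ x ∈ Ioo (0 : ℝ) 1,
      q x ≤ (1 - ((n : ℝ) - 1) * x / n) ^ ((d : ℝ) / 2 - ν - 1))
    (μ0 : Euc d) (σ2 : ℝ) (hσ : 0 < σ2) :
    klRisk d n μ0 σ2 (bayesPred d n (gmPrior d ν q)) ≤
      klRisk d n μ0 σ2 (bestEquiv d n) := by
  have hd0 : 0 < d := by omega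
  by_cases hq : AEStronglyMeasurable q (volume.restrict (Ioo (0 : ℝ) 1))
  swap
  · rw [klRisk_eq_zero hd0 hn hq μ0 hσ]
    exact klRisk_bestEquiv_nonneg hd0 hn μ0 hσ
  -- a measurable version of `q`, truncated so that the sandwich condition holds everywhere
  set L : ℝ → ℝ := fun x => (1 - (n : ℝ) * x / ((n : ℝ) + 1)) ^ ((d : ℝ) / 2 - ν - 1) with hL
  set U : ℝ → ℝ := fun x => (1 - ((n : ℝ) - 1) * x / n) ^ ((d : ℝ) / 2 - ν - 1) with hU
  have hLm : Measurable L := by fun_prop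
  have hUm : Measurable U := by fun_prop
  set q' : ℝ → ℝ := fun x => max (L x) (min (U x) (hq.mk q x)) with hq'
  have hqm : Measurable q' := hLm.max (hUm.min hq.stronglyMeasurable_mk.measurable)
  have hqq : q =ᵐ[volume.restrict (Ioo (0 : ℝ) 1)] q' := by
    filter_upwards [hq.ae_eq_mk, ae_restrict_mem measurableSet_Ioo] with x hx hmem
    simp only [hq', ← hx]
    rw [min_eq_right (hq_ub x hmem), max_eq_right (hq_lb x hmem)]
  rw [gmPrior_congr hqq]
  exact klRisk_le_of_measurable hd0 hn hν0 hν hqm (fun x _ => le_max_left _ _)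
    (fun x hx => max_le ((hq_lb x hx).trans (hq_ub x hx)) (min_le_left _ _)) μ0 hσ

end
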